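/- arXiv:2212.05455 — 3 statements merged into one kernel-verified Lean document; each statement's English description precedes it below -/
import Mathlib

section
/- Let k ≥ 2 be an integer and let G be a connected graph of order n with n ≥ max{6k+5, k² + (3/2)k + 2}. If the spectral radius satisfies ρ(G) ≥ ρ(K₁ ∨ (K_{n−k−1} + kK₁)), then G has a spanning k-ended-tree, unless G is isomorphic to K₁ ∨ (K_{n−k−1} + kK₁). -/
open Finset
open scoped Classical

/-- The adjacency matrix of a simple graph over ℝ. -/
noncomputable def adjMat {V : Type*} [Fintype V] (G : SimpleGraph V) :
    Matrix V V ℝ := fun i j => if G.Adj i j then 1 else 0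

/-- The spectral radius of a graph: the largest (real) eigenvalue of its
adjacency matrix. -/
noncomputable def specRad {V : Type*} [Fintype V] (G : SimpleGraph V) : ℝ :=
  sSup {μ : ℝ | Module.End.HasEigenvalue (Matrix.mulVecLin (adjMat G)) μ}

/-- The signless Laplacian matrix `Q = D + A` of a simple graph. -/
noncomputable def qMat {V : Type*} [Fintype V] (G : SimpleGraph V) :
    Matrix V V ℝ := fun i j =>
  (if i = j then ((univ.filter fun u => G.Adj i u).card : ℝ) else 0) +
    (if G.Adj i j then 1 else 0)

/-- The signless Laplacian spectral radius of a graph: the largest (real)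
eigenvalue of `Q = D + A`. -/
noncomputable def qRad {V : Type*} [Fintype V] (G : SimpleGraph V) : ℝ :=
  sSup {μ : ℝ | Module.End.HasEigenvalue (Matrix.mulVecLin (qMat G)) μ}

/-- `G` has a spanning `k`-ended-tree: a spanning tree with at most `k`
leaves (vertices of degree 1 in the tree). -/
noncomputable def HasSpanningKEndedTree {V : Type*} [Fintype V]
    (G : SimpleGraph V) (k : ℕ) : Prop :=
  ∃ T : SimpleGraph V, T ≤ G ∧ T.IsTree ∧
    (univ.filter fun v => T.degree v = 1).card ≤ k

/-- `G` has a spanning tree with leaf degree at most `k`: every vertex of the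
tree is adjacent (in the tree) to at most `k` leaves of the tree. -/
noncomputable def HasSpanningTreeLeafDegLE {V : Type*} [Fintype V]
    (G : SimpleGraph V) (k : ℕ) : Prop :=
  ∃ T : SimpleGraph V, T ≤ G ∧ T.IsTree ∧
    ∀ v, (univ.filter fun u => T.Adj v u ∧ T.degree u = 1).card ≤ k

/-- The graph `K₁ ∨ (K_{n-k-1} + kK₁)` on `n` vertices: vertex `0` is joined to
everything, vertices `0, …, n-k-1` form a clique `K_{n-k}`, and the last `k`
vertices are only adjacent to vertex `0`. -/
def oneJoinCliquePlusIso (n k : ℕ) : SimpleGraph (Fin n) :=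
  SimpleGraph.fromRel fun i j => i.val = 0 ∨ (i.val < n - k ∧ j.val < n - k)

/-!
The vertex `K₁` and the clique `K_{n-k-1}` span a clique on `n - k` vertices in the extremal graph,
so `n - k - 1 ≤ ρ(G)`. By Hong's inequality `ρ² ≤ 2e(G) - n + 1`, the complement of `G` then has at
most about `kn` edges. Successively deleting `k` vertices of largest degree in the complement leaves
a set `D` on which the complement is so sparse that `G` is Hamilton-connected on `D`: otherwise the
Bondy–Chvátal closure of `G` on `D` is a proper subgraph of the complete graph in which
non-adjacent vertices have small degree sum, and such a graph misses too many edges.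

If two edges leaving `D` can be attached to the ends of a Hamiltonian path of `D`, or a path of two
vertices outside `D` to one of them, then `G` has a path missing only `k - 2` vertices, and any
spanning tree extending it has at most `k` leaves. Otherwise all vertices outside `D` hang from one
vertex of `D`, so that `G` is a spanning subgraph of the extremal graph. Since the spectral radius
is strictly monotone on connected graphs, the two are equal.
-/

namespace SpanningEndedTree

section HamiltonConnected

variable {V : Type*} {G : SimpleGraph V} {a b u v : V}

/-- `G` is Hamilton-connected: any two distinct vertices are the ends of a Hamiltonian path. -/
def IsHamiltonConnected (G : SimpleGraph V) : Prop :=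
  ∀ ⦃a b : V⦄, a ≠ b → ∃ p : G.Walk a b, p.IsHamiltonian

lemma exists_append_cons_of_mem_darts (p : G.Walk a b) {d : G.Dart} (hd : d ∈ p.darts) :
    ∃ (q : G.Walk a d.fst) (r : G.Walk d.snd b), p = q.append (.cons d.adj r) := by
  induction p with
  | nil => simp at hd
  | cons h p ih =>
    rcases List.mem_cons.mp hd with rfl | hd
    · exact ⟨.nil, p, rfl⟩
    · obtain ⟨q, r, rfl⟩ := ih hd
      exact ⟨.cons h q, r, rfl⟩

lemma support_append_cons {c d : V} (p : G.Walk a c) (h : G.Adj c d) (q : G.Walk d b) :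
    (p.append (.cons h q)).support = p.support ++ q.support := by
  simp [SimpleGraph.Walk.support_append]

lemma exists_isHamiltonian_of_adj_dart_left (p : G.Walk a u) (q : G.Walk v b)
    (hpq : ∀ x, (p.support ++ q.support).count x = 1) {d : G.Dart} (hd : d ∈ p.darts)
    (hu : G.Adj u d.fst) (hv : G.Adj v d.snd) : ∃ w : G.Walk a b, w.IsHamiltonian := by
  obtain ⟨r, s, rfl⟩ := exists_append_cons_of_mem_darts p hd
  refine ⟨r.append (.cons hu.symm (s.reverse.append (.cons hv.symm q))), fun x ↦ ?_⟩
  have := hpq x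
  simp only [support_append_cons, SimpleGraph.Walk.support_reverse, List.count_append,
    List.count_reverse] at this ⊢
  omega

/-- The rotation step of Ore's theorem: `p` and `q` are the two halves of a Hamiltonian path of
`G + uv`, and exchanging `uv` and the edge `d` for two edges of `G` gives one of `G`. -/
lemma exists_isHamiltonian_of_adj_dart (p : G.Walk a u) (q : G.Walk v b)
    (hpq : ∀ x, (p.support ++ q.support).count x = 1) {d : G.Dart} (hd : d ∈ p.darts ++ q.darts)
    (hu : G.Adj u d.fst) (hv : G.Adj v d.snd) : ∃ w : G.Walk a b, w.IsHamiltonian := by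
  rcases List.mem_append.mp hd with hd | hd
  · exact exists_isHamiltonian_of_adj_dart_left p q hpq hd hu hv
  · have hqp : ∀ x, (q.reverse.support ++ p.reverse.support).count x = 1 := fun x ↦ by
      simpa [add_comm] using hpq x
    obtain ⟨w, hw⟩ := exists_isHamiltonian_of_adj_dart_left q.reverse p.reverse hqp
      (d := d.symm) (by simpa using hd) hv hu
    exact ⟨w.reverse, fun x ↦ by simpa using hw x⟩

lemma mem_support_iff_eq_or_mem_map_fst_darts (p : G.Walk a b) {x : V} :
    x ∈ p.support ↔ x = b ∨ x ∈ p.darts.map (·.fst) := by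
  rw [← p.map_fst_darts_append]
  simp [or_comm]

lemma mem_support_iff_eq_or_mem_map_snd_darts (p : G.Walk a b) {x : V} :
    x ∈ p.support ↔ x = a ∨ x ∈ p.darts.map (·.snd) := by
  rw [← p.cons_map_snd_darts]
  simp

lemma length_eq_card_of_count_eq_one [Fintype V] {l : List V} (hl : ∀ x, l.count x = 1) :
    l.length = Fintype.card V := by
  have hnodup : l.Nodup := List.nodup_iff_count_le_one.mpr fun x ↦ (hl x).le
  rw [← List.toFinset_card_of_nodup hnodup, ← card_univ]
  congr
  ext x
  simp [← List.one_le_count_iff, hl]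

lemma exists_mem_of_length_lt_countP_add_countP {α : Type*} (P Q : α → Prop) (l : List α)
    (h : l.length < l.countP (P ·) + l.countP (Q ·)) : ∃ x ∈ l, P x ∧ Q x := by
  induction l with
  | nil => simp at h
  | cons x l ih =>
    by_cases hx : P x ∧ Q x
    · exact ⟨x, by simp, hx⟩
    · obtain ⟨y, hy, hPQ⟩ := ih (by simp only [List.countP_cons, List.length_cons] at h; grind)
      exact ⟨y, by simp [hy], hPQ⟩

lemma adj_of_adj_sup_edge {x y : V} (h : (G ⊔ .edge u v).Adj x y) (hxy : s(x, y) ≠ s(u, v)) :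
    G.Adj x y := by
  rcases h with h | h
  · exact h
  · exact absurd (Sym2.eq_iff.mpr ((SimpleGraph.edge_adj _ _ _ _).mp h).1) hxy

lemma mem_edgeSet_of_mem_edges_sup_edge (p : (G ⊔ .edge u v).Walk a b)
    (huv : u ∉ p.support ∨ v ∉ p.support) : ∀ e ∈ p.edges, e ∈ G.edgeSet := by
  intro e he
  induction e with | _ x y
  refine adj_of_adj_sup_edge (p.adj_of_mem_edges he) fun hxy ↦ ?_
  have hu : u ∈ p.support := p.fst_mem_support_of_mem_edges (hxy ▸ he)
  have hv : v ∈ p.support := p.snd_mem_support_of_mem_edges (hxy ▸ he)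
  tauto

lemma isHamiltonConnected_top [Finite V] : IsHamiltonConnected (⊤ : SimpleGraph V) := by
  have := Fintype.ofFinite V
  intro a b hab
  let l : List V := a :: ((univ.erase a).erase b).toList ++ [b]
  have hcount : ∀ x, l.count x = 1 := fun x ↦ by
    have hnodup := ((univ.erase a).erase b).nodup_toList
    simp only [l, List.cons_append, List.count_cons, List.count_append, List.count_nil]
    rw [hnodup.count]
    grind [mem_toList]
  have hnodup : l.Nodup := List.nodup_iff_count_le_one.mpr fun x ↦ (hcount x).le
  have hne : l ≠ [] := by simp [l]
  have hchain : l.IsChain (⊤ : SimpleGraph V).Adj := hnodup.isChain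
  have hhead : l.head hne = a := rfl
  have hlast : l.getLast hne = b := by simp [l]
  refine ⟨(SimpleGraph.Walk.ofSupport l hne hchain).copy hhead hlast, fun x ↦ ?_⟩
  rw [SimpleGraph.Walk.support_copy, SimpleGraph.Walk.support_ofSupport, hcount]

variable [Fintype V]

lemma degree_le_countP_adj_add_one {ι : Type*} (l : List ι) (f : ι → V) (c : V)
    (hl : ∀ x, G.Adj u x → x = c ∨ x ∈ l.map f) :
    G.degree u ≤ l.countP (fun i ↦ G.Adj u (f i)) + 1 := by
  have hsub : G.neighborFinset u ⊆
      insert c ((l.filter fun i ↦ G.Adj u (f i)).map f).toFinset := fun x hx ↦ by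
    have hadj := (G.mem_neighborFinset u x).mp hx
    have := hl x hadj
    simp only [mem_insert, List.mem_toFinset, List.mem_map, List.mem_filter,
      decide_eq_true_eq] at this ⊢
    grind
  calc G.degree u ≤ _ := card_le_card hsub
    _ ≤ _ := card_insert_le _ _
    _ ≤ _ := Nat.add_le_add_right (List.toFinset_card_le _) _
    _ = _ := by rw [List.length_map, List.countP_eq_length_filter]

lemma exists_dart_of_card_lt_degree_add_degree (p : G.Walk a u) (q : G.Walk v b)
    (hpq : ∀ x, (p.support ++ q.support).count x = 1)
    (huv : Fintype.card V < G.degree u + G.degree v) :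
    ∃ d ∈ p.darts ++ q.darts, G.Adj u d.fst ∧ G.Adj v d.snd := by
  have hlength := length_eq_card_of_count_eq_one hpq
  have hmem : ∀ x, x ∈ p.support ∨ x ∈ q.support := fun x ↦ by
    rw [← List.mem_append, ← List.one_le_count_iff, hpq]
  have hu := degree_le_countP_adj_add_one (G := G) (u := u) (p.darts ++ q.darts) (·.fst) b
    fun x hx ↦ by
      have := hmem x
      rw [mem_support_iff_eq_or_mem_map_fst_darts, mem_support_iff_eq_or_mem_map_fst_darts] at this
      rw [List.map_append, List.mem_append]
      have := hx.ne'
      tauto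
  have hv := degree_le_countP_adj_add_one (G := G) (u := v) (p.darts ++ q.darts) (·.snd) a
    fun x hx ↦ by
      have := hmem x
      rw [mem_support_iff_eq_or_mem_map_snd_darts, mem_support_iff_eq_or_mem_map_snd_darts] at this
      rw [List.map_append, List.mem_append]
      have := hx.ne'
      tauto
  apply exists_mem_of_length_lt_countP_add_countP
  simp only [List.length_append, SimpleGraph.Walk.length_support,
    SimpleGraph.Walk.length_darts] at hlength ⊢
  omega

lemma exists_isHamiltonian_of_sup_edge (huv : Fintype.card V < G.degree u + G.degree v)
    {p : (G ⊔ .edge u v).Walk a b} (hp : p.IsHamiltonian) :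
    ∃ q : G.Walk a b, q.IsHamiltonian := by
  by_cases hedge : s(u, v) ∈ p.edges
  · obtain ⟨d, hd, hduv⟩ := List.mem_map.mp hedge
    obtain ⟨q, r, rfl⟩ := exists_append_cons_of_mem_darts p hd
    have hqr : ∀ x, (q.support ++ r.support).count x = 1 := fun x ↦ by
      simpa only [SimpleGraph.Walk.IsHamiltonian, support_append_cons] using hp x
    have hdisj : ∀ x, x ∈ q.support → x ∉ r.support := fun x hxq hxr ↦ by
      have := hqr x
      rw [← List.one_le_count_iff] at hxq hxr
      rw [List.count_append] at this
      omega
    have hends : d.fst = u ∧ d.snd = v ∨ d.fst = v ∧ d.snd = u := Sym2.eq_iff.mp hduv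
    have hq := mem_edgeSet_of_mem_edges_sup_edge q (by
      have := mt (hdisj d.snd) (not_not.mpr r.start_mem_support); grind)
    have hr := mem_edgeSet_of_mem_edges_sup_edge r (by
      have := hdisj d.fst q.end_mem_support; grind)
    have hqr' : ∀ x, ((q.transfer G hq).support ++ (r.transfer G hr).support).count x = 1 := by
      simpa only [SimpleGraph.Walk.support_transfer] using hqr
    obtain ⟨d', hd', h₁, h₂⟩ := exists_dart_of_card_lt_degree_add_degree _ _ hqr' (by grind)
    exact exists_isHamiltonian_of_adj_dart _ _ hqr' hd' h₁ h₂
  · have hG : ∀ e ∈ p.edges, e ∈ G.edgeSet := by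
      rintro ⟨x, y⟩ he
      exact adj_of_adj_sup_edge (p.adj_of_mem_edges he) (ne_of_mem_of_not_mem he hedge)
    exact ⟨p.transfer G hG, fun x ↦ by simpa using hp x⟩

lemma IsHamiltonConnected.of_sup_edge (h : IsHamiltonConnected (G ⊔ .edge u v))
    (huv : Fintype.card V < G.degree u + G.degree v) : IsHamiltonConnected G :=
  fun _ _ hab ↦ let ⟨_, hp⟩ := h hab; exists_isHamiltonian_of_sup_edge huv hp

/-- Bondy–Chvátal closure: adding an edge between vertices whose degrees sum to more than
the order does not change Hamilton-connectedness, so a maximal counterexample has none. -/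
lemma exists_le_of_not_isHamiltonConnected (hG : ¬ IsHamiltonConnected G) :
    ∃ F ≥ G, F ≠ ⊤ ∧ ∀ u v, u ≠ v → ¬ F.Adj u v → F.degree u + F.degree v ≤ Fintype.card V := by
  obtain ⟨F, hGF, hF⟩ := Set.Finite.exists_le_maximal
    (Set.toFinite {F : SimpleGraph V | ¬ IsHamiltonConnected F}) hG
  refine ⟨F, hGF, fun h ↦ hF.prop (h ▸ isHamiltonConnected_top), fun u v huv hadj ↦ ?_⟩
  by_contra! hdeg
  have hlt : F < F ⊔ .edge u v := F.lt_sup_edge u v huv hadj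
  have : IsHamiltonConnected (F ⊔ .edge u v) := by
    by_contra h
    exact hlt.not_ge (hF.le_of_ge h hlt.le)
  exact hF.prop (this.of_sup_edge hdeg)

end HamiltonConnected

section DegreeCounting

variable {V : Type*} [Fintype V] {H : SimpleGraph V} [DecidableRel H.Adj]

lemma card_mul_add_card_sub_card_mul_le_sum {ι : Type*} [Fintype ι] {f : ι → ℤ} (hf : ∀ i, 0 ≤ f i)
    {s t : Finset ι} {α β : ℤ} (hβ : 0 ≤ β) (hs : ∀ i ∈ s, α ≤ f i) (ht : ∀ i ∈ t, β ≤ f i) :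
    #s * α + (#t - #s) * β ≤ ∑ i, f i := by
  calc (#s * α + (#t - #s) * β : ℤ)
      ≤ #s * α + #(t \ s) * β := by
        have : (#t - #s : ℤ) ≤ #(t \ s) := by have := le_card_sdiff s t; omega
        gcongr
    _ ≤ ∑ i ∈ s, f i + ∑ i ∈ t \ s, f i := by
        rw [← nsmul_eq_mul, ← nsmul_eq_mul]
        exact add_le_add (card_nsmul_le_sum _ _ _ hs)
          (card_nsmul_le_sum _ _ _ fun i hi ↦ ht i (mem_sdiff.mp hi).1)
    _ = ∑ i ∈ s ∪ t \ s, f i := (sum_union disjoint_sdiff).symm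
    _ ≤ ∑ i, f i := sum_le_univ_sum_of_nonneg hf

lemma exists_adj_minimal_degree_add_degree (hH : H ≠ ⊥) :
    ∃ u v, H.Adj u v ∧ H.degree v ≤ H.degree u ∧
      ∀ x y, H.Adj x y → H.degree u + H.degree v ≤ H.degree x + H.degree y := by
  obtain ⟨a, b, hab⟩ := SimpleGraph.ne_bot_iff_exists_adj.mp hH
  obtain ⟨⟨u, v⟩, huv, hmin⟩ := exists_min_image
    (univ.filter fun p : V × V ↦ H.Adj p.1 p.2) (fun p ↦ H.degree p.1 + H.degree p.2)
    ⟨(a, b), by simpa using hab⟩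
  simp only [mem_filter, mem_univ, true_and, Prod.forall] at huv hmin
  rcases le_total (H.degree v) (H.degree u) with h | h
  · exact ⟨u, v, huv, h, hmin⟩
  · exact ⟨v, u, huv.symm, h, fun x y hxy ↦ by grind⟩

/-- `h - 1` neighbours of `v` have degree at least that of `u`, and the `N - h` vertices of the
closed neighbourhood of `u` have degree at least `h - 1`. -/
lemma mul_le_two_mul_card_edgeFinset_of_minimal {u v : V} {h : ℕ} (huv : H.Adj u v)
    (hle : H.degree v ≤ H.degree u)
    (hmin : ∀ x y, H.Adj x y → H.degree u + H.degree v ≤ H.degree x + H.degree y)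
    (hu : H.degree u + h + 1 = Fintype.card V) (hv : h ≤ H.degree v + 1) (h1 : 1 ≤ h) :
    ((h : ℤ) - 1) * (2 * Fintype.card V - 3 * h) ≤ 2 * #H.edgeFinset := by
  obtain ⟨s, hs, hscard⟩ := exists_subset_card_eq
    (show h - 1 ≤ #(H.neighborFinset v) by rw [H.card_neighborFinset_eq_degree]; omega)
  have htcard : #(insert u (H.neighborFinset u)) = H.degree u + 1 := by
    rw [card_insert_of_notMem (by simp), H.card_neighborFinset_eq_degree]
  have hsum := card_mul_add_card_sub_card_mul_le_sum (f := fun x ↦ (H.degree x : ℤ))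
    (s := s) (t := insert u (H.neighborFinset u)) (α := H.degree u) (β := h - 1)
    (fun x ↦ by positivity) (by omega)
    (fun x hx ↦ by
      have := hmin v x ((H.mem_neighborFinset v x).mp (hs hx))
      omega)
    (fun x hx ↦ by
      rcases mem_insert.mp hx with rfl | hx
      · omega
      · have := hmin u x ((H.mem_neighborFinset u x).mp hx)
        omega)
  calc ((h : ℤ) - 1) * (2 * Fintype.card V - 3 * h)
      = #s * H.degree u + (#(insert u (H.neighborFinset u)) - #s) * (h - 1) := by
        rw [hscard, htcard, ← hu]; push_cast [h1]; ring
    _ ≤ ∑ x, (H.degree x : ℤ) := hsum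
    _ = 2 * #H.edgeFinset := by exact_mod_cast H.sum_degrees_eq_twice_card_edges

lemma exists_mul_le_two_mul_card_edgeFinset (hH : H ≠ ⊥) (hV : 4 ≤ Fintype.card V)
    (hdeg : ∀ u v, H.Adj u v → Fintype.card V ≤ H.degree u + H.degree v + 2) :
    ∃ h : ℕ, 2 ≤ h ∧ 2 * h ≤ Fintype.card V ∧ (∃ u, Fintype.card V ≤ H.degree u + h + 1) ∧
      ((h : ℤ) - 1) * (2 * Fintype.card V - 3 * h) ≤ 2 * #H.edgeFinset := by
  obtain ⟨u, v, huv, hle, hmin⟩ := exists_adj_minimal_degree_add_degree hH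
  have huv_deg := hdeg u v huv
  by_cases hu : Fintype.card V ≤ H.degree u + 2
  · have := H.degree_le_card_edgeFinset u
    exact ⟨2, le_rfl, by omega, ⟨u, by omega⟩, by push_cast; omega⟩
  · exact ⟨Fintype.card V - 1 - H.degree u, by omega, by omega, ⟨u, by omega⟩,
      mul_le_two_mul_card_edgeFinset_of_minimal huv hle hmin (by omega) (by omega) (by omega)⟩

lemma exists_mul_le_of_not_isHamiltonConnected {G : SimpleGraph V} (hG : ¬ IsHamiltonConnected G)
    (hGH : Gᶜ ≤ H) (hV : 4 ≤ Fintype.card V) :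
    ∃ h : ℕ, 2 ≤ h ∧ 2 * h ≤ Fintype.card V ∧ (∃ u, Fintype.card V ≤ H.degree u + h + 1) ∧
      ((h : ℤ) - 1) * (2 * Fintype.card V - 3 * h) ≤ 2 * #H.edgeFinset := by
  obtain ⟨F, hGF, hF, hdeg⟩ := exists_le_of_not_isHamiltonConnected hG
  have hle : Fᶜ ≤ H := (compl_le_compl hGF).trans hGH
  obtain ⟨h, h2, hcard, ⟨u, hu⟩, hsum⟩ := exists_mul_le_two_mul_card_edgeFinset (H := Fᶜ)
    (compl_eq_bot.not.mpr hF) hV fun u v huv ↦ by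
      have := hdeg u v huv.ne ((SimpleGraph.compl_adj _ _ _).mp huv).2
      rw [SimpleGraph.degree_compl, SimpleGraph.degree_compl]
      omega
  have hdegu : Fᶜ.degree u ≤ H.degree u := SimpleGraph.degree_le_of_le hle
  have hedges : #Fᶜ.edgeFinset ≤ #H.edgeFinset :=
    card_le_card (SimpleGraph.edgeFinset_mono hle)
  exact ⟨h, h2, hcard, ⟨u, by omega⟩, by omega⟩

end DegreeCounting

section Greedy

lemma exists_induce_induce_iso {V : Type*} (H : SimpleGraph V) (s : Set V) (D : Set s) :
    ∃ D' : Set V, Nonempty ((H.induce s).induce D ≃g H.induce D') :=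
  ⟨_, ⟨((SimpleGraph.Embedding.induce s).comp (.induce D)).isoInduceRange⟩⟩

lemma exists_induce_card_edgeFinset_add_mul_degree_le {V : Type*} [Fintype V]
    (H : SimpleGraph V) [DecidableRel H.Adj] {k : ℕ} (hk : k ≤ Fintype.card V) :
    ∃ D : Set V, Fintype.card D + k = Fintype.card V ∧
      ∀ u, #(H.induce D).edgeFinset + k * (H.induce D).degree u ≤ #H.edgeFinset := by
  induction k generalizing V with
  | zero =>
    obtain ⟨D, ⟨e⟩⟩ : ∃ D : Set V, Nonempty (H ≃g H.induce D) :=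
      ⟨_, ⟨H.induceUnivIso.symm⟩⟩
    exact ⟨D, (Fintype.card_congr e.toEquiv).symm, fun u ↦ by simp [e.card_edgeFinset_eq]⟩
  | succ k ih =>
    have : Nonempty V := Fintype.card_pos_iff.mp (by omega)
    obtain ⟨v, hv⟩ := H.exists_maximal_degree_vertex
    have hV : Fintype.card ({v}ᶜ : Set V) + 1 = Fintype.card V := by
      rw [Fintype.card_compl_set, Set.card_singleton]
      omega
    have hedges : #(H.induce {v}ᶜ).edgeFinset + H.degree v = #H.edgeFinset := by
      rw [H.card_edgeFinset_induce_compl_singleton, H.card_edgeFinset_deleteIncidenceSet]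
      exact Nat.sub_add_cancel (H.degree_le_card_edgeFinset v)
    obtain ⟨D, hD, hdeg⟩ := ih (H.induce {v}ᶜ) (by omega)
    obtain ⟨D', ⟨e⟩⟩ := exists_induce_induce_iso H _ D
    refine ⟨D', by rw [← Fintype.card_congr e.toEquiv]; omega, fun u ↦ ?_⟩
    obtain ⟨w, rfl⟩ := e.surjective u
    have hw : (H.induce D').degree (e w) ≤ H.degree v := by
      rw [← hv]
      exact ((SimpleGraph.Embedding.induce D').toCopy.degree_le _).trans (H.degree_le_maxDegree _)
    rw [← e.card_edgeFinset_eq]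
    have := hdeg w
    rw [e.degree_eq] at hw ⊢
    grind

/-- The right-hand side minus the left-hand side is concave in `h`, so it is bounded below by the
interpolation of its values at the ends of `[2, N / 2]`. -/
lemma two_mul_mul_add_sq_lt_sub_one_mul {N k h : ℤ} (hk : 2 ≤ k) (h2 : 2 ≤ h) (hN : 2 * h ≤ N)
    (hkN : 5 * k + 5 ≤ N) (hkN' : 2 * k ^ 2 + k + 4 ≤ 2 * N) :
    2 * k * h + k ^ 2 < (h - 1) * (2 * N - 3 * h) := by
  have hleft : 0 < 2 * N - 6 - 4 * k - k ^ 2 := by nlinarith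
  have hright : 0 < N * (N - 4 * k - 2) - 4 * k ^ 2 := by nlinarith
  have hinterp : 4 * (N - 4) * ((h - 1) * (2 * N - 3 * h) - (2 * k * h + k ^ 2)) =
      4 * ((N - 2 * h) * (2 * N - 6 - 4 * k - k ^ 2))
        + 2 * ((h - 2) * (N * (N - 4 * k - 2) - 4 * k ^ 2))
        + 6 * (N - 4) * ((h - 2) * (N - 2 * h)) := by ring
  have hpos : 0 < 4 * (N - 4) * ((h - 1) * (2 * N - 3 * h) - (2 * k * h + k ^ 2)) := by
    rw [hinterp]
    have hN4 : 0 ≤ N - 4 := by linarith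
    rcases h2.eq_or_lt with rfl | h2'
    · have := mul_pos (show 0 < N - 2 * 2 by linarith) hleft
      linarith
    · have h₁ := mul_nonneg (sub_nonneg.mpr hN) hleft.le
      have h₂ := mul_pos (sub_pos.mpr h2') hright
      have h₃ := mul_nonneg hN4 (mul_nonneg (sub_nonneg.mpr h2) (sub_nonneg.mpr hN))
      linarith
  exact sub_pos.mp (pos_of_mul_pos_right hpos (by linarith))

lemma exists_isHamiltonConnected_induce {V : Type*} [Fintype V] {G : SimpleGraph V} {k : ℕ}
    (hk : 2 ≤ k) (hn : 6 * k + 5 ≤ Fintype.card V)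
    (hn' : 2 * k ^ 2 + 3 * k + 4 ≤ 2 * Fintype.card V)
    (hedges : 2 * #Gᶜ.edgeFinset + k * (k + 2) ≤ 2 * k * Fintype.card V) :
    ∃ D : Set V, Fintype.card D + k = Fintype.card V ∧ IsHamiltonConnected (G.induce D) := by
  obtain ⟨D, hD, hdeg⟩ := exists_induce_card_edgeFinset_add_mul_degree_le Gᶜ (k := k) (by omega)
  refine ⟨D, hD, ?_⟩
  by_contra hG
  obtain ⟨h, h2, hcard, ⟨u, hu⟩, hsum⟩ := exists_mul_le_of_not_isHamiltonConnected hG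
    (H := Gᶜ.induce D) (fun u v huv ↦ by simp_all [Subtype.ext_iff]) (by omega)
  rw [← hD] at hedges hn'
  have hlt := two_mul_mul_add_sq_lt_sub_one_mul (N := Fintype.card D) (k := k) (h := h)
    (by omega) (by omega) (by omega) (by omega) (by zify at hn'; linarith)
  have hu' := Nat.mul_le_mul_left k hu
  have := hdeg u
  zify at hedges hu' this
  linarith

end Greedy

section PathToTree

variable {V : Type*} {G : SimpleGraph V} {a b : V}

lemma isAcyclic_fromEdgeSet_edgeSet {p : G.Walk a b} (hp : p.IsPath) :
    (SimpleGraph.fromEdgeSet p.edgeSet).IsAcyclic := by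
  induction p with
  | nil => simp
  | @cons a c b h p ih =>
    rw [SimpleGraph.Walk.cons_isPath_iff] at hp
    have hsup : SimpleGraph.fromEdgeSet (SimpleGraph.Walk.cons h p).edgeSet =
        SimpleGraph.fromEdgeSet p.edgeSet ⊔ .edge a c := by
      rw [SimpleGraph.Walk.edgeSet_cons, SimpleGraph.edge, ← SimpleGraph.fromEdgeSet_union,
        Set.union_singleton]
    rw [hsup]
    refine (ih hp.1).sup_edge_of_not_reachable fun hreach ↦ ?_
    obtain ⟨w⟩ := hreach
    have hadj := w.adj_snd (SimpleGraph.Walk.not_nil_of_ne h.ne)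
    exact hp.2 (p.fst_mem_support_of_mem_edges ((SimpleGraph.fromEdgeSet_adj _).mp hadj).1)

variable [Fintype V]

lemma two_le_degree_getVert {p : G.Walk a b} (hp : p.IsPath) {i : ℕ} (hi : 0 < i)
    (hi' : i < p.length) : 2 ≤ G.degree (p.getVert i) := by
  calc 2 = (p.toSubgraph.neighborSet (p.getVert i)).ncard :=
        (hp.ncard_neighborSet_toSubgraph_internal_eq_two hi.ne' hi').symm
    _ ≤ (G.neighborSet (p.getVert i)).ncard :=
        Set.ncard_le_ncard (p.toSubgraph.neighborSet_subset _)
    _ = G.degree (p.getVert i) := by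
        rw [Set.ncard_eq_toFinset_card', SimpleGraph.degree, SimpleGraph.neighborFinset]

lemma card_degree_eq_one_add_length_le {p : G.Walk a b} (hp : p.IsPath) :
    #{v | G.degree v = 1} + p.length ≤ Fintype.card V + 1 := by
  have hinj : Set.InjOn p.getVert (Ioo 0 p.length) :=
    hp.getVert_injOn.mono fun i hi ↦ by grind
  have hdisj : Disjoint ({v | G.degree v = 1} : Finset V) ((Ioo 0 p.length).image p.getVert) := by
    refine disjoint_left.mpr fun v hv hv' ↦ ?_
    obtain ⟨i, hi, rfl⟩ := mem_image.mp hv'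
    have := two_le_degree_getVert hp (mem_Ioo.mp hi).1 (mem_Ioo.mp hi).2
    simp only [mem_filter, mem_univ, true_and] at hv
    omega
  have := card_le_univ (({v | G.degree v = 1} : Finset V) ∪ (Ioo 0 p.length).image p.getVert)
  rw [card_union_of_disjoint hdisj, card_image_of_injOn hinj, Nat.card_Ioo] at this
  omega

lemma hasSpanningKEndedTree_of_isPath {k : ℕ} (hG : G.Connected) {p : G.Walk a b} (hp : p.IsPath)
    (hk : Fintype.card V + 1 ≤ p.length + k) : HasSpanningKEndedTree G k := by
  obtain ⟨T, hpT, hTG, hT⟩ := hG.exists_isTree_le_of_le_of_isAcyclic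
    ((SimpleGraph.fromEdgeSet_le _).mpr fun e he ↦ p.edges_subset_edgeSet he.1)
    (isAcyclic_fromEdgeSet_edgeSet hp)
  have hedges : ∀ e ∈ p.edges, e ∈ T.edgeSet := fun e he ↦
    (SimpleGraph.fromEdgeSet_le _).mp hpT
      ⟨he, G.not_isDiag_of_mem_edgeSet (p.edges_subset_edgeSet he)⟩
  have := card_degree_eq_one_add_length_le (hp.transfer hedges)
  rw [SimpleGraph.Walk.length_transfer] at this
  exact ⟨T, hTG, hT, by omega⟩

variable {D : Set V} {k : ℕ}

lemma IsHamiltonConnected.exists_isPath (h : IsHamiltonConnected G) (hab : a ≠ b) :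
    ∃ p : G.Walk a b, p.IsPath ∧ p.length + 1 = Fintype.card V := by
  obtain ⟨p, hp⟩ := h hab
  have : 0 < Fintype.card V := Fintype.card_pos_iff.mpr ⟨a⟩
  exact ⟨p, hp.isPath, by rw [hp.length_eq]; omega⟩

lemma IsHamiltonConnected.exists_isPath_of_induce (hD : IsHamiltonConnected (G.induce D))
    (ha : a ∈ D) (hb : b ∈ D) (hab : a ≠ b) :
    ∃ p : G.Walk a b, p.IsPath ∧ p.length + 1 = Fintype.card D ∧ ∀ x ∈ p.support, x ∈ D := by
  obtain ⟨p, hp, hlen⟩ := hD.exists_isPath (a := ⟨a, ha⟩) (b := ⟨b, hb⟩) (by simpa using hab)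
  let f : G.induce D →g G := (SimpleGraph.Embedding.induce D).toHom
  refine ⟨p.map f, hp.map Subtype.val_injective,
    (congrArg (· + 1) (p.length_map f)).trans hlen, fun x hx ↦ ?_⟩
  obtain ⟨y, -, rfl⟩ := List.mem_map.mp (p.support_map f ▸ hx)
  exact y.2

variable {x y : V}

lemma hasSpanningKEndedTree_of_adj_of_adj (hG : G.Connected)
    (hD : IsHamiltonConnected (G.induce D)) (hcard : Fintype.card D + k = Fintype.card V)
    (hD2 : D.Nontrivial) (hx : x ∉ D) (hy : y ∉ D) (ha : a ∈ D) (hyx : G.Adj y x)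
    (hxa : G.Adj x a) : HasSpanningKEndedTree G k := by
  obtain ⟨b, hb, hba⟩ := hD2.exists_ne a
  obtain ⟨p, hp, hlen, hpD⟩ := hD.exists_isPath_of_induce ha hb hba.symm
  have hxp : (p.cons hxa).IsPath := hp.cons fun h ↦ hx (hpD _ h)
  have hyp : ((p.cons hxa).cons hyx).IsPath := hxp.cons fun h ↦ by
    rcases List.mem_cons.mp h with rfl | h
    exacts [hyx.ne rfl, hy (hpD _ h)]
  refine hasSpanningKEndedTree_of_isPath hG hyp ?_
  simp only [SimpleGraph.Walk.length_cons]
  omega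

lemma hasSpanningKEndedTree_of_adj_of_adj_of_ne (hG : G.Connected)
    (hD : IsHamiltonConnected (G.induce D)) (hcard : Fintype.card D + k = Fintype.card V)
    (hx : x ∉ D) (hy : y ∉ D) (hxy : x ≠ y) (ha : a ∈ D) (hb : b ∈ D) (hab : a ≠ b)
    (hxa : G.Adj x a) (hyb : G.Adj y b) : HasSpanningKEndedTree G k := by
  obtain ⟨p, hp, hlen, hpD⟩ := hD.exists_isPath_of_induce ha hb hab
  have hyp : (p.concat hyb.symm).IsPath := hp.concat (fun h ↦ hy (hpD _ h)) hyb.symm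
  have hxp : ((p.concat hyb.symm).cons hxa).IsPath := hyp.cons fun h ↦ by
    rw [SimpleGraph.Walk.support_concat, List.mem_append, List.mem_singleton] at h
    exact h.elim (fun h ↦ hx (hpD _ h)) hxy
  refine hasSpanningKEndedTree_of_isPath hG hxp ?_
  simp only [SimpleGraph.Walk.length_cons, SimpleGraph.Walk.length_concat]
  omega

lemma hasSpanningKEndedTree_of_adj_of_notMem (hG : G.Connected)
    (hD : IsHamiltonConnected (G.induce D)) (hcard : Fintype.card D + k = Fintype.card V)
    (hD2 : D.Nontrivial) (hx : x ∉ D) (hy : y ∉ D) (hxy : G.Adj x y) :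
    HasSpanningKEndedTree G k := by
  by_cases hxD : ∃ a ∈ D, G.Adj x a
  · obtain ⟨a, ha, hxa⟩ := hxD
    exact hasSpanningKEndedTree_of_adj_of_adj hG hD hcard hD2 hx hy ha hxy.symm hxa
  obtain ⟨d, hd⟩ := hD2.nonempty
  obtain ⟨w⟩ := hG.preconnected x d
  obtain ⟨e, -, ⟨hfst, hfstD⟩, hsnd⟩ :=
    w.exists_boundary_dart {v | v ∉ D ∧ ¬ ∃ a ∈ D, G.Adj v a} ⟨hx, hxD⟩ fun h ↦ h.1 hd
  have hsndD : e.snd ∉ D := fun h ↦ hfstD ⟨_, h, e.adj⟩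
  obtain ⟨a, ha, hadj⟩ : ∃ a ∈ D, G.Adj e.snd a := by_contra fun h ↦ hsnd ⟨hsndD, h⟩
  exact hasSpanningKEndedTree_of_adj_of_adj hG hD hcard hD2 hsndD hfst ha e.adj hadj

lemma hasSpanningKEndedTree_or_exists_forall_adj_eq (hG : G.Connected)
    (hD : IsHamiltonConnected (G.induce D)) (hcard : Fintype.card D + k = Fintype.card V)
    (hD2 : D.Nontrivial) (hDc : Dᶜ.Nontrivial) :
    HasSpanningKEndedTree G k ∨ ∃ a ∈ D, ∀ x ∉ D, ∀ z, G.Adj x z → z = a := by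
  refine or_iff_not_imp_left.mpr fun hT ↦ ?_
  have hmem : ∀ x ∉ D, ∀ z, G.Adj x z → z ∈ D := fun x hx z hxz ↦ by_contra fun hz ↦
    hT (hasSpanningKEndedTree_of_adj_of_notMem hG hD hcard hD2 hx hz hxz)
  have heq : ∀ x ∉ D, ∀ y ∉ D, x ≠ y → ∀ a b, G.Adj x a → G.Adj y b → a = b :=
    fun x hx y hy hxy a b hxa hyb ↦ by_contra fun hab ↦
      hT (hasSpanningKEndedTree_of_adj_of_adj_of_ne hG hD hcard hx hy hxy (hmem x hx a hxa)
        (hmem y hy b hyb) hab hxa hyb)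
  obtain ⟨x₀, hx₀, y₀, hy₀, hxy₀⟩ := hDc
  have : Nontrivial V := ⟨x₀, y₀, hxy₀⟩
  obtain ⟨a, hxa⟩ := hG.preconnected.exists_adj_of_nontrivial x₀
  obtain ⟨b, hyb⟩ := hG.preconnected.exists_adj_of_nontrivial y₀
  refine ⟨a, hmem x₀ hx₀ a hxa, fun x hx z hxz ↦ ?_⟩
  by_cases hxx : x = x₀
  · subst hxx
    rw [heq x hx y₀ hy₀ hxy₀ z b hxz hyb, heq x hx y₀ hy₀ hxy₀ a b hxa hyb]
  · exact heq x hx x₀ hx₀ hxx z a hxz hxa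

end PathToTree

section SpectralRadius

open Matrix

variable {V : Type*}

lemma isHermitian_adjMatrix (G : SimpleGraph V) : (G.adjMatrix ℝ).IsHermitian :=
  isHermitian_iff_isSymm.mpr G.isSymm_adjMatrix

variable [Fintype V]

lemma specRad_eq_sSup_spectrum (G : SimpleGraph V) :
    specRad G = sSup (spectrum ℝ (G.adjMatrix ℝ)) := by
  have hadj : adjMat G = G.adjMatrix ℝ := rfl
  rw [specRad, ← spectrum_toLin', toLin'_apply', hadj]
  simp only [Module.End.hasEigenvalue_iff_mem_spectrum, Set.ofPred_mem_eq]

lemma specRad_eq_of_iso {W : Type*} [Fintype W] {G : SimpleGraph V} {H : SimpleGraph W}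
    (e : G ≃g H) : specRad G = specRad H := by
  rw [specRad_eq_sSup_spectrum, specRad_eq_sSup_spectrum, ← e.reindex_adjMatrix ℝ]
  congr 1
  exact (AlgEquiv.spectrum_eq (reindexAlgEquiv ℝ ℝ e.toEquiv) (G.adjMatrix ℝ)).symm

variable {G : SimpleGraph V}

lemma le_specRad_of_mem_spectrum {μ : ℝ} (hμ : μ ∈ spectrum ℝ (G.adjMatrix ℝ)) :
    μ ≤ specRad G := by
  rw [specRad_eq_sSup_spectrum]
  exact le_csSup finite_real_spectrum.bddAbove hμ

lemma specRad_mem_spectrum [Nonempty V] (G : SimpleGraph V) :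
    specRad G ∈ spectrum ℝ (G.adjMatrix ℝ) := by
  rw [specRad_eq_sSup_spectrum]
  exact Set.Nonempty.csSup_mem
    ⟨_, (isHermitian_adjMatrix G).eigenvalues_mem_spectrum_real (Classical.arbitrary V)⟩
    finite_real_spectrum

lemma posSemidef_specRad_smul_one_sub_adjMatrix (G : SimpleGraph V) :
    (specRad G • 1 - G.adjMatrix ℝ).PosSemidef := by
  refine posSemidef_iff_isHermitian_and_spectrum_nonneg.mpr
    ⟨(isHermitian_one.smul (IsSelfAdjoint.all (specRad G))).sub (isHermitian_adjMatrix G),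
      fun μ hμ ↦ ?_⟩
  rw [← Algebra.algebraMap_eq_smul_one, ← spectrum.singleton_sub_eq] at hμ
  obtain ⟨ν, hν, rfl⟩ := by simpa using hμ
  exact sub_nonneg.mpr (le_specRad_of_mem_spectrum hν)

lemma dotProduct_specRad_smul_one_sub_adjMatrix_mulVec (G : SimpleGraph V) (x : V → ℝ) :
    star x ⬝ᵥ (specRad G • 1 - G.adjMatrix ℝ) *ᵥ x =
      specRad G * (x ⬝ᵥ x) - x ⬝ᵥ G.adjMatrix ℝ *ᵥ x := by
  simp [sub_mulVec, smul_mulVec, dotProduct_sub]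

lemma dotProduct_adjMatrix_mulVec_le (G : SimpleGraph V) (x : V → ℝ) :
    x ⬝ᵥ G.adjMatrix ℝ *ᵥ x ≤ specRad G * (x ⬝ᵥ x) := by
  have := (posSemidef_specRad_smul_one_sub_adjMatrix G).dotProduct_mulVec_nonneg x
  rwa [dotProduct_specRad_smul_one_sub_adjMatrix_mulVec, sub_nonneg] at this

lemma adjMatrix_mulVec_eq_of_le {x : V → ℝ}
    (hx : specRad G * (x ⬝ᵥ x) ≤ x ⬝ᵥ G.adjMatrix ℝ *ᵥ x) :
    G.adjMatrix ℝ *ᵥ x = specRad G • x := by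
  have h := ((posSemidef_specRad_smul_one_sub_adjMatrix G).dotProduct_mulVec_zero_iff x).mp (by
    rw [dotProduct_specRad_smul_one_sub_adjMatrix_mulVec]
    linarith [dotProduct_adjMatrix_mulVec_le G x])
  rw [sub_mulVec, smul_mulVec, one_mulVec, sub_eq_zero] at h
  exact h.symm

lemma exists_ne_zero_adjMatrix_mulVec_eq [Nonempty V] (G : SimpleGraph V) :
    ∃ x : V → ℝ, x ≠ 0 ∧ G.adjMatrix ℝ *ᵥ x = specRad G • x := by
  have h := specRad_mem_spectrum G
  rw [← spectrum_toLin', ← Module.End.hasEigenvalue_iff_mem_spectrum] at h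
  obtain ⟨x, hx⟩ := h.exists_hasEigenvector
  exact ⟨x, hx.2, hx.apply_eq_smul⟩

lemma card_sub_one_le_specRad {s : Finset V} (hs : G.IsClique s) (hs' : s.Nonempty) :
    (#s : ℝ) - 1 ≤ specRad G := by
  let x : V → ℝ := fun i ↦ if i ∈ s then 1 else 0
  have hxx : x ⬝ᵥ x = #s := by simp [x, dotProduct]
  have hxAx : x ⬝ᵥ G.adjMatrix ℝ *ᵥ x = #s * (#s - 1) := by
    have hrow : ∀ i ∈ s, (G.adjMatrix ℝ *ᵥ x) i = #s - 1 := fun i hi ↦ by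
      have : G.neighborFinset i ∩ s = s.erase i := by
        ext j
        simp only [mem_inter, SimpleGraph.mem_neighborFinset, mem_erase]
        exact ⟨fun h ↦ ⟨h.1.ne', h.2⟩, fun h ↦ ⟨hs hi h.2 h.1.symm, h.2⟩⟩
      rw [SimpleGraph.adjMatrix_mulVec_apply, sum_boole, filter_mem_eq_inter, this,
        cast_card_erase_of_mem hi]
    calc x ⬝ᵥ G.adjMatrix ℝ *ᵥ x = ∑ i ∈ s, (G.adjMatrix ℝ *ᵥ x) i := by
          simp [x, dotProduct, ite_mul]
      _ = #s * (#s - 1) := by rw [sum_congr rfl hrow, sum_const, nsmul_eq_mul]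
  have hle := dotProduct_adjMatrix_mulVec_le G x
  rw [hxx, hxAx, mul_comm (specRad G)] at hle
  exact le_of_mul_le_mul_left hle (by exact_mod_cast hs'.card_pos)

lemma exists_le_sum_of_mem_spectrum {A : Matrix V V ℝ} (hA : ∀ i j, 0 ≤ A i j) {μ : ℝ}
    (hμ : μ ∈ spectrum ℝ A) : ∃ i, μ ≤ ∑ j, A i j := by
  rw [← spectrum_toLin', ← Module.End.hasEigenvalue_iff_mem_spectrum] at hμ
  obtain ⟨i, hi⟩ := eigenvalue_mem_ball hμ
  refine ⟨i, ?_⟩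
  simp only [Real.closedBall_eq_Icc, Set.mem_Icc, Real.norm_of_nonneg (hA _ _)] at hi
  rw [← add_sum_erase _ _ (mem_univ i)]
  exact hi.2

lemma exists_specRad_sq_le_sum_degree [Nonempty V] (G : SimpleGraph V) :
    ∃ i, specRad G ^ 2 ≤ ∑ j ∈ G.neighborFinset i, (G.degree j : ℝ) := by
  obtain ⟨i, hi⟩ := exists_le_sum_of_mem_spectrum (A := G.adjMatrix ℝ ^ 2)
    (fun i j ↦ by simp [sq, SimpleGraph.adjMatrix_apply])
    (spectrum.pow_mem_pow _ 2 (specRad_mem_spectrum G))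
  refine ⟨i, hi.trans_eq ?_⟩
  simp only [sq, SimpleGraph.adjMatrix_mul_apply]
  rw [sum_comm]
  refine sum_congr rfl fun j _ ↦ ?_
  simp only [SimpleGraph.adjMatrix_apply, sum_boole, SimpleGraph.degree,
    SimpleGraph.neighborFinset_eq_filter]

/-- Hong's inequality: the row sums of `A²` are sums of degrees over neighbourhoods. -/
lemma specRad_sq_add_card_le [Nonempty V] (hG : ∀ v, 0 < G.degree v) :
    specRad G ^ 2 + Fintype.card V ≤ 2 * #G.edgeFinset + 1 := by
  obtain ⟨i, hi⟩ := exists_specRad_sq_le_sum_degree G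
  have hsum : ∑ j ∈ G.neighborFinset i, G.degree j + Fintype.card V ≤ 2 * #G.edgeFinset + 1 := by
    have hrest : #((univ \ G.neighborFinset i).erase i) ≤
        ∑ j ∈ (univ \ G.neighborFinset i).erase i, G.degree j := by
      rw [card_eq_sum_ones]
      exact sum_le_sum fun j _ ↦ hG j
    have hmem : i ∈ univ \ G.neighborFinset i := by simp
    rw [card_erase_of_mem hmem, card_univ_sdiff, G.card_neighborFinset_eq_degree] at hrest
    rw [← G.sum_degrees_eq_twice_card_edges, ← sum_sdiff (subset_univ (G.neighborFinset i)),
      ← add_sum_erase _ _ hmem]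
    omega
  have : (∑ j ∈ G.neighborFinset i, (G.degree j : ℝ)) + Fintype.card V ≤
      2 * #G.edgeFinset + 1 := by exact_mod_cast hsum
  linarith

lemma two_mul_card_edgeFinset_add_compl (G : SimpleGraph V) :
    2 * #G.edgeFinset + 2 * #Gᶜ.edgeFinset = Fintype.card V * (Fintype.card V - 1) := by
  rw [← SimpleGraph.sum_degrees_eq_twice_card_edges, ← SimpleGraph.sum_degrees_eq_twice_card_edges,
    ← sum_add_distrib, ← card_univ, ← smul_eq_mul, ← sum_const]
  refine sum_congr rfl fun v _ ↦ ?_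
  have := G.degree_lt_card_verts v
  rw [SimpleGraph.degree_compl, card_univ]
  omega

lemma two_mul_card_edgeFinset_compl_le {k : ℕ} (hG : ∀ v, 0 < G.degree v)
    (hk : k < Fintype.card V) (hρ : (Fintype.card V : ℝ) - k - 1 ≤ specRad G) :
    2 * #Gᶜ.edgeFinset + k * (k + 2) ≤ 2 * k * Fintype.card V := by
  have : Nonempty V := Fintype.card_pos_iff.mp (by omega)
  have hk' : (k : ℝ) + 1 ≤ Fintype.card V := by exact_mod_cast hk
  have hhong := specRad_sq_add_card_le hG
  have hsq : ((Fintype.card V : ℝ) - k - 1) ^ 2 ≤ specRad G ^ 2 :=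
    pow_le_pow_left₀ (by linarith) hρ 2
  have hcompl : (2 * #G.edgeFinset + 2 * #Gᶜ.edgeFinset : ℝ) =
      Fintype.card V * (Fintype.card V - 1) := by
    rw [← Nat.cast_pred (by omega)]
    exact_mod_cast two_mul_card_edgeFinset_add_compl G
  have : (2 * #Gᶜ.edgeFinset + k * (k + 2) : ℝ) ≤ 2 * k * Fintype.card V := by linarith
  exact_mod_cast this

lemma pos_of_adjMatrix_mulVec_eq_smul (hG : G.Preconnected) {y : V → ℝ} {μ : ℝ} (hy : ∀ i, 0 ≤ y i)
    (hy0 : y ≠ 0) (hyμ : G.adjMatrix ℝ *ᵥ y = μ • y) (i : V) : 0 < y i := by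
  obtain ⟨j, hj⟩ := Function.ne_iff.mp hy0
  by_contra hi
  obtain ⟨w⟩ := hG i j
  obtain ⟨d, -, hfst, hsnd⟩ := w.exists_boundary_dart {v | y v = 0}
    (le_antisymm (not_lt.mp hi) (hy i)) hj
  have hsum : ∑ v ∈ G.neighborFinset d.fst, y v = 0 := by
    have hfst' : y d.fst = 0 := hfst
    rw [← SimpleGraph.adjMatrix_mulVec_apply, hyμ, Pi.smul_apply, hfst', smul_zero]
  exact hsnd ((sum_eq_zero_iff_of_nonneg fun v _ ↦ hy v).mp hsum d.snd (by simp [d.adj]))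

lemma exists_pos_adjMatrix_mulVec_eq [Nonempty V] (hG : G.Preconnected) :
    ∃ y : V → ℝ, (∀ i, 0 < y i) ∧ G.adjMatrix ℝ *ᵥ y = specRad G • y := by
  obtain ⟨x, hx0, hx⟩ := exists_ne_zero_adjMatrix_mulVec_eq G
  have hy : G.adjMatrix ℝ *ᵥ |x| = specRad G • |x| := by
    apply adjMatrix_mulVec_eq_of_le
    calc specRad G * (|x| ⬝ᵥ |x|) = x ⬝ᵥ G.adjMatrix ℝ *ᵥ x := by
          rw [hx, dotProduct_smul, smul_eq_mul]
          simp [dotProduct]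
      _ ≤ |x| ⬝ᵥ G.adjMatrix ℝ *ᵥ |x| := by
          simp only [SimpleGraph.dotProduct_mulVec_adjMatrix]
          gcongr with i _ j _
          split_ifs
          · exact (le_abs_self _).trans_eq (abs_mul _ _)
          · rfl
  exact ⟨|x|, pos_of_adjMatrix_mulVec_eq_smul hG (fun i ↦ abs_nonneg (x i))
    (fun h ↦ hx0 (funext fun i ↦ abs_eq_zero.mp (congrFun h i))) hy, hy⟩

lemma eq_of_le_of_specRad_le {H : SimpleGraph V} (hG : G.Preconnected) (hGH : G ≤ H)
    (hρ : specRad H ≤ specRad G) : G = H := by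
  cases isEmpty_or_nonempty V
  · exact Subsingleton.elim G H
  obtain ⟨y, hy, hyG⟩ := exists_pos_adjMatrix_mulVec_eq hG
  have hle : y ⬝ᵥ H.adjMatrix ℝ *ᵥ y ≤ y ⬝ᵥ G.adjMatrix ℝ *ᵥ y := by
    calc y ⬝ᵥ H.adjMatrix ℝ *ᵥ y ≤ specRad H * (y ⬝ᵥ y) := dotProduct_adjMatrix_mulVec_le H y
      _ ≤ specRad G * (y ⬝ᵥ y) := by
          gcongr
          exact sum_nonneg fun i _ ↦ mul_self_nonneg (y i)
      _ = y ⬝ᵥ G.adjMatrix ℝ *ᵥ y := by rw [hyG, dotProduct_smul, smul_eq_mul]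
  refine le_antisymm hGH fun i j hij ↦ by_contra fun hG' ↦ hle.not_gt ?_
  simp only [SimpleGraph.dotProduct_mulVec_adjMatrix, ← sum_product']
  refine sum_lt_sum (fun p _ ↦ ?_) ⟨(i, j), mem_univ _, ?_⟩
  · have := mul_pos (hy p.1) (hy p.2)
    have := @hGH p.1 p.2
    grind
  · simpa [hij, hG'] using mul_pos (hy i) (hy j)

end SpectralRadius

section ExtremalGraph

variable {V W : Type*} {k : ℕ}

/-- The graph `K₁ ∨ (K_{|D| - 1} + |Dᶜ| K₁)`: a clique on `D`, with each vertex outside `D` pendant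
at the vertex `a`, which is meant to lie in `D`. -/
def cliqueWithPendants (D : Set V) (a : V) : SimpleGraph V where
  Adj i j := i ≠ j ∧ (i = a ∨ j = a ∨ (i ∈ D ∧ j ∈ D))
  symm := ⟨fun i j h ↦ by tauto⟩
  loopless := ⟨fun i h ↦ h.1 rfl⟩

lemma isClique_cliqueWithPendants (D : Set V) (a : V) : (cliqueWithPendants D a).IsClique D :=
  fun _ hi _ hj hij ↦ ⟨hij, .inr (.inr ⟨hi, hj⟩)⟩

lemma le_cliqueWithPendants {G : SimpleGraph V} {D : Set V} {a : V}
    (h : ∀ x ∉ D, ∀ z, G.Adj x z → z = a) : G ≤ cliqueWithPendants D a := by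
  refine fun i j hij ↦ ⟨hij.ne, ?_⟩
  by_cases hi : i ∈ D
  · by_cases hj : j ∈ D
    · exact .inr (.inr ⟨hi, hj⟩)
    · exact .inl (h j hj i hij.symm)
  · exact .inr (.inl (h i hi j hij))

variable [Fintype V] [Fintype W]

lemma nonempty_cliqueWithPendants_iso {D : Set V} {E : Set W} {a : V} {b : W} (ha : a ∈ D)
    (hb : b ∈ E) (hD : Fintype.card D = Fintype.card E)
    (hDc : Fintype.card V = Fintype.card W) :
    Nonempty (cliqueWithPendants D a ≃g cliqueWithPendants E b) := by
  obtain ⟨e, he⟩ : ∃ e : D ≃ E, e ⟨a, ha⟩ = ⟨b, hb⟩ :=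
    ⟨(Fintype.equivOfCardEq hD).trans (Equiv.swap _ ⟨b, hb⟩), Equiv.swap_apply_left _ _⟩
  let f : ↥(Dᶜ) ≃ ↥(Eᶜ) := Fintype.equivOfCardEq (by
    rw [Fintype.card_compl_set, Fintype.card_compl_set, hD, hDc])
  let g : V ≃ W := (Equiv.Set.sumCompl D).symm.trans
    ((e.sumCongr f).trans (Equiv.Set.sumCompl E))
  have hga : g a = b := by simp [g, Equiv.Set.sumCompl_symm_apply_of_mem ha, he]
  have hgD : ∀ x, g x ∈ E ↔ x ∈ D := fun x ↦ by
    by_cases hx : x ∈ D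
    · simp [g, Equiv.Set.sumCompl_symm_apply_of_mem hx, hx]
    · have hfx : (f ⟨x, hx⟩ : W) ∉ E := (f ⟨x, hx⟩).2
      simp [g, Equiv.Set.sumCompl_symm_apply_of_notMem hx, hx, hfx]
  have hgb : ∀ x, g x = b ↔ x = a := fun x ↦ by rw [← hga, g.injective.eq_iff]
  exact ⟨g, by simp [cliqueWithPendants, hgb, hgD]⟩

lemma oneJoinCliquePlusIso_eq (n k : ℕ) [NeZero n] :
    oneJoinCliquePlusIso n k = cliqueWithPendants {i : Fin n | i.val < n - k} 0 := by
  ext i j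
  simp only [oneJoinCliquePlusIso, cliqueWithPendants, SimpleGraph.fromRel_adj, Set.mem_ofPred_eq,
    Fin.ext_iff, Fin.val_zero]
  tauto

lemma card_setOf_val_lt_sub (n k : ℕ) [Fintype {i : Fin n | i.val < n - k}] :
    Fintype.card {i : Fin n | i.val < n - k} = n - k := by
  rw [← Set.toFinset_card, Set.toFinset_ofPred, Fin.card_filter_val_lt, min_eq_right (n.sub_le k)]

lemma sub_one_le_specRad_oneJoinCliquePlusIso {n k : ℕ} (hk : k < n) :
    (n : ℝ) - k - 1 ≤ specRad (oneJoinCliquePlusIso n k) := by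
  have : NeZero n := ⟨by omega⟩
  have hclique := isClique_cliqueWithPendants {i : Fin n | i.val < n - k} 0
  rw [← oneJoinCliquePlusIso_eq, ← Set.coe_toFinset {i : Fin n | i.val < n - k}] at hclique
  have hcard : #{i : Fin n | i.val < n - k}.toFinset = n - k := by
    rw [Set.toFinset_card, card_setOf_val_lt_sub]
  have := card_sub_one_le_specRad hclique (card_pos.mp (by omega))
  rwa [hcard, Nat.cast_sub hk.le] at this

lemma nonempty_cliqueWithPendants_iso_oneJoinCliquePlusIso {D : Set V} {a : V} (ha : a ∈ D)
    (hD : Fintype.card D + k = Fintype.card V) :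
    Nonempty (cliqueWithPendants D a ≃g oneJoinCliquePlusIso (Fintype.card V) k) := by
  have : NeZero (Fintype.card V) := ⟨(Fintype.card_pos_iff.mpr ⟨a⟩).ne'⟩
  rw [oneJoinCliquePlusIso_eq]
  have : 0 < Fintype.card D := Fintype.card_pos_iff.mpr ⟨⟨a, ha⟩⟩
  refine nonempty_cliqueWithPendants_iso ha ?_ ?_ (Fintype.card_fin _).symm
  · simp only [Set.mem_ofPred_eq, Fin.val_zero]
    omega
  · rw [card_setOf_val_lt_sub]
    omega

end ExtremalGraph

lemma hasSpanningKEndedTree_or_exists_le_cliqueWithPendants {V : Type*} [Fintype V]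
    {G : SimpleGraph V} {k : ℕ} (hG : G.Connected) (hk : 2 ≤ k)
    (hn : 6 * k + 5 ≤ Fintype.card V) (hn' : 2 * k ^ 2 + 3 * k + 4 ≤ 2 * Fintype.card V)
    (hρ : (Fintype.card V : ℝ) - k - 1 ≤ specRad G) :
    HasSpanningKEndedTree G k ∨ ∃ D : Set V, ∃ a ∈ D,
      Fintype.card D + k = Fintype.card V ∧ G ≤ cliqueWithPendants D a := by
  have : Nontrivial V := Fintype.one_lt_card_iff_nontrivial.mp (by omega)
  obtain ⟨D, hcard, hD⟩ := exists_isHamiltonConnected_induce hk hn hn'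
    (two_mul_card_edgeFinset_compl_le (fun v ↦ hG.preconnected.degree_pos_of_nontrivial v)
      (by omega) hρ)
  refine (hasSpanningKEndedTree_or_exists_forall_adj_eq hG hD hcard ?_ ?_).imp_right ?_
  · rw [← Set.one_lt_ncard_iff_nontrivial, Set.ncard_eq_toFinset_card', Set.toFinset_card]
    omega
  · rw [← Set.one_lt_ncard_iff_nontrivial, Set.ncard_eq_toFinset_card', Set.toFinset_card,
      Fintype.card_compl_set]
    omega
  · rintro ⟨a, ha, h⟩
    exact ⟨D, a, ha, hcard, le_cliqueWithPendants h⟩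

end SpanningEndedTree

open SpanningEndedTree in
theorem spectral_spanning_k_ended_tree_general {V : Type*} [Fintype V] {n k : ℕ}
    (hV : Fintype.card V = n) (hk : 2 ≤ k) (hn1 : 6 * k + 5 ≤ n)
    (hn2 : (k : ℝ) ^ 2 + 3 / 2 * k + 2 ≤ (n : ℝ)) (G : SimpleGraph V) (hG : G.Connected)
    (hρ : specRad (oneJoinCliquePlusIso n k) ≤ specRad G) :
    HasSpanningKEndedTree G k ∨ Nonempty (G ≃g oneJoinCliquePlusIso n k) := by
  subst hV
  have hn' : 2 * k ^ 2 + 3 * k + 4 ≤ 2 * Fintype.card V := by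
    have : (2 * k ^ 2 + 3 * k + 4 : ℝ) ≤ 2 * Fintype.card V := by linarith
    exact_mod_cast this
  refine (hasSpanningKEndedTree_or_exists_le_cliqueWithPendants hG hk hn1 hn'
    ((sub_one_le_specRad_oneJoinCliquePlusIso (by omega)).trans hρ)).imp_right ?_
  rintro ⟨D, a, ha, hD, hle⟩
  obtain ⟨e⟩ := nonempty_cliqueWithPendants_iso_oneJoinCliquePlusIso ha hD
  rw [eq_of_le_of_specRad_le hG.preconnected hle ((specRad_eq_of_iso e).trans_le hρ)]
  exact ⟨e⟩

/-- **Theorem (spectral radius and spanning `k`-ended trees).**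
Let `k ≥ 2` and let `G` be a connected graph of order
`n ≥ max {6k+5, k² + (3/2)k + 2}`.  If `ρ(G) ≥ ρ(K₁ ∨ (K_{n-k-1} + kK₁))`,
then `G` has a spanning `k`-ended-tree unless `G ≅ K₁ ∨ (K_{n-k-1} + kK₁)`. -/
theorem spectral_spanning_k_ended_tree {n k : ℕ} (hk : 2 ≤ k)
    (hn1 : 6 * k + 5 ≤ n) (hn2 : (k : ℝ) ^ 2 + 3 / 2 * k + 2 ≤ (n : ℝ))
    (G : SimpleGraph (Fin n)) (hG : G.Connected)
    (hρ : specRad (oneJoinCliquePlusIso n k) ≤ specRad G) :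
    HasSpanningKEndedTree G k ∨ Nonempty (G ≃g oneJoinCliquePlusIso n k) :=
  spectral_spanning_k_ended_tree_general (Fintype.card_fin n) hk hn1 hn2 G hG hρ
end

section
/- Let k ≥ 2 be an integer and let G be a connected graph of order n with n ≥ max{6k+5, (3/2)k² + (3/2)k + 2}. If the signless Laplacian spectral radius satisfies q(G) ≥ q(K₁ ∨ (K_{n−k−1} + kK₁)), then G has a spanning k-ended-tree, unless G is isomorphic to K₁ ∨ (K_{n−k−1} + kK₁). -/
open Finset
open scoped Classical

/-!
A path on `n + 2 - k` vertices extends to a spanning tree with at most `k` leaves. If `G` has no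
such path, let `H ⊇ G` be edge-maximal without one; then `q(G) ≤ q(H)`. Rotating a path that uses
a new edge `uv` shows that nonadjacent vertices of `H` have degree sum at most `n - 2`, so the
degrees of adjacent vertices of the complement `F` of `H` sum to at least `n`. On the other hand
`2 (n - k - 1) ≤ q(H) ≤ 2 e(H) / (n - 1) + n - 2`: the lower bound comes from the clique `K_{n-k}`
in the extremal graph, and the upper bound from the Perron vector. Hence `F` has at most
`k (n - 1)` edges. The vertices of `F`-degree at least `n / 2` cover all the edges of `F`, and
counting edges leaves at most `k` of them. So `H` is a clique on at least `n - k` vertices with at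
most `k` further vertices; since `H` is connected and has no long path, it is the extremal graph,
and strict monotonicity of `q` forces `G = H`.
-/

section Spectral

open scoped Matrix

section Matrix

variable {V : Type*} [Fintype V] {A : Matrix V V ℝ} {μ : ℝ} {x : V → ℝ}

theorem posSemidef_smul_one_sub (hA : A.IsHermitian) (hμ : μ ∈ upperBounds (spectrum ℝ A)) :
    (μ • (1 : Matrix V V ℝ) - A).PosSemidef := by
  rw [← Algebra.algebraMap_eq_smul_one,
    Matrix.posSemidef_iff_isHermitian_and_spectrum_nonneg, ← spectrum.singleton_sub_eq]
  refine ⟨?_, ?_⟩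
  · rw [Algebra.algebraMap_eq_smul_one]
    exact (Matrix.isHermitian_one.smul (IsSelfAdjoint.all μ)).sub hA
  · rintro _ ⟨_, rfl, ν, hν, rfl⟩
    exact sub_nonneg.2 (hμ hν)

theorem dotProduct_smul_one_sub_mulVec (A : Matrix V V ℝ) (μ : ℝ) (x : V → ℝ) :
    x ⬝ᵥ (μ • (1 : Matrix V V ℝ) - A) *ᵥ x = μ * (x ⬝ᵥ x) - x ⬝ᵥ A *ᵥ x := by
  simp [Matrix.sub_mulVec, Matrix.smul_mulVec, dotProduct_sub]

theorem dotProduct_mulVec_le_mul_dotProduct_self (hA : A.IsHermitian)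
    (hμ : μ ∈ upperBounds (spectrum ℝ A)) (x : V → ℝ) : x ⬝ᵥ A *ᵥ x ≤ μ * (x ⬝ᵥ x) := by
  have h := (posSemidef_smul_one_sub hA hμ).dotProduct_mulVec_nonneg x
  rw [star_trivial, dotProduct_smul_one_sub_mulVec] at h
  exact sub_nonneg.1 h

theorem mulVec_eq_smul_of_mul_dotProduct_self_le (hA : A.IsHermitian)
    (hμ : μ ∈ upperBounds (spectrum ℝ A)) (hx : μ * (x ⬝ᵥ x) ≤ x ⬝ᵥ A *ᵥ x) :
    A *ᵥ x = μ • x := by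
  have h := ((posSemidef_smul_one_sub hA hμ).dotProduct_mulVec_zero_iff x).1 <| by
    rw [star_trivial, dotProduct_smul_one_sub_mulVec, sub_eq_zero]
    exact hx.antisymm (dotProduct_mulVec_le_mul_dotProduct_self hA hμ x)
  rw [Matrix.sub_mulVec, Matrix.smul_mulVec, Matrix.one_mulVec, sub_eq_zero] at h
  exact h.symm

theorem mulVec_abs_eq_smul_abs (hA : A.IsHermitian) (hA0 : ∀ u v, 0 ≤ A u v)
    (hμ : μ ∈ upperBounds (spectrum ℝ A)) (hx : A *ᵥ x = μ • x) : A *ᵥ |x| = μ • |x| := by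
  refine mulVec_eq_smul_of_mul_dotProduct_self_le hA hμ ?_
  calc μ * (|x| ⬝ᵥ |x|) = μ * (x ⬝ᵥ x) := by simp [dotProduct]
    _ = x ⬝ᵥ A *ᵥ x := by rw [hx, dotProduct_smul, smul_eq_mul]
    _ ≤ |x| ⬝ᵥ A *ᵥ |x| := by
      simp only [dotProduct, Matrix.mulVec, mul_sum]
      refine sum_le_sum fun u _ => sum_le_sum fun v _ => ?_
      calc x u * (A u v * x v) ≤ |x u * (A u v * x v)| := le_abs_self _
        _ = |x| u * (A u v * |x| v) := by simp [abs_mul, abs_of_nonneg (hA0 u v)]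

end Matrix

variable {V W : Type*} [Fintype V] [Fintype W] {G H : SimpleGraph V}

theorem qMat_apply_self (G : SimpleGraph V) (v : V) : qMat G v v = G.degree v := by
  simp [qMat, SimpleGraph.degree, SimpleGraph.neighborFinset_eq_filter]

theorem qMat_apply_of_ne (G : SimpleGraph V) {u v : V} (huv : u ≠ v) :
    qMat G u v = if G.Adj u v then 1 else 0 := by
  simp [qMat, huv]

theorem qMat_eq_degMatrix_add_adjMatrix (G : SimpleGraph V) :
    qMat G = G.degMatrix ℝ + G.adjMatrix ℝ := by
  ext u v
  obtain rfl | huv := eq_or_ne u v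
  · simp [qMat_apply_self, SimpleGraph.degMatrix]
  · simp [qMat_apply_of_ne G huv, SimpleGraph.degMatrix, huv]

theorem isHermitian_qMat (G : SimpleGraph V) : (qMat G).IsHermitian := by
  rw [qMat_eq_degMatrix_add_adjMatrix]
  exact (G.isHermitian_degMatrix ℝ).add (G.isHermitian_adjMatrix ℝ)

theorem qMat_mulVec_apply (G : SimpleGraph V) (x : V → ℝ) (v : V) :
    (qMat G *ᵥ x) v = G.degree v * x v + ∑ u ∈ G.neighborFinset v, x u := by
  rw [qMat_eq_degMatrix_add_adjMatrix, Matrix.add_mulVec, Pi.add_apply,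
    SimpleGraph.degMatrix_mulVec_apply, SimpleGraph.adjMatrix_mulVec_apply]

theorem qMat_nonneg (G : SimpleGraph V) (u v : V) : 0 ≤ qMat G u v := by
  unfold qMat
  positivity

theorem qMat_mono (h : G ≤ H) (u v : V) : qMat G u v ≤ qMat H u v := by
  obtain rfl | huv := eq_or_ne u v
  · rw [qMat_apply_self, qMat_apply_self]
    exact_mod_cast SimpleGraph.degree_le_of_le h
  · rw [qMat_apply_of_ne G huv, qMat_apply_of_ne H huv]
    split_ifs with hG hH <;> first | exact absurd (h hG) hH | norm_num

theorem qRad_eq_sSup_spectrum (G : SimpleGraph V) : qRad G = sSup (spectrum ℝ (qMat G)) := by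
  simp only [qRad, ← Matrix.toLin'_apply', Module.End.hasEigenvalue_iff_mem_spectrum,
    Matrix.spectrum_toLin', Set.ofPred_mem_eq]

theorem qRad_congr {G : SimpleGraph V} {H : SimpleGraph W} (e : G ≃g H) : qRad G = qRad H := by
  have hQ : Matrix.reindexAlgEquiv ℝ ℝ e.toEquiv (qMat G) = qMat H := by
    ext u v
    change qMat G (e.symm u) (e.symm v) = qMat H u v
    obtain rfl | huv := eq_or_ne u v
    · rw [qMat_apply_self, qMat_apply_self, e.symm.degree_eq]
    · rw [qMat_apply_of_ne G (e.symm.injective.ne huv), qMat_apply_of_ne H huv,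
        e.symm.map_adj_iff]
  rw [qRad_eq_sSup_spectrum, qRad_eq_sSup_spectrum, ← hQ, AlgEquiv.spectrum_eq]

theorem isGreatest_qRad [Nonempty V] (G : SimpleGraph V) :
    IsGreatest (spectrum ℝ (qMat G)) (qRad G) := by
  have hne : (spectrum ℝ (qMat G)).Nonempty := by
    rw [(isHermitian_qMat G).spectrum_real_eq_range_eigenvalues]
    exact Set.range_nonempty _
  rw [qRad_eq_sSup_spectrum]
  exact ⟨hne.csSup_mem (qMat G).finite_real_spectrum,
    fun μ hμ => le_csSup (qMat G).finite_real_spectrum.bddAbove hμ⟩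

theorem exists_qMat_mulVec_eq_qRad_smul [Nonempty V] (G : SimpleGraph V) :
    ∃ x : V → ℝ, x ≠ 0 ∧ qMat G *ᵥ x = qRad G • x := by
  have h := (isGreatest_qRad G).1
  rw [← Matrix.spectrum_toLin', ← Module.End.hasEigenvalue_iff_mem_spectrum] at h
  obtain ⟨x, hx⟩ := h.exists_hasEigenvector
  exact ⟨x, hx.2, by simpa using hx.apply_eq_smul⟩

theorem dotProduct_qMat_mulVec_le [Nonempty V] (G : SimpleGraph V) (x : V → ℝ) :
    x ⬝ᵥ qMat G *ᵥ x ≤ qRad G * (x ⬝ᵥ x) :=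
  dotProduct_mulVec_le_mul_dotProduct_self (isHermitian_qMat G) (isGreatest_qRad G).2 x

theorem exists_pos_qMat_mulVec_eq_qRad_smul (hG : G.Connected) :
    ∃ x : V → ℝ, (∀ v, 0 < x v) ∧ qMat G *ᵥ x = qRad G • x := by
  have := hG.nonempty
  obtain ⟨x, hx0, hx⟩ := exists_qMat_mulVec_eq_qRad_smul G
  have hy : qMat G *ᵥ |x| = qRad G • |x| :=
    mulVec_abs_eq_smul_abs (isHermitian_qMat G) (qMat_nonneg G) (isGreatest_qRad G).2 hx
  have zero_of_adj : ∀ u v, G.Adj u v → x u = 0 → x v = 0 := by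
    intro u v huv hu
    have h := congrFun hy u
    simp only [qMat_mulVec_apply, Pi.smul_apply, Pi.abs_apply, hu, abs_zero, mul_zero, smul_zero,
      zero_add] at h
    rw [sum_eq_zero_iff_of_nonneg fun v _ => abs_nonneg (x v)] at h
    exact abs_eq_zero.1 (h v ((G.mem_neighborFinset u v).2 huv))
  refine ⟨|x|, fun v => abs_pos.2 fun hv => hx0 <| funext fun w => ?_, hy⟩
  obtain ⟨p⟩ := hG.preconnected v w
  by_contra hw
  obtain ⟨d, -, hd, hd'⟩ := p.exists_boundary_dart {u | x u = 0} hv hw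
  exact hd' (zero_of_adj _ _ d.adj hd)

theorem qRad_lt_qRad (hG : G.Connected) (h : G < H) : qRad G < qRad H := by
  have := hG.nonempty
  obtain ⟨x, hx0, hx⟩ := exists_pos_qMat_mulVec_eq_qRad_smul hG
  obtain ⟨u, v, huv, huv'⟩ : ∃ u v, H.Adj u v ∧ ¬ G.Adj u v := by
    by_contra! hle
    exact h.not_ge hle
  have key : x ⬝ᵥ qMat G *ᵥ x < x ⬝ᵥ qMat H *ᵥ x := by
    have hle : ∀ a b, x a * (qMat G a b * x b) ≤ x a * (qMat H a b * x b) := fun a b =>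
      mul_le_mul_of_nonneg_left (mul_le_mul_of_nonneg_right (qMat_mono h.le a b) (hx0 b).le)
        (hx0 a).le
    simp only [dotProduct, Matrix.mulVec, mul_sum]
    refine sum_lt_sum (fun a _ => sum_le_sum fun b _ => hle a b) ⟨u, mem_univ u, ?_⟩
    refine sum_lt_sum (fun b _ => hle u b) ⟨v, mem_univ v, ?_⟩
    rw [qMat_apply_of_ne G huv.ne, qMat_apply_of_ne H huv.ne, if_pos huv, if_neg huv', zero_mul,
      mul_zero, one_mul]
    exact mul_pos (hx0 u) (hx0 v)
  rw [hx, dotProduct_smul, smul_eq_mul] at key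
  exact lt_of_mul_lt_mul_right (key.trans_le (dotProduct_qMat_mulVec_le H x))
    (sum_nonneg fun v _ => mul_self_nonneg (x v))

theorem two_mul_card_sub_one_le_qRad {s : Finset V} (hs : G.IsClique s) (hs0 : s.Nonempty) :
    2 * ((#s : ℝ) - 1) ≤ qRad G := by
  have := hs0.to_type
  set x : V → ℝ := fun v => if v ∈ s then 1 else 0 with hx
  have row : ∀ v ∈ s, 2 * ((#s : ℝ) - 1) ≤ (qMat G *ᵥ x) v := by
    intro v hv
    have hsub : s.erase v ⊆ G.neighborFinset v ∩ s := fun u hu => by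
      rw [mem_erase] at hu
      simp [hu.2, hs hv hu.2 hu.1.symm]
    have hinter : (#s : ℝ) - 1 ≤ #(G.neighborFinset v ∩ s) := by
      rw [← cast_card_erase_of_mem hv]
      exact_mod_cast card_le_card hsub
    have hdeg : (#(G.neighborFinset v ∩ s) : ℝ) ≤ G.degree v := by
      exact_mod_cast card_le_card inter_subset_left
    simp only [qMat_mulVec_apply, hx, if_pos hv, mul_one, sum_ite_mem, sum_const, nsmul_eq_mul]
    linarith
  have h := calc
    2 * ((#s : ℝ) - 1) * #s = ∑ v ∈ s, 2 * ((#s : ℝ) - 1) := by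
      rw [sum_const, nsmul_eq_mul, mul_comm]
    _ ≤ ∑ v ∈ s, (qMat G *ᵥ x) v := sum_le_sum row
    _ = x ⬝ᵥ qMat G *ᵥ x := by simp [dotProduct, hx]
    _ ≤ qRad G * (x ⬝ᵥ x) := dotProduct_qMat_mulVec_le G x
    _ = qRad G * #s := by simp [dotProduct, hx]
  exact le_of_mul_le_mul_right h (by exact_mod_cast hs0.card_pos)

end Spectral

section EdgeBound

variable {V : Type*} [Fintype V] [Nontrivial V] {G : SimpleGraph V}

theorem exists_qRad_le_degree_add (hG : G.Connected) :
    ∃ v, qRad G ≤ G.degree v + (∑ u ∈ G.neighborFinset v, (G.degree u : ℝ)) / G.degree v := by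
  obtain ⟨x, hx0, hx⟩ := exists_pos_qMat_mulVec_eq_qRad_smul hG
  have hd : ∀ v, (0 : ℝ) < G.degree v := fun v => by
    exact_mod_cast hG.preconnected.degree_pos_of_nontrivial v
  obtain ⟨v, hv⟩ := Finite.exists_max fun v => x v / G.degree v
  refine ⟨v, le_of_mul_le_mul_right ?_ (hx0 v)⟩
  calc qRad G * x v = G.degree v * x v + ∑ u ∈ G.neighborFinset v, x u := by
        rw [← qMat_mulVec_apply, hx, Pi.smul_apply, smul_eq_mul]
    _ ≤ G.degree v * x v + ∑ u ∈ G.neighborFinset v, G.degree u * (x v / G.degree v) := by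
        gcongr with u
        rw [← div_le_iff₀' (hd u)]
        exact hv u
    _ = (G.degree v + (∑ u ∈ G.neighborFinset v, (G.degree u : ℝ)) / G.degree v) * x v := by
        rw [← sum_mul]
        ring

theorem sum_degree_neighborFinset_add_card_le (hG : G.Connected) (v : V) :
    ∑ u ∈ G.neighborFinset v, G.degree u + (Fintype.card V - 1) ≤ 2 * #G.edgeFinset := by
  have hcompl : Fintype.card V - 1 ≤ ∑ u ∈ (G.neighborFinset v)ᶜ, G.degree u := by
    have hv : v ∈ (G.neighborFinset v)ᶜ := by simp
    have hcard : #((G.neighborFinset v)ᶜ.erase v) + 1 + G.degree v = Fintype.card V := by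
      rw [card_erase_add_one hv, ← G.card_neighborFinset_eq_degree, card_compl_add_card]
    have hone : #((G.neighborFinset v)ᶜ.erase v) ≤
        ∑ u ∈ (G.neighborFinset v)ᶜ.erase v, G.degree u := by
      rw [card_eq_sum_ones]
      exact sum_le_sum fun u _ => hG.preconnected.degree_pos_of_nontrivial u
    rw [← sum_erase_add _ _ hv]
    lia
  rw [← G.sum_degrees_eq_twice_card_edges, ← sum_add_sum_compl (G.neighborFinset v)]
  gcongr

theorem qRad_le_two_mul_card_edgeFinset_div_add (hG : G.Connected) :
    qRad G ≤ 2 * #G.edgeFinset / (Fintype.card V - 1) + (Fintype.card V - 2) := by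
  obtain ⟨v, hv⟩ := exists_qRad_le_degree_add hG
  have hN : (0 : ℝ) < Fintype.card V - 1 := by
    rw [sub_pos]
    exact_mod_cast Fintype.one_lt_card
  have hd0 : (0 : ℝ) < G.degree v := by
    exact_mod_cast hG.preconnected.degree_pos_of_nontrivial v
  have hd (u : V) : (G.degree u : ℝ) ≤ Fintype.card V - 1 := by
    rw [le_sub_iff_add_le]
    exact_mod_cast G.degree_lt_card_verts u
  set S : ℝ := ∑ u ∈ G.neighborFinset v, (G.degree u : ℝ) with hS
  have hS_degree : S / G.degree v ≤ Fintype.card V - 1 := by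
    rw [div_le_iff₀' hd0, ← G.card_neighborFinset_eq_degree, ← nsmul_eq_mul]
    exact sum_le_card_nsmul _ _ _ fun u _ => hd u
  set M : ℝ := 2 * #G.edgeFinset / (Fintype.card V - 1) with hM
  have hS_edges : S ≤ (M - 1) * (Fintype.card V - 1) := by
    have h : S + (Fintype.card V - 1) ≤ 2 * #G.edgeFinset := by
      rw [hS, ← Nat.cast_one, ← Nat.cast_sub Fintype.card_pos]
      exact_mod_cast sum_degree_neighborFinset_add_card_le hG v
    rw [hM, sub_mul, div_mul_cancel₀ _ hN.ne']
    linarith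
  obtain hlt | hle := lt_or_ge (G.degree v : ℝ) (M - 1)
  · linarith
  · suffices S / G.degree v ≤ M - 1 + (Fintype.card V - 1) - G.degree v by linarith
    rw [div_le_iff₀ hd0]
    nlinarith [mul_nonneg (sub_nonneg.2 (hd v)) (sub_nonneg.2 hle)]

end EdgeBound

section Paths

variable {V : Type*} {G : SimpleGraph V}

/-- `G` contains a path on at least `m` vertices. The path is encoded by the list of its
vertices. -/
def HasPathOrderGE (G : SimpleGraph V) (m : ℕ) : Prop :=
  ∃ l : List V, l.IsChain G.Adj ∧ l.Nodup ∧ m ≤ l.length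

theorem HasPathOrderGE.anti {m m' : ℕ} (h : HasPathOrderGE G m) (hm : m' ≤ m) :
    HasPathOrderGE G m' :=
  h.imp fun _ => And.imp_right (And.imp_right hm.trans)

theorem HasPathOrderGE.exists_isPath {m : ℕ} (hm : m ≠ 0) (h : HasPathOrderGE G m) :
    ∃ u v, ∃ p : G.Walk u v, p.IsPath ∧ m ≤ p.length + 1 := by
  obtain ⟨l, hc, hn, hl⟩ := h
  have hl0 : l ≠ [] := by
    rintro rfl
    exact hm (Nat.le_zero.1 hl)
  refine ⟨_, _, .ofSupport l hl0 hc, ?_, ?_⟩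
  · rwa [SimpleGraph.Walk.isPath_def, SimpleGraph.Walk.support_ofSupport]
  · rwa [← SimpleGraph.Walk.length_support, SimpleGraph.Walk.support_ofSupport]

theorem isAcyclic_spanningCoe_toSubgraph {u v : V} {p : G.Walk u v} (hp : p.IsPath) :
    p.toSubgraph.spanningCoe.IsAcyclic := by
  induction p with
  | nil => exact SimpleGraph.isAcyclic_bot.anti fun x y hxy => by simp at hxy
  | @cons u w v h p ih =>
    rw [SimpleGraph.Walk.cons_isPath_iff] at hp
    have hnot : ¬ p.toSubgraph.spanningCoe.Reachable u w := by
      rintro ⟨q⟩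
      obtain ⟨d, -, hd, -⟩ := q.exists_boundary_dart {u} rfl h.ne'
      rw [Set.mem_singleton_iff] at hd
      exact hp.2 (p.mem_verts_toSubgraph.1 (hd ▸ p.toSubgraph.edge_vert d.adj))
    refine ((ih hp.1).sup_edge_of_not_reachable hnot).anti fun x y hxy => ?_
    simp only [SimpleGraph.Walk.toSubgraph, SimpleGraph.Subgraph.spanningCoe_adj,
      SimpleGraph.Subgraph.sup_adj, SimpleGraph.subgraphOfAdj_adj, Sym2.eq_iff] at hxy
    rw [SimpleGraph.sup_adj, SimpleGraph.edge_adj]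
    grind [h.ne]

theorem card_filter_degree_eq_one_add_length_le [Fintype V] {u v : V} {p : G.Walk u v}
    (hp : p.IsPath) : #{w | G.degree w = 1} + p.length ≤ Fintype.card V + 1 := by
  have hinj : Set.InjOn p.getVert (Ioo 0 p.length : Finset ℕ) :=
    hp.getVert_injOn.mono fun i hi => (mem_Ioo.1 hi).2.le
  have hdisj : Disjoint ({w | G.degree w = 1} : Finset V)
      ((Ioo 0 p.length).image p.getVert) := by
    simp only [disjoint_left, mem_filter, mem_univ, true_and, mem_image, mem_Ioo]
    rintro _ hdeg ⟨i, ⟨hi0, hi⟩, rfl⟩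
    have h2 := hp.ncard_neighborSet_toSubgraph_internal_eq_two hi0.ne' hi
    have hle : (p.toSubgraph.neighborSet (p.getVert i)).ncard ≤ G.degree (p.getVert i) := by
      rw [← G.card_neighborFinset_eq_degree, ← Set.ncard_coe_finset]
      exact Set.ncard_le_ncard (by simpa using p.toSubgraph.neighborSet_subset _)
    lia
  have hcard := card_le_univ (disjUnion _ _ hdisj)
  rw [card_disjUnion, card_image_of_injOn hinj, Nat.card_Ioo] at hcard
  lia

theorem hasSpanningKEndedTree_of_isPath [Fintype V] {k : ℕ} (hG : G.Connected) {u v : V}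
    {p : G.Walk u v} (hp : p.IsPath) (hk : Fintype.card V + 1 ≤ p.length + k) :
    HasSpanningKEndedTree G k := by
  obtain ⟨T, hpT, hTG, hT⟩ := hG.exists_isTree_le_of_le_of_isAcyclic
    p.toSubgraph.spanningCoe_le (isAcyclic_spanningCoe_toSubgraph hp)
  have hedges : ∀ e ∈ p.edges, e ∈ T.edgeSet := fun e he =>
    SimpleGraph.edgeSet_mono hpT (by simpa using he)
  refine ⟨T, hTG, hT, ?_⟩
  have := card_filter_degree_eq_one_add_length_le (hp.transfer hedges)
  rw [SimpleGraph.Walk.length_transfer] at this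
  lia

theorem HasPathOrderGE.hasSpanningKEndedTree [Fintype V] {n k : ℕ}
    (h : HasPathOrderGE G (n + 2 - k)) (hG : G.Connected) (hV : Fintype.card V = n)
    (hk : k < n + 2) : HasSpanningKEndedTree G k := by
  obtain ⟨u, v, p, hp, hlen⟩ := h.exists_isPath (by lia)
  exact hasSpanningKEndedTree_of_isPath hG hp (by lia)

end Paths

section Closure

variable {V : Type*} {G : SimpleGraph V} {u v : V} {A B : List V}

theorem countP_add_countP_tail_le {α : Type*} {p q : α → Bool} {a : α} {l : List α}
    (hpq : (a :: l).IsChain fun x y => ¬ (p x ∧ q y)) (hlast : ∀ x ∈ (a :: l).getLast?, ¬ p x) :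
    (a :: l).countP p + l.countP q ≤ l.length := by
  induction l generalizing a with
  | nil => simpa using hlast
  | cons b l ih =>
    rw [List.isChain_cons_cons] at hpq
    have := ih hpq.2 (by simpa using hlast)
    rw [List.countP_cons (l := b :: l), List.countP_cons (p := q), List.length_cons]
    grind

theorem isChain_append_reverse_append {S T : List V} (hS : S ≠ []) (hA : A.IsChain G.Adj)
    (hST : (S ++ T).IsChain G.Adj) (hAS : ∀ x ∈ A.getLast?, ∀ y ∈ S.getLast?, G.Adj x y)
    (hhead : ∀ x ∈ S.head?, ∀ y ∈ T.head?, G.Adj x y) :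
    (A ++ S.reverse ++ T).IsChain G.Adj := by
  rw [List.isChain_append] at hST
  have hrev : S.reverse.IsChain G.Adj :=
    List.isChain_reverse.2 (hST.1.imp fun _ _ h => h.symm)
  refine (hA.append hrev (by simpa using hAS)).append hST.2.1 ?_
  simpa [List.getLast?_append_of_ne_nil, hS] using hhead

/-- Reversing a segment of `v :: B` shows that `G.Adj u x` excludes `G.Adj v y` whenever `y` is
the successor of `x`. -/
theorem countP_adj_add_countP_adj_le (hA : (A ++ [u]).IsChain G.Adj) (hB : (v :: B).IsChain G.Adj)
    (hno : ∀ l : List V, l.Perm (A ++ u :: v :: B) → ¬ l.IsChain G.Adj) :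
    (v :: B).countP (G.Adj u) + (v :: B).countP (G.Adj v) ≤ B.length := by
  have hperm : ∀ S T, v :: B = S ++ T → ¬ (A ++ [u] ++ S.reverse ++ T).IsChain G.Adj := by
    refine fun S T h => hno _ ?_
    rw [h, List.append_cons A u (S ++ T), ← List.append_assoc]
    exact ((List.reverse_perm S).append_left _).append_right T
  rw [List.countP_cons_of_neg (p := fun w => G.Adj v w) (by simp)]
  refine countP_add_countP_tail_le ?_ ?_
  · rw [List.isChain_iff_forall_rel_of_append_cons_cons]
    rintro x y X Y h ⟨hux, hvy⟩
    refine hperm (X ++ [x]) (y :: Y) (by simpa using h)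
      (isChain_append_reverse_append (by simp) hA (by simpa [← h] using hB)
        (by simpa using hux) ?_)
    cases X <;> simp_all
  · intro x hx hux
    refine hperm (v :: B) [] (by simp) (isChain_append_reverse_append (by simp) hA (by simpa) ?_ ?_)
    · simp_all
    · simp

theorem countP_adj_append_cons_cons_le (hA : (A ++ [u]).IsChain G.Adj) (hB : (v :: B).IsChain G.Adj)
    (hno : ∀ l : List V, l.Perm (A ++ u :: v :: B) → ¬ l.IsChain G.Adj) :
    (A ++ u :: v :: B).countP (G.Adj u) + (A ++ u :: v :: B).countP (G.Adj v) + 2 ≤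
      (A ++ u :: v :: B).length := by
  have hrev {l : List V} (hl : l.IsChain G.Adj) : l.reverse.IsChain G.Adj :=
    List.isChain_reverse.2 (hl.imp fun _ _ h => h.symm)
  have h₁ := countP_adj_add_countP_adj_le hA hB hno
  have h₂ := countP_adj_add_countP_adj_le (u := v) (v := u) (A := B.reverse) (B := A.reverse)
    (by simpa using hrev hB) (by simpa using hrev hA) fun l hl =>
      hno l (hl.trans (by simpa using List.reverse_perm (A ++ u :: v :: B)))
  simp only [List.countP_append, List.countP_cons, List.countP_reverse, List.length_append,
    List.length_cons, List.length_reverse] at h₁ h₂ ⊢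
  lia

theorem degree_add_degree_add_two_le_of_not_hasPathOrderGE [Fintype V]
    (hn : (A ++ u :: v :: B).Nodup) (hA : (A ++ [u]).IsChain G.Adj) (hB : (v :: B).IsChain G.Adj)
    (hno : ¬ HasPathOrderGE G (A ++ u :: v :: B).length) :
    G.degree u + G.degree v + 2 ≤ Fintype.card V := by
  set l := A ++ u :: v :: B with hl
  have hdeg (w : V) : G.degree w = l.countP (G.Adj w) + #(G.neighborFinset w \ l.toFinset) := by
    have : G.neighborFinset w ∩ l.toFinset = (l.filter (G.Adj w)).toFinset := by
      ext
      simp [and_comm]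
    rw [← G.card_neighborFinset_eq_degree, ← card_inter_add_card_sdiff _ l.toFinset, this,
      List.toFinset_card_of_nodup (hn.filter _), List.countP_eq_length_filter]
  have hdisj : Disjoint (G.neighborFinset u \ l.toFinset) (G.neighborFinset v \ l.toFinset) := by
    rw [disjoint_left]
    intro w hu hv
    simp only [mem_sdiff, SimpleGraph.mem_neighborFinset, List.mem_toFinset] at hu hv
    have hperm : (A ++ u :: w :: v :: B).Perm (w :: l) := by
      simpa [hl] using List.perm_middle (l₁ := A ++ [u]) (a := w) (l₂ := v :: B)
    refine hno ⟨A ++ u :: w :: v :: B, ?_, hperm.nodup_iff.2 (List.nodup_cons.2 ⟨hu.2, hn⟩), ?_⟩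
    · rw [List.isChain_append_cons_cons, List.isChain_cons_cons]
      exact ⟨hA, hu.1, hv.1.symm, hB⟩
    · simp [hperm.length_eq]
  have hout : #(G.neighborFinset u \ l.toFinset) + #(G.neighborFinset v \ l.toFinset) + l.length
      ≤ Fintype.card V := by
    rw [← card_disjUnion _ _ hdisj, ← List.toFinset_card_of_nodup hn,
      ← card_compl_add_card l.toFinset]
    gcongr
    intro w
    simp only [mem_disjUnion, mem_sdiff, mem_compl]
    tauto
  have hin := countP_adj_append_cons_cons_le hA hB fun l' hperm hl' =>
    hno ⟨l', hl', hperm.nodup_iff.2 hn, hperm.length_eq.ge⟩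
  rw [hdeg, hdeg]
  lia

theorem isChain_of_isChain_sup_edge {s : List V} (hs : s.IsChain (G ⊔ SimpleGraph.edge u v).Adj)
    (h : u ∉ s ∨ v ∉ s) : s.IsChain G.Adj := by
  refine hs.imp_of_mem_imp fun a b ha hb hab => ?_
  rw [SimpleGraph.sup_adj, SimpleGraph.edge_adj] at hab
  grind

theorem degree_add_degree_add_two_le_of_hasPathOrderGE_sup_edge [Fintype V] {m : ℕ}
    (hno : ¬ HasPathOrderGE G m) (h : HasPathOrderGE (G ⊔ SimpleGraph.edge u v) m) :
    G.degree u + G.degree v + 2 ≤ Fintype.card V := by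
  obtain ⟨l, hc, hn, hm⟩ := h
  have hnc : ¬ l.IsChain G.Adj := fun hc' => hno ⟨l, hc', hn, hm⟩
  rw [List.isChain_iff_forall_rel_of_append_cons_cons] at hnc
  push Not at hnc
  obtain ⟨x, y, A, B, rfl, hxy⟩ := hnc
  rw [List.isChain_append_cons_cons] at hc
  have huv : x = u ∧ y = v ∨ x = v ∧ y = u := by
    have := hc.2.1
    rw [SimpleGraph.sup_adj, SimpleGraph.edge_adj] at this
    tauto
  have hdisj : List.Disjoint (A ++ [x]) (y :: B) :=
    List.disjoint_of_nodup_append (by simpa using hn)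
  have hA : (A ++ [x]).IsChain G.Adj :=
    isChain_of_isChain_sup_edge hc.1 (by have := @hdisj y; grind)
  have hB : (y :: B).IsChain G.Adj :=
    isChain_of_isChain_sup_edge hc.2.2 (by have := @hdisj x; grind)
  have := degree_add_degree_add_two_le_of_not_hasPathOrderGE hn hA hB fun h => hno (h.anti hm)
  obtain ⟨rfl, rfl⟩ | ⟨rfl, rfl⟩ := huv <;> lia

end Closure

section VertexCover

variable {V : Type*} [Fintype V] {F : SimpleGraph V} [DecidableRel F.Adj]

/-- The vertices adjacent to at least half of the vertex set, used as a vertex cover of a graph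
in which the degrees of adjacent vertices sum to at least the order. -/
def halfDegreeFinset (F : SimpleGraph V) [DecidableRel F.Adj] : Finset V :=
  {v | Fintype.card V ≤ 2 * F.degree v}

theorem mem_halfDegreeFinset {v : V} :
    v ∈ halfDegreeFinset F ↔ Fintype.card V ≤ 2 * F.degree v := by
  simp [halfDegreeFinset]

theorem card_mul_card_halfDegreeFinset_le (F : SimpleGraph V) [DecidableRel F.Adj] :
    Fintype.card V * #(halfDegreeFinset F) ≤ 2 * ∑ v, F.degree v := by
  calc Fintype.card V * #(halfDegreeFinset F)
      = ∑ _ ∈ halfDegreeFinset F, Fintype.card V := by rw [sum_const, smul_eq_mul, mul_comm]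
    _ ≤ ∑ v ∈ halfDegreeFinset F, 2 * F.degree v :=
      sum_le_sum fun v hv => mem_halfDegreeFinset.1 hv
    _ ≤ ∑ v, 2 * F.degree v := sum_le_univ_sum_of_nonneg fun _ => Nat.zero_le _
    _ = 2 * ∑ v, F.degree v := (mul_sum ..).symm

theorem isVertexCover_halfDegreeFinset
    (hF : ∀ u v, F.Adj u v → Fintype.card V ≤ F.degree u + F.degree v) :
    F.IsVertexCover (halfDegreeFinset F) := by
  intro u v huv
  have := hF u v huv
  simp only [mem_coe, mem_halfDegreeFinset]
  lia

theorem degree_le_card_of_notMem {L : Finset V} (hL : F.IsVertexCover L) {v : V} (hv : v ∉ L) :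
    F.degree v ≤ #L := by
  rw [← F.card_neighborFinset_eq_degree]
  refine card_le_card fun u hu => ?_
  exact (hL ((F.mem_neighborFinset v u).1 hu)).resolve_left hv

theorem sum_card_neighborFinset_sdiff_le (F : SimpleGraph V) [DecidableRel F.Adj] (L : Finset V) :
    ∑ w ∈ L, #(F.neighborFinset w \ L) ≤ ∑ v ∈ Lᶜ, F.degree v := by
  calc ∑ w ∈ L, #(F.neighborFinset w \ L) = ∑ w ∈ L, #(Lᶜ.bipartiteAbove F.Adj w) := by
        refine sum_congr rfl fun w _ => congrArg card ?_
        ext v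
        simp [bipartiteAbove, and_comm]
    _ = ∑ v ∈ Lᶜ, #(L.bipartiteBelow F.Adj v) :=
      sum_card_bipartiteAbove_eq_sum_card_bipartiteBelow F.Adj
    _ ≤ ∑ v ∈ Lᶜ, F.degree v := by
        refine sum_le_sum fun v _ => ?_
        rw [← F.card_neighborFinset_eq_degree]
        refine card_le_card fun w hw => ?_
        simpa [F.adj_comm] using (mem_filter.1 hw).2

theorem card_le_degree_add_card_halfDegreeFinset
    (hF : ∀ u v, F.Adj u v → Fintype.card V ≤ F.degree u + F.degree v)
    {w : V} (hw : w ∈ halfDegreeFinset F) :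
    Fintype.card V ≤ F.degree w + #(halfDegreeFinset F) := by
  by_cases hsub : F.neighborFinset w ⊆ (halfDegreeFinset F).erase w
  · have := card_le_card hsub
    rw [F.card_neighborFinset_eq_degree, card_erase_of_mem hw] at this
    have := mem_halfDegreeFinset.1 hw
    lia
  · obtain ⟨v, hwv, hv⟩ := not_subset.1 hsub
    rw [F.mem_neighborFinset] at hwv
    have hv' : v ∉ halfDegreeFinset F := fun h => hv (mem_erase.2 ⟨hwv.ne', h⟩)
    have := hF w v hwv
    have := degree_le_card_of_notMem (isVertexCover_halfDegreeFinset hF) hv'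
    lia

theorem card_halfDegreeFinset_mul_le_sum_degree
    (hF : ∀ u v, F.Adj u v → Fintype.card V ≤ F.degree u + F.degree v) :
    (#(halfDegreeFinset F) : ℤ) * (2 * Fintype.card V + 1 - 3 * #(halfDegreeFinset F)) ≤
      ∑ v, (F.degree v : ℤ) := by
  set L := halfDegreeFinset F
  have hdeg (w : V) (hw : w ∈ L) : (Fintype.card V : ℤ) ≤ F.degree w + #L := by
    exact_mod_cast card_le_degree_add_card_halfDegreeFinset hF hw
  have hinter (w : V) (hw : w ∈ L) : #(F.neighborFinset w ∩ L) + 1 ≤ #L := by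
    rw [← card_erase_add_one hw]
    gcongr
    intro v hv
    rw [mem_inter, F.mem_neighborFinset] at hv
    exact mem_erase.2 ⟨hv.1.ne', hv.2⟩
  calc (#L : ℤ) * (2 * Fintype.card V + 1 - 3 * #L)
      = ∑ w ∈ L, (2 * Fintype.card V + 1 - 3 * #L : ℤ) := by rw [sum_const, nsmul_eq_mul]
    _ ≤ ∑ w ∈ L, ((F.degree w : ℤ) + #(F.neighborFinset w \ L)) := by
        refine sum_le_sum fun w hw => ?_
        have := card_inter_add_card_sdiff (F.neighborFinset w) L
        rw [F.card_neighborFinset_eq_degree] at this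
        have := hdeg w hw
        have := hinter w hw
        lia
    _ ≤ ∑ w ∈ L, (F.degree w : ℤ) + ∑ v ∈ Lᶜ, (F.degree v : ℤ) := by
        rw [sum_add_distrib]
        gcongr
        exact_mod_cast sum_card_neighborFinset_sdiff_le F L
    _ = ∑ v, (F.degree v : ℤ) := sum_add_sum_compl L _

/-- `t * (2 * n + 1 - 3 * t)` is concave in `t` and exceeds `2 * k * (n - 1)` at both `k + 1`
and `4 * k - 1`. -/
theorem le_of_mul_two_mul_add_one_sub_le {n k t : ℤ} (hk : 2 ≤ k) (hn : 8 * k - 1 ≤ n)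
    (hn' : 3 * k ^ 2 + 3 * k + 4 ≤ 2 * n) (ht : t < 4 * k)
    (h : t * (2 * n + 1 - 3 * t) ≤ 2 * k * (n - 1)) : t ≤ k := by
  by_contra! hkt
  nlinarith [mul_nonneg (by linarith : 0 ≤ t - (k + 1)) (by linarith : 0 ≤ 4 * k - 1 - t),
    mul_nonneg (by linarith : 0 ≤ t - (k + 1)) (by linarith : 0 ≤ 2 * n + 1 - 15 * k)]

theorem exists_isVertexCover_card_le {k : ℕ} (hk : 2 ≤ k) (hn : 6 * k + 5 ≤ Fintype.card V)
    (hn' : 3 * k ^ 2 + 3 * k + 4 ≤ 2 * Fintype.card V)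
    (hF : ∀ u v, F.Adj u v → Fintype.card V ≤ F.degree u + F.degree v)
    (hsum : ∑ v, F.degree v ≤ 2 * k * (Fintype.card V - 1)) :
    ∃ L : Finset V, #L ≤ k ∧ F.IsVertexCover L := by
  refine ⟨halfDegreeFinset F, ?_, isVertexCover_halfDegreeFinset hF⟩
  have hn8 : 8 * k ≤ Fintype.card V + 1 := by
    obtain h | h := le_or_gt k 3
    · lia
    · nlinarith
  have ht : #(halfDegreeFinset F) < 4 * k := by
    refine lt_of_mul_lt_mul_left (a := Fintype.card V) ?_ (Nat.zero_le _)
    calc Fintype.card V * #(halfDegreeFinset F) ≤ 2 * ∑ v, F.degree v :=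
          card_mul_card_halfDegreeFinset_le F
      _ ≤ 2 * (2 * k * (Fintype.card V - 1)) := by gcongr
      _ = 4 * k * (Fintype.card V - 1) := by ring
      _ < Fintype.card V * (4 * k) := by
          rw [mul_comm]
          gcongr
          lia
  have hsum' := card_halfDegreeFinset_mul_le_sum_degree hF
  zify [show 1 ≤ Fintype.card V by lia] at *
  exact le_of_mul_two_mul_add_one_sub_le hk (by linarith) hn' ht (hsum'.trans hsum)

end VertexCover

section CliqueWithPendants

variable {V W : Type*} {G : SimpleGraph V} {R : Finset V} {r s a b w : V} {B : List V}

theorem isChain_toList_append_cons (hR : G.IsClique R) (hr : r ∈ R)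
    (hB : (r :: B).IsChain G.Adj) : ((R.erase r).toList ++ r :: B).IsChain G.Adj := by
  have hclique : (R.erase r).toList.IsChain G.Adj :=
    ((R.erase r).nodup_toList.pairwise_of_forall_ne fun u hu v hv =>
      hR (mem_of_mem_erase (mem_toList.1 hu)) (mem_of_mem_erase (mem_toList.1 hv))).isChain
  refine hclique.append hB fun u hu v hv => ?_
  obtain rfl : r = v := by simpa using hv
  have hu' := mem_erase.1 (mem_toList.1 (List.mem_of_getLast? hu))
  exact hR hu'.2 hr hu'.1

theorem hasPathOrderGE_card_add_length (hR : G.IsClique R) (hr : r ∈ R)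
    (hB : (r :: B).IsChain G.Adj) (hnodup : B.Nodup) (hdisj : ∀ b ∈ B, b ∉ R) :
    HasPathOrderGE G (#R + B.length) := by
  refine ⟨_, isChain_toList_append_cons hR hr hB, ?_, ?_⟩
  · rw [List.nodup_append]
    refine ⟨nodup_toList _, ?_, ?_⟩ <;> grind [mem_toList]
  · rw [List.length_append, length_toList, List.length_cons, card_erase_of_mem hr]
    lia

theorem hasPathOrderGE_card_add_two (hR : G.IsClique R) (hr : r ∈ R) (hs : s ∈ R) (hrs : r ≠ s)
    (ha : a ∉ R) (hb : b ∉ R) (hab : a ≠ b) (har : G.Adj a r) (hsb : G.Adj s b) :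
    HasPathOrderGE G (#R + 2) := by
  have hsr : s ∈ R.erase r := mem_erase.2 ⟨hrs.symm, hs⟩
  have hchain := isChain_toList_append_cons (B := [b])
    (hR.subset (R.erase_subset r)) hsr (List.isChain_pair.2 hsb)
  refine ⟨a :: r :: (((R.erase r).erase s).toList ++ [s, b]), ?_, ?_, ?_⟩
  · rw [List.isChain_cons_cons, List.isChain_cons]
    refine ⟨har, fun v hv => ?_, hchain⟩
    have hv' : v = s ∨ v ∈ (R.erase r).erase s := by
      rw [List.head?_append, Option.mem_def, Option.or_eq_some_iff] at hv
      exact hv.symm.imp (by simp [eq_comm]) fun h => mem_toList.1 (List.mem_of_head? h)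
    obtain rfl | hv' := hv'
    · exact hR hr hs hrs
    · exact hR hr (mem_of_mem_erase (mem_of_mem_erase hv'))
        (ne_of_mem_erase (mem_of_mem_erase hv')).symm
  · rw [List.nodup_cons, List.nodup_cons, List.nodup_append]
    refine ⟨?_, ?_, nodup_toList _, ?_, ?_⟩ <;> grind [mem_toList]
  · have := one_lt_card.2 ⟨r, hr, s, hs, hrs⟩
    simp only [List.length_cons, List.length_append, length_toList, card_erase_of_mem hsr,
      card_erase_of_mem hr, List.length_nil]
    lia

theorem hasPathOrderGE_card_add_one (hG : G.Connected) (hR : G.IsClique R) (hR0 : R.Nonempty)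
    (hw : w ∉ R) : HasPathOrderGE G (#R + 1) := by
  obtain ⟨r, hr⟩ := hR0
  obtain ⟨p⟩ := hG.preconnected r w
  obtain ⟨d, -, hd, hd'⟩ := p.exists_boundary_dart R hr hw
  exact hasPathOrderGE_card_add_length (B := [d.snd]) hR hd (List.isChain_pair.2 d.adj)
    (List.nodup_singleton _) (List.forall_mem_singleton.2 hd')

theorem exists_mem_adj_of_notMem (hG : G.Connected) (hR : G.IsClique R) (hR0 : R.Nonempty)
    (hno : ¬ HasPathOrderGE G (#R + 2)) (hw : w ∉ R) : ∃ r ∈ R, G.Adj r w := by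
  by_contra hadj
  obtain ⟨s, hs⟩ := hR0
  obtain ⟨p⟩ := hG.preconnected w s
  obtain ⟨d, -, ⟨hfst, hfst'⟩, hsnd⟩ := p.exists_boundary_dart
    {v | v ∉ R ∧ ¬ ∃ r ∈ R, G.Adj r v} ⟨hw, hadj⟩ fun h => h.1 hs
  have hsndR : d.snd ∉ R := fun h => hfst' ⟨_, h, d.adj.symm⟩
  obtain ⟨r, hr, hrd⟩ : ∃ r ∈ R, G.Adj r d.snd := by_contra fun h => hsnd ⟨hsndR, h⟩
  exact hno <| hasPathOrderGE_card_add_length (B := [d.snd, d.fst]) hR hr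
    (by simpa using ⟨hrd, d.adj.symm⟩) (by simp [d.adj.ne']) (by simp [hsndR, hfst])

theorem exists_forall_adj_iff_eq [Fintype V] (hG : G.Connected) (hR : G.IsClique R)
    (hR0 : R.Nonempty) (hRc : 1 < #Rᶜ) (hno : ¬ HasPathOrderGE G (#R + 2)) :
    ∃ r ∈ R, ∀ w ∉ R, ∀ x, G.Adj w x ↔ x = r := by
  have hindep : ∀ a ∉ R, ∀ b ∉ R, ¬ G.Adj a b := fun a ha b hb hab => by
    obtain ⟨r, hr, hra⟩ := exists_mem_adj_of_notMem hG hR hR0 hno ha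
    exact hno <| hasPathOrderGE_card_add_length (B := [a, b]) hR hr
      (by simpa using ⟨hra, hab⟩) (by simpa using hab.ne) (by simp [ha, hb])
  have hunique : ∀ a ∉ R, ∀ b ∉ R, a ≠ b → ∀ r ∈ R, ∀ s ∈ R, G.Adj a r → G.Adj b s → r = s :=
    fun a ha b hb hab r hr s hs har hbs => by_contra fun hrs =>
      hno (hasPathOrderGE_card_add_two hR hr hs hrs ha hb hab har hbs.symm)
  obtain ⟨a, ha, b, hb, hab⟩ := one_lt_card.1 hRc
  rw [mem_compl] at ha hb
  obtain ⟨r, hr, hra⟩ := exists_mem_adj_of_notMem hG hR hR0 hno ha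
  have hrb : ∀ x ∈ R, G.Adj b x → x = r := fun x hx hbx =>
    (hunique a ha b hb hab r hr x hx hra.symm hbx).symm
  refine ⟨r, hr, fun w hw x => ?_⟩
  obtain ⟨s, _, hsw⟩ := exists_mem_adj_of_notMem hG hR hR0 hno hw
  obtain ⟨t, ht, htb⟩ := exists_mem_adj_of_notMem hG hR hR0 hno hb
  have h : ∀ x, G.Adj w x → x = r := fun x hx => by
    have hxR : x ∈ R := by_contra fun hxR => hindep w hw x hxR hx
    rcases eq_or_ne w a with rfl | hwa
    · exact (hunique w ha b hb hab x hxR t ht hx htb.symm).trans (hrb t ht htb.symm)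
    · exact hunique w hw a ha hwa x hxR r hr hx hra.symm
  exact ⟨h x, fun hxr => (hxr.trans (h s hsw.symm).symm) ▸ hsw.symm⟩

/-- The clique on `R` together with an edge from `r` to each remaining vertex. For `r ∈ R` this is
`K₁ ∨ (K_{#R - 1} + mK₁)`, where `m` is the number of vertices outside `R`. -/
def cliqueWithPendants (r : V) (R : Finset V) : SimpleGraph V :=
  SimpleGraph.fromRel fun u v => u = r ∨ u ∈ R ∧ v ∈ R

theorem oneJoinCliquePlusIso_eq_cliqueWithPendants {n k : ℕ} (hn : 0 < n) :
    oneJoinCliquePlusIso n k = cliqueWithPendants ⟨0, hn⟩ {i : Fin n | i.val < n - k} := by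
  simp only [oneJoinCliquePlusIso, cliqueWithPendants, Fin.ext_iff, mem_filter, mem_univ, true_and]

theorem eq_cliqueWithPendants (hR : G.IsClique R) (hr : r ∈ R)
    (h : ∀ w ∉ R, ∀ x, G.Adj w x ↔ x = r) : G = cliqueWithPendants r R := by
  ext u v
  rw [cliqueWithPendants, SimpleGraph.fromRel_adj]
  by_cases hu : u ∈ R
  · by_cases hv : v ∈ R
    · exact ⟨fun huv => ⟨huv.ne, .inl (.inr ⟨hu, hv⟩)⟩, fun huv => hR hu hv huv.1⟩
    · grind [G.adj_comm u v]
  · grind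

theorem isClique_cliqueWithPendants (r : V) (R : Finset V) :
    (cliqueWithPendants r R).IsClique R := fun _ hu _ hv huv =>
  (SimpleGraph.fromRel_adj ..).2 ⟨huv, .inl (.inr ⟨hu, hv⟩)⟩

theorem exists_equiv_forall_mem_iff [Fintype V] [Fintype W] {S : Finset W} (hRS : #R = #S)
    (hVW : Fintype.card V = Fintype.card W) : ∃ e : V ≃ W, ∀ v, e v ∈ S ↔ v ∈ R := by
  have hRS' : Fintype.card {v // v ∈ R} = Fintype.card {w // w ∈ S} := by simpa
  have hcompl : Fintype.card {v // v ∉ R} = Fintype.card {w // w ∉ S} := by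
    rw [Fintype.card_subtype_compl, Fintype.card_subtype_compl, hRS', hVW]
  refine ⟨(Equiv.sumCompl (· ∈ R)).symm.trans (((Fintype.equivOfCardEq hRS').sumCongr
    (Fintype.equivOfCardEq hcompl)).trans (Equiv.sumCompl (· ∈ S))), fun v => ?_⟩
  by_cases hv : v ∈ R
  · simp [Equiv.sumCompl_symm_apply_of_pos (p := (· ∈ R)) hv, hv]
  · simp only [Equiv.trans_apply, Equiv.sumCompl_symm_apply_of_neg (p := (· ∈ R)) hv,
      Equiv.sumCongr_apply, Sum.map_inr, Equiv.sumCompl_apply_inr, hv, iff_false]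
    exact (Fintype.equivOfCardEq hcompl ⟨v, hv⟩).2

theorem nonempty_iso_cliqueWithPendants [Fintype V] [Fintype W] {S : Finset W} {s : W}
    (hr : r ∈ R) (hs : s ∈ S) (hRS : #R = #S) (hVW : Fintype.card V = Fintype.card W) :
    Nonempty (cliqueWithPendants r R ≃g cliqueWithPendants s S) := by
  obtain ⟨e, he⟩ := exists_equiv_forall_mem_iff hRS hVW
  have hswap : ∀ w, Equiv.swap (e r) s w ∈ S ↔ w ∈ S := fun w => by
    have := (he r).2 hr
    grind
  refine ⟨⟨e.trans (Equiv.swap (e r) s), fun {u v} => ?_⟩⟩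
  have hr' : ∀ v, Equiv.swap (e r) s (e v) = s ↔ v = r := fun v => by
    rw [Equiv.swap_apply_eq_iff, Equiv.swap_apply_right, e.apply_eq_iff_eq]
  simp only [cliqueWithPendants, SimpleGraph.fromRel_adj, Equiv.trans_apply, hr', hswap, he,
    ne_eq, EmbeddingLike.apply_eq_iff_eq]

theorem nonempty_iso_oneJoinCliquePlusIso [Fintype V] {n k : ℕ} (hV : Fintype.card V = n)
    (hr : r ∈ R) (hR : #R = n - k) (hkn : k < n) :
    Nonempty (cliqueWithPendants r R ≃g oneJoinCliquePlusIso n k) := by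
  rw [oneJoinCliquePlusIso_eq_cliqueWithPendants (Nat.zero_lt_of_lt hkn)]
  refine nonempty_iso_cliqueWithPendants hr ?_ ?_ (hV.trans (Fintype.card_fin n).symm)
  · rw [mem_filter_univ]
    exact Nat.sub_pos_of_lt hkn
  · rw [hR, Fin.card_filter_val_lt, min_eq_right (Nat.sub_le _ _)]

end CliqueWithPendants

section Extremal

variable {V : Type*} [Fintype V] {G : SimpleGraph V} {m k : ℕ}

theorem exists_le_forall_compl_adj_card_le (hno : ¬ HasPathOrderGE G m) :
    ∃ H, G ≤ H ∧ ¬ HasPathOrderGE H m ∧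
      ∀ u v, Hᶜ.Adj u v → Fintype.card V ≤ Hᶜ.degree u + Hᶜ.degree v := by
  obtain ⟨H, hGH, hH, hmax⟩ :=
    (Set.toFinite {H : SimpleGraph V | ¬ HasPathOrderGE H m}).exists_le_maximal hno
  refine ⟨H, hGH, hH, fun u v huv => ?_⟩
  rw [SimpleGraph.compl_adj] at huv
  have hpath : HasPathOrderGE (H ⊔ SimpleGraph.edge u v) m := by_contra fun h =>
    huv.2 <| hmax h le_sup_left <| .inr <| (SimpleGraph.edge_adj ..).2 ⟨.inl ⟨rfl, rfl⟩, huv.1⟩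
  have := degree_add_degree_add_two_le_of_hasPathOrderGE_sup_edge hH hpath
  rw [SimpleGraph.degree_compl, SimpleGraph.degree_compl]
  lia

theorem two_mul_card_edgeFinset_add_sum_degree_compl (G : SimpleGraph V) :
    2 * #G.edgeFinset + ∑ v, Gᶜ.degree v = Fintype.card V * (Fintype.card V - 1) := by
  rw [← G.sum_degrees_eq_twice_card_edges, ← sum_add_distrib, ← smul_eq_mul]
  refine sum_eq_card_nsmul fun v _ => ?_
  have := G.degree_lt_card_verts v
  rw [SimpleGraph.degree_compl]
  lia

theorem sum_degree_compl_le_of_le_qRad [Nontrivial V] (hG : G.Connected)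
    (hq : 2 * ((Fintype.card V : ℝ) - k - 1) ≤ qRad G) :
    ∑ v, Gᶜ.degree v ≤ 2 * k * (Fintype.card V - 1) := by
  have hN : 1 < Fintype.card V := Fintype.one_lt_card
  have hsum := two_mul_card_edgeFinset_add_sum_degree_compl G
  have hle := hq.trans (qRad_le_two_mul_card_edgeFinset_div_add hG)
  rw [← sub_le_iff_le_add, le_div_iff₀ (by simpa using hN)] at hle
  zify [hN.le] at hsum ⊢
  suffices (∑ v, Gᶜ.degree v : ℝ) ≤ 2 * k * (Fintype.card V - 1) by exact_mod_cast this
  have hsum' : 2 * (#G.edgeFinset : ℝ) + ∑ v, (Gᶜ.degree v : ℝ) =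
      Fintype.card V * (Fintype.card V - 1) := by exact_mod_cast hsum
  linarith

theorem two_mul_sub_le_qRad_oneJoinCliquePlusIso {n : ℕ} (hkn : k < n) :
    2 * ((n : ℝ) - k - 1) ≤ qRad (oneJoinCliquePlusIso n k) := by
  have h0 : (⟨0, by lia⟩ : Fin n) ∈ ({i | i.val < n - k} : Finset (Fin n)) := by simpa
  have := two_mul_card_sub_one_le_qRad
    (isClique_cliqueWithPendants (⟨0, by lia⟩ : Fin n) {i : Fin n | i.val < n - k}) ⟨_, h0⟩
  rwa [Fin.card_filter_val_lt, min_eq_right (n.sub_le k), Nat.cast_sub hkn.le,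
    ← oneJoinCliquePlusIso_eq_cliqueWithPendants] at this

theorem exists_eq_cliqueWithPendants (hG : G.Connected) (hk : 2 ≤ k) (hkV : k < Fintype.card V)
    (hno : ¬ HasPathOrderGE G (Fintype.card V + 2 - k)) {L : Finset V} (hLk : #L ≤ k)
    (hL : Gᶜ.IsVertexCover L) :
    ∃ R, #R = Fintype.card V - k ∧ ∃ r ∈ R, G = cliqueWithPendants r R := by
  have hR : G.IsClique (Lᶜ : Finset V) := by
    rw [coe_compl, ← SimpleGraph.isIndepSet_compl]
    exact SimpleGraph.isIndepSet_compl_iff_isVertexCover.2 hL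
  have hcard : #Lᶜ = Fintype.card V - #L := card_compl L
  have hR0 : (Lᶜ).Nonempty := card_pos.1 (by lia)
  have hno' : ¬ HasPathOrderGE G (#Lᶜ + 2) := fun h => hno (h.anti (by lia))
  have hLk' : #L = k := by
    refine hLk.antisymm (not_lt.1 fun hlt => hno ?_)
    obtain rfl | ⟨w, hw⟩ := L.eq_empty_or_nonempty
    · obtain ⟨r, hr⟩ := hR0
      exact (hasPathOrderGE_card_add_length (B := []) hR hr (List.isChain_singleton _)
        List.nodup_nil (List.forall_mem_nil _)).anti (by
          rw [hcard, card_empty, List.length_nil]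
          lia)
    · exact (hasPathOrderGE_card_add_one hG hR hR0 (notMem_compl.2 hw)).anti (by lia)
  obtain ⟨r, hr, h⟩ := exists_forall_adj_iff_eq hG hR hR0 (by rw [compl_compl]; lia) hno'
  exact ⟨_, by lia, r, hr, eq_cliqueWithPendants hR hr h⟩

end Extremal

theorem signless_laplacian_spanning_k_ended_tree_general {V : Type*} [Fintype V] {n k : ℕ}
    (hV : Fintype.card V = n) (hk : 2 ≤ k) (hn1 : 6 * k + 5 ≤ n)
    (hn2 : 3 / 2 * (k : ℝ) ^ 2 + 3 / 2 * k + 2 ≤ (n : ℝ)) {G : SimpleGraph V} (hG : G.Connected)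
    (hq : qRad (oneJoinCliquePlusIso n k) ≤ qRad G) :
    HasPathOrderGE G (n + 2 - k) ∨ Nonempty (G ≃g oneJoinCliquePlusIso n k) := by
  subst hV
  have : Nontrivial V := Fintype.one_lt_card_iff_nontrivial.1 (by lia)
  refine or_iff_not_imp_left.2 fun hno => ?_
  obtain ⟨H, hGH, hHno, hF⟩ := exists_le_forall_compl_adj_card_le hno
  have hH : H.Connected := hG.mono hGH
  have hqRad : G ≠ H → qRad G < qRad H := fun hne => qRad_lt_qRad hG (hGH.lt_of_ne hne)
  have hqH : qRad G ≤ qRad H := by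
    obtain rfl | hne := eq_or_ne G H
    exacts [le_rfl, (hqRad hne).le]
  have hsum := sum_degree_compl_le_of_le_qRad hH
    ((two_mul_sub_le_qRad_oneJoinCliquePlusIso (by lia)).trans (hq.trans hqH))
  have hn2' : 3 * k ^ 2 + 3 * k + 4 ≤ 2 * Fintype.card V := by
    rify
    linarith
  obtain ⟨L, hLk, hL⟩ := exists_isVertexCover_card_le hk hn1 hn2' hF hsum
  obtain ⟨R, hR, r, hr, hHR⟩ := exists_eq_cliqueWithPendants hH hk (by lia) hHno hLk hL
  obtain ⟨e⟩ : Nonempty (H ≃g oneJoinCliquePlusIso (Fintype.card V) k) :=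
    hHR ▸ nonempty_iso_oneJoinCliquePlusIso rfl hr hR (by lia)
  obtain rfl | hne := eq_or_ne G H
  · exact ⟨e⟩
  · exact absurd (hqRad hne) (qRad_congr e ▸ hq.not_gt)

/-- **Theorem (signless Laplacian spectral radius and spanning `k`-ended trees).**
Let `k ≥ 2` and let `G` be a connected graph of order
`n ≥ max {6k+5, (3/2)k² + (3/2)k + 2}`.  If `q(G) ≥ q(K₁ ∨ (K_{n-k-1} + kK₁))`,
then `G` has a spanning `k`-ended-tree unless `G ≅ K₁ ∨ (K_{n-k-1} + kK₁)`. -/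
theorem signless_laplacian_spanning_k_ended_tree {n k : ℕ} (hk : 2 ≤ k)
    (hn1 : 6 * k + 5 ≤ n)
    (hn2 : 3 / 2 * (k : ℝ) ^ 2 + 3 / 2 * k + 2 ≤ (n : ℝ))
    (G : SimpleGraph (Fin n)) (hG : G.Connected)
    (hq : qRad (oneJoinCliquePlusIso n k) ≤ qRad G) :
    HasSpanningKEndedTree G k ∨ Nonempty (G ≃g oneJoinCliquePlusIso n k) := by
  exact (signless_laplacian_spanning_k_ended_tree_general (Fintype.card_fin n) hk hn1 hn2 hG
    hq).imp_left fun h => h.hasSpanningKEndedTree hG (Fintype.card_fin n) (by lia)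
end

section
/- Let k ≥ 2 be an integer and let G be a connected graph of order n. If the spectral radius of the complement satisfies ρ(Ḡ) ≤ √(k(n−2)), then G has a spanning k-ended-tree, unless G is isomorphic to the star K_{1,k+1}. -/
open Finset
open scoped Classical

/-!
Suppose that `G` has no spanning `k`-ended-tree. Among the spanning trees with the fewest leaves and
their leaves, choose a tree `T` and a leaf `r` of largest degree in `G`. If `v` is a leaf, `vw` an
edge of `G` and `w'` the vertex before `w` on the path of `T` from `v` to `w`, then replacing `ww'`
by `vw` cannot lower the number of leaves, so it moves the leaf `v` to `w'`. Let `Y` be the set of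
vertices reached from `r` by such rotations, let `S` be the set of the other leaves of `T`, and let
`C` be the rest. By minimality no vertex of `S` has a neighbour in `S ∪ Y`, so in the complement `S`
is a clique joined completely to `Y`. The Rayleigh quotient of `1_S + θ 1_Y`, improved by one step
of power iteration on `C`, then shows that `ρ(Ḡ)` exceeds `√(|S| (n - 2))` as soon as the sum over
`C` of the squared weights (the numbers of neighbours in `S ∪ Y` in the complement, those in `Y`
counted `θ` times) is large enough.

There are two lower bounds for this sum. By the choice of `r`, every vertex of `S ∪ Y` has degree at
most `|Y|`, which bounds the sum of the weights. Moreover, suppose that an edge `ww'` of `T` inside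
`C` leads from `w` towards a leaf `v`. If `v ∈ Y`, then `v` is not adjacent to `w`, because a
rotation would put `w'` into `Y`; if `v ∈ S`, then it is not adjacent to `w` either, or else `w'`
can be rotated into a leaf and has no neighbour in `S` but possibly `v`. Charging these
nonadjacencies to the edges of `T` inside `C` bounds the squares directly. One of the two bounds
always suffices unless `|C| = |Y| = 1`; if then `|S| = k`, the graph is the star `K_{1,k+1}`.
-/

section NbrCount

variable {V : Type*} (H : SimpleGraph V)

/-- The number of `H`-neighbours of `w` in `A`. -/
noncomputable def nbrCount (A : Finset V) (w : V) : ℕ := #{z ∈ A | H.Adj w z}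

lemma sum_nbrCount_comm (A B : Finset V) :
    ∑ w ∈ B, nbrCount H A w = ∑ z ∈ A, nbrCount H B z := by
  simp only [nbrCount, Finset.card_filter]
  rw [Finset.sum_comm]
  simp only [H.adj_comm]

variable {H} {A : Finset V} {w : V}

lemma nbrCount_eq_card (h : ∀ z ∈ A, H.Adj w z) : nbrCount H A w = #A :=
  congrArg Finset.card (Finset.filter_true_of_mem h)

lemma nbrCount_add_nbrCount_compl (hw : w ∈ A) :
    nbrCount H A w + nbrCount Hᶜ A w + 1 = #A := by
  have compl_eq : nbrCount Hᶜ A w = #(({z ∈ A | ¬ H.Adj w z} : Finset V).erase w) := by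
    refine congrArg Finset.card (Finset.ext fun z => ?_)
    simp only [Finset.mem_erase, Finset.mem_filter, SimpleGraph.compl_adj, ne_comm (a := w)]
    tauto
  rw [compl_eq, add_assoc, Finset.card_erase_add_one (Finset.mem_filter.2 ⟨hw, H.irrefl⟩)]
  exact Finset.card_filter_add_card_filter_not _

end NbrCount

section SpectralRadius

variable {V : Type*} [Fintype V] (H : SimpleGraph V)

open Matrix

lemma adjMat_isHermitian : (adjMat H).IsHermitian := by
  ext i j
  simp [adjMat, H.adj_comm]

lemma adjMat_mulVec_indicator (A : Finset V) (w : V) :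
    (adjMat H *ᵥ fun z => if z ∈ A then 1 else 0) w = nbrCount H A w := by
  simp [adjMat, mulVec, dotProduct, nbrCount]

lemma le_specRad_of_hasEigenvalue {μ : ℝ} (h : Module.End.HasEigenvalue (mulVecLin (adjMat H)) μ) :
    μ ≤ specRad H :=
  le_csSup (Module.End.finite_hasEigenvalue _).bddAbove h

variable {H}

lemma lt_specRad_of_mul_dotProduct_lt {x : V → ℝ} {l : ℝ} (h : l * (x ⬝ᵥ x) < x ⬝ᵥ adjMat H *ᵥ x) :
    l < specRad H := by
  have hB : (l • (1 : Matrix V V ℝ) - adjMat H).IsHermitian :=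
    (isHermitian_one.smul (.all l)).sub (adjMat_isHermitian H)
  have not_psd : ¬ (l • (1 : Matrix V V ℝ) - adjMat H).PosSemidef := fun hp => by
    have := hp.dotProduct_mulVec_nonneg x
    rw [star_trivial, sub_mulVec, dotProduct_sub, smul_mulVec, one_mulVec, dotProduct_smul,
      smul_eq_mul] at this
    linarith
  obtain ⟨i, hi⟩ : ∃ i, hB.eigenvalues i < 0 := by
    by_contra! hc
    exact not_psd (hB.posSemidef_iff_eigenvalues_nonneg.2 hc)
  have eigen : adjMat H *ᵥ hB.eigenvectorBasis i =
      (l - hB.eigenvalues i) • ⇑(hB.eigenvectorBasis i) := by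
    have := hB.mulVec_eigenvectorBasis i
    rw [sub_mulVec, smul_mulVec, one_mulVec] at this
    rw [sub_smul, ← this, sub_sub_cancel]
  have ne_zero : ⇑(hB.eigenvectorBasis i) ≠ 0 := fun h0 =>
    hB.eigenvectorBasis.orthonormal.ne_zero i (by ext j; exact congrFun h0 j)
  have := le_specRad_of_hasEigenvalue H (Module.End.hasEigenvalue_of_hasEigenvector
    (Module.End.hasEigenvector_iff.2 ⟨Module.End.mem_eigenspace_iff.2 eigen, ne_zero⟩))
  linarith

-- One step of power iteration on `C` improves the test vector `u`: the vector
-- `u + l⁻¹ • 1_C • (A u)` is used in the Rayleigh quotient.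
lemma lt_specRad_of_extension {u : V → ℝ} {l : ℝ} (hu : 0 ≤ u) (hl : 0 < l) (C : Finset V)
    (huC : ∀ w ∈ C, u w = 0)
    (h : l * (u ⬝ᵥ u) < u ⬝ᵥ adjMat H *ᵥ u + (∑ w ∈ C, (adjMat H *ᵥ u) w ^ 2) / l) :
    l < specRad H := by
  have hA : ∀ i j, 0 ≤ adjMat H i j := fun i j => by unfold adjMat; split_ifs <;> norm_num
  have hmul : ∀ {x : V → ℝ}, 0 ≤ x → 0 ≤ adjMat H *ᵥ x := fun hx i =>
    Finset.sum_nonneg fun j _ => mul_nonneg (hA i j) (hx j)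
  set c : V → ℝ := fun w => if w ∈ C then (adjMat H *ᵥ u) w / l else 0 with hc
  have hc0 : 0 ≤ c := fun w => by
    simp only [hc]
    split_ifs
    exacts [div_nonneg (hmul hu w) hl.le, le_rfl]
  have c_dot_Au : c ⬝ᵥ adjMat H *ᵥ u = (∑ w ∈ C, (adjMat H *ᵥ u) w ^ 2) / l := by
    simp only [dotProduct, hc, ite_mul, zero_mul, Finset.sum_ite_mem, Finset.univ_inter,
      Finset.sum_div]
    exact Finset.sum_congr rfl fun w _ => by ring
  have u_dot_Ac : u ⬝ᵥ adjMat H *ᵥ c = c ⬝ᵥ adjMat H *ᵥ u := by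
    rw [dotProduct_mulVec, ← mulVec_transpose, dotProduct_comm,
      show (adjMat H)ᵀ = adjMat H from adjMat_isHermitian H]
  have c_dot_Ac : 0 ≤ c ⬝ᵥ adjMat H *ᵥ c :=
    Finset.sum_nonneg fun w _ => mul_nonneg (hc0 w) (hmul hc0 w)
  have u_dot_c : u ⬝ᵥ c = 0 := Finset.sum_eq_zero fun w _ => by
    by_cases hw : w ∈ C <;> simp [hc, hw, huC]
  have c_dot_c : l * (c ⬝ᵥ c) = (∑ w ∈ C, (adjMat H *ᵥ u) w ^ 2) / l := by
    simp only [dotProduct, hc, mul_ite, ite_mul, zero_mul, mul_zero, Finset.sum_ite_mem,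
      Finset.univ_inter, Finset.inter_self, Finset.mul_sum, Finset.sum_div]
    exact Finset.sum_congr rfl fun w _ => by field_simp
  refine lt_specRad_of_mul_dotProduct_lt (x := u + c) ?_
  simp only [mulVec_add, add_dotProduct, dotProduct_add, dotProduct_comm c u]
  rw [u_dot_c, u_dot_Ac, c_dot_Au]
  linarith

end SpectralRadius

section RootedTree

variable {V : Type*} {T : SimpleGraph V} {r x u u' : V}

/-- `u` is the parent of `x` in the tree `T` rooted at `r`. -/
def IsParent (T : SimpleGraph V) (r x u : V) : Prop :=
  T.Adj x u ∧ T.dist u r < T.dist x r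

lemma IsParent.adj (h : IsParent T r x u) : T.Adj x u := h.1

lemma IsParent.dist_lt (h : IsParent T r x u) : T.dist u r < T.dist x r := h.2

lemma IsParent.ne_root (h : IsParent T r x u) : x ≠ r := by
  rintro rfl
  simpa using h.dist_lt

lemma IsParent.asymm (h : IsParent T r x u) : ¬ IsParent T r u x := fun h' =>
  h.dist_lt.asymm h'.dist_lt

lemma exists_isParent (hT : T.Connected) (hx : x ≠ r) : ∃ u, IsParent T r x u := by
  obtain ⟨p, hp⟩ := (hT.preconnected x r).exists_walk_length_eq_dist
  cases p with
  | nil => exact absurd rfl hx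
  | @cons _ u _ hadj q =>
    refine ⟨u, hadj, ?_⟩
    have := T.dist_le q
    rw [SimpleGraph.Walk.length_cons] at hp
    omega

lemma isParent_root (hT : T.Connected) (h : T.Adj x r) : IsParent T r x r :=
  ⟨h, by simpa using hT.pos_dist_of_ne h.ne⟩

lemma IsParent.unique (hT : T.IsTree) (h : IsParent T r x u) (h' : IsParent T r x u') :
    u = u' := by
  have path_through : ∀ u, IsParent T r x u → ∃ p : T.Path x r, p.1.snd = u := by
    intro u h
    obtain ⟨q, hq⟩ := (hT.connected.preconnected u r).exists_walk_length_eq_dist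
    refine ⟨⟨.cons h.adj q, SimpleGraph.Walk.isPath_of_length_eq_dist _ ?_⟩, by simp⟩
    have h1 := T.dist_le (.cons h.adj q)
    have := h.dist_lt
    rw [SimpleGraph.Walk.length_cons] at h1 ⊢
    omega
  obtain ⟨p, rfl⟩ := path_through u h
  obtain ⟨p', rfl⟩ := path_through u' h'
  rw [(hT.isAcyclic.subsingleton_path _ _).elim p p']

lemma isParent_or_isParent (hT : T.IsTree) (r : V) (h : T.Adj x u) :
    IsParent T r x u ∨ IsParent T r u x := by
  have := hT.dist_eq_dist_add_one_of_adj r h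
  rw [T.dist_comm (u := r), T.dist_comm (u := r)] at this
  exact this.imp (fun _ => ⟨h, by omega⟩) fun _ => ⟨h.symm, by omega⟩

lemma card_filter_adj (hT : T.IsTree) (r x : V) (A : Finset V) :
    #{u ∈ A | T.Adj x u} = #{u ∈ A | IsParent T r x u} + #{u ∈ A | IsParent T r u x} := by
  rw [← Finset.card_union_of_disjoint, ← Finset.filter_or]
  · congr 1
    refine Finset.filter_congr fun u _ => ⟨isParent_or_isParent hT r, ?_⟩
    rintro (h | h)
    exacts [h.adj, h.adj.symm]
  · exact Finset.disjoint_filter.2 fun u _ h => h.asymm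

variable [Fintype V]

/-- The children of the vertices of `A` in the tree `T` rooted at `r`. -/
noncomputable def children (T : SimpleGraph V) (r : V) (A : Finset V) : Finset V :=
  {x | ∃ u ∈ A, IsParent T r x u}

lemma mem_children {A : Finset V} : x ∈ children T r A ↔ ∃ u ∈ A, IsParent T r x u := by
  simp [children]

lemma card_inter_children (hT : T.IsTree) (r : V) (A B : Finset V) :
    #(B ∩ children T r A) = ∑ x ∈ B, #{u ∈ A | IsParent T r x u} := by
  rw [← Finset.filter_mem_eq_inter, Finset.card_filter]
  refine Finset.sum_congr rfl fun x _ => ?_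
  split_ifs with hx
  · obtain ⟨u, hu, hxu⟩ := mem_children.1 hx
    refine (Finset.card_eq_one.2 ⟨u, ?_⟩).symm
    ext u'
    simp only [Finset.mem_filter, Finset.mem_singleton]
    exact ⟨fun h => h.2.unique hT hxu, by rintro rfl; exact ⟨hu, hxu⟩⟩
  · refine (Finset.card_eq_zero.2 (Finset.filter_eq_empty_iff.2 fun u hu h => ?_)).symm
    exact hx (mem_children.2 ⟨u, hu, h⟩)

lemma sum_card_filter_adj (hT : T.IsTree) (r : V) (A : Finset V) :
    ∑ x ∈ A, #{u ∈ A | T.Adj x u} = 2 * #(A ∩ children T r A) := by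
  have double_count : ∑ x ∈ A, #{u ∈ A | IsParent T r u x} =
      ∑ x ∈ A, #{u ∈ A | IsParent T r x u} := by
    simp only [Finset.card_filter]
    exact Finset.sum_comm
  rw [Finset.sum_congr rfl fun x _ => card_filter_adj hT r x A, Finset.sum_add_distrib,
    double_count, card_inter_children hT, two_mul]

lemma degree_eq_card_isParent_add (hT : T.IsTree) (r u : V) :
    T.degree u = #{x | IsParent T r x u} + if u = r then 0 else 1 := by
  rw [← SimpleGraph.card_neighborFinset_eq_degree, SimpleGraph.neighborFinset_eq_filter,
    card_filter_adj hT r, add_comm]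
  congr 1
  have card_parents := card_inter_children hT r univ {u}
  rw [Finset.sum_singleton] at card_parents
  rw [← card_parents]
  split_ifs with hu
  · refine Finset.card_eq_zero.2 (Finset.eq_empty_of_forall_notMem fun x hx => ?_)
    obtain ⟨hx, hxu⟩ := Finset.mem_inter.1 hx
    obtain ⟨w, -, h⟩ := mem_children.1 hxu
    exact h.ne_root (Finset.mem_singleton.1 hx ▸ hu)
  · obtain ⟨w, hw⟩ := exists_isParent hT.connected hu
    rw [Finset.inter_eq_left.2, Finset.card_singleton]
    exact Finset.singleton_subset_iff.2 (mem_children.2 ⟨w, mem_univ _, hw⟩)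

lemma card_children_add_card_erase (hT : T.IsTree) (r : V) (A : Finset V) :
    #(children T r A) + #(A.erase r) = ∑ u ∈ A, T.degree u := by
  rw [Finset.sum_congr rfl fun u _ => degree_eq_card_isParent_add hT r u,
    Finset.sum_add_distrib]
  congr 1
  · rw [← Finset.univ_inter (children T r A), card_inter_children hT]
    simp only [Finset.card_filter]
    exact Finset.sum_comm
  · simp [Finset.sum_ite, Finset.filter_ne']

end RootedTree

section EdgeExchange

variable {V : Type*} {T : SimpleGraph V} {a b v w x : V}

/-- Delete the edge `ab` of `T` and add the edge `vw`. -/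
def edgeExchange (T : SimpleGraph V) (a b v w : V) : SimpleGraph V :=
  T.deleteEdges {s(a, b)} ⊔ SimpleGraph.edge v w

lemma edgeExchange_le {G : SimpleGraph V} (hTG : T ≤ G) (h : G.Adj v w) :
    edgeExchange T a b v w ≤ G :=
  sup_le ((T.deleteEdges_le _).trans hTG) ((SimpleGraph.edge_le_iff _).2 (.inr h))

lemma adj_edgeExchange_iff {c c' : V} (hab : s(c, c') ≠ s(a, b)) (hvw : s(c, c') ≠ s(v, w)) :
    (edgeExchange T a b v w).Adj c c' ↔ T.Adj c c' := by
  simp [edgeExchange, SimpleGraph.adj_edge, hab, hvw.symm]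

lemma reachable_deleteEdges_of_dist_lt (hT : T.Connected) (h : IsParent T v a b)
    (hx : T.dist x v < T.dist a v) : (T.deleteEdges {s(a, b)}).Reachable x v := by
  induction hn : T.dist x v using Nat.strong_induction_on generalizing x with
  | _ n ih =>
    obtain rfl | hxv := eq_or_ne x v
    · exact .refl _
    obtain ⟨u, hu⟩ := exists_isParent hT hxv
    have kept : (T.deleteEdges {s(a, b)}).Adj x u := by
      refine SimpleGraph.deleteEdges_adj.2 ⟨hu.adj, fun he => ?_⟩
      have := hu.dist_lt
      obtain ⟨rfl, rfl⟩ | ⟨rfl, rfl⟩ := Sym2.eq_iff.1 he <;> omega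
    exact kept.reachable.trans (ih _ (hn ▸ hu.dist_lt) (hu.dist_lt.trans hx) rfl)

lemma edgeExchange_isTree (hT : T.IsTree) (hv : IsParent T v a b) (hw : IsParent T w b a) :
    (edgeExchange T a b v w).IsTree := by
  set F := T.deleteEdges {s(a, b)} with hF
  have b_v : F.Reachable b v := reachable_deleteEdges_of_dist_lt hT.connected hv hv.dist_lt
  have a_w : F.Reachable a w := by
    rw [hF, Sym2.eq_swap]
    exact reachable_deleteEdges_of_dist_lt hT.connected hw hw.dist_lt
  have not_v_w : ¬ F.Reachable v w := fun h =>
    SimpleGraph.isBridge_iff.1 (SimpleGraph.isAcyclic_iff_forall_isBridge.1 hT.isAcyclic hv.adj)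
      (a_w.trans (b_v.trans h).symm)
  have v_w : (edgeExchange T a b v w).Adj v w :=
    .inr ((SimpleGraph.edge_adj ..).2 ⟨.inl ⟨rfl, rfl⟩, fun h => not_v_w (h ▸ .refl _)⟩)
  have a_b : (edgeExchange T a b v w).Reachable a b :=
    (a_w.mono le_sup_left).trans (v_w.symm.reachable.trans (b_v.mono le_sup_left).symm)
  have edge_reachable : ∀ {x y}, T.Adj x y → (edgeExchange T a b v w).Reachable x y := by
    intro x y h
    by_cases he : s(x, y) = s(a, b)
    · obtain ⟨rfl, rfl⟩ | ⟨rfl, rfl⟩ := Sym2.eq_iff.1 he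
      exacts [a_b, a_b.symm]
    · exact SimpleGraph.Adj.reachable (.inl (SimpleGraph.deleteEdges_adj.2 ⟨h, he⟩))
  have := hT.connected.nonempty
  refine ⟨.mk fun x y => ?_,
    (hT.isAcyclic.anti (T.deleteEdges_le _)).sup_edge_of_not_reachable not_v_w⟩
  obtain ⟨p⟩ := hT.connected.preconnected x y
  induction p with
  | nil => exact .refl _
  | cons h _ ih => exact (edge_reachable h).trans ih

lemma degree_sup_edge {F : SimpleGraph V} (hvw : v ≠ w) (hn : ¬ F.Adj v w) (u : V)
    [Fintype (F.neighborSet u)] [Fintype ((F ⊔ SimpleGraph.edge v w).neighborSet u)] :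
    (F ⊔ SimpleGraph.edge v w).degree u = F.degree u + if u = v ∨ u = w then 1 else 0 := by
  have hn' : ¬ F.Adj w v := fun h => hn h.symm
  simp only [← SimpleGraph.card_neighborFinset_eq_degree]
  split_ifs with hu
  · obtain rfl | rfl := hu
    · rw [← Finset.card_insert_of_notMem (a := w) (by simpa using hn)]
      congr 1
      ext y
      simp only [SimpleGraph.mem_neighborFinset, SimpleGraph.sup_adj, SimpleGraph.edge_adj,
        Finset.mem_insert]
      grind
    · rw [← Finset.card_insert_of_notMem (a := v) (by simpa using hn')]
      congr 1
      ext y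
      simp only [SimpleGraph.mem_neighborFinset, SimpleGraph.sup_adj, SimpleGraph.edge_adj,
        Finset.mem_insert]
      grind
  · simp only [not_or] at hu
    congr 1
    ext y
    simp [SimpleGraph.edge_adj, hu]

variable [Fintype V]

lemma degree_edgeExchange (hab : T.Adj a b) (hvw : v ≠ w) (hn : ¬ T.Adj v w) (u : V) :
    (edgeExchange T a b v w).degree u + (if u = a ∨ u = b then 1 else 0) =
      T.degree u + if u = v ∨ u = w then 1 else 0 := by
  have restore : T.deleteEdges {s(a, b)} ⊔ SimpleGraph.edge a b = T := by
    ext x y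
    simp only [SimpleGraph.sup_adj, SimpleGraph.deleteEdges_adj, SimpleGraph.adj_edge,
      Set.mem_singleton_iff]
    refine ⟨?_, fun h => ?_⟩
    · rintro (h | ⟨h, -⟩)
      · exact h.1
      · rwa [← SimpleGraph.mem_edgeSet, ← h]
    · by_cases he : s(x, y) = s(a, b)
      exacts [.inr ⟨he.symm, h.ne⟩, .inl ⟨h, he⟩]
  have h : T.degree u = (T.deleteEdges {s(a, b)}).degree u + if u = a ∨ u = b then 1 else 0 := by
    rw [← degree_sup_edge hab.ne (by simp)]
    congr!
    exact restore.symm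
  unfold edgeExchange
  rw [degree_sup_edge hvw fun h => hn (T.deleteEdges_le _ h)]
  omega

end EdgeExchange

section MinLeafTree

variable {V : Type*} {G T : SimpleGraph V} {b u v w w' x : V}

lemma forall_of_adj_closed (hT : T.Connected) {P : V → Prop} (hv : P v)
    (h : ∀ x u, P x → T.Adj x u → P u) (x : V) : P x := by
  obtain ⟨p⟩ := hT.preconnected v x
  induction p with
  | nil => exact hv
  | cons huv _ ih => exact ih (h _ _ hv huv)

/-- `b` and `x` are consecutive vertices, in this order, of the path from `v` to `w` in the
tree `T`. -/
def ConsecutiveOnPath (T : SimpleGraph V) (v w b x : V) : Prop :=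
  IsParent T v x b ∧ IsParent T w b x

lemma ConsecutiveOnPath.reverse (h : ConsecutiveOnPath T v w b x) :
    ConsecutiveOnPath T w v x b :=
  ⟨h.2, h.1⟩

lemma ConsecutiveOnPath.exists_next (hT : T.IsTree) (h : ConsecutiveOnPath T v w b x)
    (hx : x ≠ w) : ∃ c, ConsecutiveOnPath T v w x c ∧ c ≠ b := by
  obtain ⟨c, hc⟩ := exists_isParent hT.connected hx
  have ne : c ≠ b := by
    rintro rfl
    exact h.2.asymm hc
  refine ⟨c, ⟨(isParent_or_isParent hT v hc.adj).resolve_left fun h' => ?_, hc⟩, ne⟩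
  exact ne (h'.unique hT h.1)

lemma exists_consecutiveOnPath_left (hT : T.IsTree) (hvw : v ≠ w) :
    ∃ c, ConsecutiveOnPath T v w v c := by
  obtain ⟨c, hc⟩ := exists_isParent hT.connected hvw
  exact ⟨c, isParent_root hT.connected hc.adj.symm, hc⟩

variable [Fintype V]

lemma eq_of_adj_of_degree_eq_one (hx : T.degree x = 1) (hu : T.Adj x u) (hw : T.Adj x w) :
    u = w :=
  (SimpleGraph.degree_eq_one_iff_existsUnique_adj.1 hx).unique hu hw

lemma two_le_degree_of_adj (hu : T.Adj x u) (hw : T.Adj x w) (h : u ≠ w) : 2 ≤ T.degree x :=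
  Finset.one_lt_card.2 ⟨u, by simpa using hu, w, by simpa using hw, h⟩

lemma three_le_degree_of_adj (hu : T.Adj x u) (hv : T.Adj x v) (hw : T.Adj x w) (huv : u ≠ v)
    (huw : u ≠ w) (hvw : v ≠ w) : 3 ≤ T.degree x :=
  Finset.two_lt_card.2
    ⟨u, by simpa using hu, v, by simpa using hv, w, by simpa using hw, huv, huw, hvw⟩

lemma isParent_of_degree_eq_one (hT : T.Connected) (hv : T.degree v = 1) (h : T.Adj v w)
    (hx : v ≠ x) : IsParent T x v w := by
  obtain ⟨u, hu⟩ := exists_isParent hT hx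
  rwa [eq_of_adj_of_degree_eq_one hv h hu.adj]

/-- The leaves of a tree, that is, its vertices of degree one. -/
noncomputable def leaves (T : SimpleGraph V) : Finset V := {v | T.degree v = 1}

lemma mem_leaves : v ∈ leaves T ↔ T.degree v = 1 := by simp [leaves]

lemma ConsecutiveOnPath.two_le_degree (hT : T.IsTree) (h : ConsecutiveOnPath T v w b x)
    (hx : x ≠ w) : 2 ≤ T.degree x := by
  obtain ⟨c, hc, hcb⟩ := h.exists_next hT hx
  exact two_le_degree_of_adj hc.2.adj h.1.adj hcb

lemma ConsecutiveOnPath.of_adj (hT : T.IsTree) (hw : T.degree w = 1)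
    (h : ConsecutiveOnPath T v w b x) (hx : T.degree x ≤ 2) (hu : T.Adj x u) :
    u = b ∨ ConsecutiveOnPath T v w x u := by
  obtain rfl | hxw := eq_or_ne x w
  · exact .inl (eq_of_adj_of_degree_eq_one hw hu h.1.adj)
  obtain ⟨c, hc, hcb⟩ := h.exists_next hT hxw
  by_contra! hne
  have := three_le_degree_of_adj hc.2.adj h.1.adj hu hcb (fun he => hne.2 (he ▸ hc)) hne.1.symm
  omega

lemma exists_consecutiveOnPath_three_le_degree (hT : T.IsTree) (h3 : 3 ≤ #(leaves T))
    (hv : T.degree v = 1) (hw : T.degree w = 1) (hvw : v ≠ w) :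
    ∃ b x, ConsecutiveOnPath T v w b x ∧ 3 ≤ T.degree x := by
  by_contra! hdeg
  have path_covers : ∀ x, ∃ b, ConsecutiveOnPath T v w b x ∨ ConsecutiveOnPath T v w x b := by
    refine forall_of_adj_closed hT.connected (v := v)
      ((exists_consecutiveOnPath_left hT hvw).imp fun _ => .inr) ?_
    rintro x u ⟨b, h | h⟩ hxu
    · obtain rfl | hu := h.of_adj hT hw (Nat.le_of_lt_succ (hdeg _ _ h)) hxu
      exacts [⟨x, .inr h⟩, ⟨x, .inl hu⟩]
    · obtain rfl | hxv := eq_or_ne x v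
      · rw [eq_of_adj_of_degree_eq_one hv hxu h.2.adj]
        exact ⟨x, .inl h⟩
      · obtain ⟨c, hc, -⟩ := h.reverse.exists_next hT hxv
        obtain rfl | hu := h.reverse.of_adj hT hv (Nat.le_of_lt_succ (hdeg _ _ hc.reverse)) hxu
        exacts [⟨x, .inl h⟩, ⟨x, .inr hu.reverse⟩]
  have leaves_subset : leaves T ⊆ {v, w} := by
    intro x hx
    rw [mem_leaves] at hx
    by_contra hne
    simp only [Finset.mem_insert, Finset.mem_singleton, not_or] at hne
    obtain ⟨b, h | h⟩ := path_covers x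
    · have := h.two_le_degree hT hne.2
      omega
    · have := h.reverse.two_le_degree hT hne.1
      omega
  have := Finset.card_le_card leaves_subset
  have := Finset.card_le_two (a := v) (b := w)
  omega

/-- `T` is a spanning tree of `G` with the least possible number of leaves. -/
structure IsMinLeafTree (G T : SimpleGraph V) : Prop where
  le : T ≤ G
  isTree : T.IsTree
  card_leaves_le : ∀ T' ≤ G, T'.IsTree → #(leaves T) ≤ #(leaves T')

lemma IsMinLeafTree.not_adj_of_leaf (hM : IsMinLeafTree G T) (h3 : 3 ≤ #(leaves T))
    (hv : T.degree v = 1) (hw : T.degree w = 1) : ¬ G.Adj v w := by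
  intro hG
  obtain ⟨b, x, hbx, hx⟩ := exists_consecutiveOnPath_three_le_degree hM.isTree h3 hv hw hG.ne
  have x_ne_v : x ≠ v := by rintro rfl; omega
  have x_ne_w : x ≠ w := by rintro rfl; omega
  have not_adj : ¬ T.Adj v w := fun h => by
    have v_w := isParent_of_degree_eq_one hM.isTree.connected hv h x_ne_v.symm
    exact v_w.asymm (isParent_of_degree_eq_one hM.isTree.connected hw h.symm x_ne_w.symm)
  have leaves_subset :
      leaves (edgeExchange T x b v w) ⊆ insert b (((leaves T).erase v).erase w) := by
    intro u hu
    have deg_u := degree_edgeExchange hbx.1.adj hG.ne not_adj u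
    rw [mem_leaves.1 hu] at deg_u
    simp only [Finset.mem_insert, Finset.mem_erase, mem_leaves]
    grind
  have := Finset.card_le_card leaves_subset
  have := hM.card_leaves_le _ (edgeExchange_le hM.le hG) (edgeExchange_isTree hM.isTree hbx.1 hbx.2)
  have := Finset.card_insert_le b (((leaves T).erase v).erase w)
  have := Finset.card_erase_add_one (mem_leaves.2 hv)
  have := Finset.card_erase_add_one (Finset.mem_erase.2 ⟨hG.ne.symm, mem_leaves.2 hw⟩)
  omega

/-- `v` is a leaf of `T`, `vw` is an edge of `G`, and `w' ≠ v` is the neighbour of `w` on the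
path of `T` from `w` to `v`. Replacing `ww'` by `vw` then makes `w'` the new leaf. -/
structure IsRotation (G T : SimpleGraph V) (v w w' : V) : Prop where
  leaf : T.degree v = 1
  adj : G.Adj v w
  parent : IsParent T v w w'
  ne : w' ≠ v

namespace IsRotation

lemma consecutive (h : IsRotation G T v w w') (hT : T.IsTree) :
    ConsecutiveOnPath T v w w' w :=
  ⟨h.parent, isParent_root hT.connected h.parent.adj.symm⟩

lemma not_adj (h : IsRotation G T v w w') (hT : T.IsTree) : ¬ T.Adj v w := fun hvw =>
  h.ne (h.parent.unique hT (isParent_root hT.connected hvw.symm))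

lemma degree_add_ite (h : IsRotation G T v w w') (hT : T.IsTree) (u : V) :
    (edgeExchange T w w' v w).degree u + (if u = w' then 1 else 0) =
      T.degree u + if u = v then 1 else 0 := by
  have := degree_edgeExchange h.parent.adj h.adj.ne (h.not_adj hT) u
  grind [h.parent.adj.ne, h.adj.ne]

lemma degree_of_ne (h : IsRotation G T v w w') (hT : T.IsTree) (hv : u ≠ v) (hw' : u ≠ w') :
    (edgeExchange T w w' v w).degree u = T.degree u := by
  simpa [hv, hw'] using h.degree_add_ite hT u

lemma leaves_subset (h : IsRotation G T v w w') (hT : T.IsTree) :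
    leaves (edgeExchange T w w' v w) ⊆ insert w' ((leaves T).erase v) := by
  intro u hu
  have := h.degree_add_ite hT u
  rw [mem_leaves.1 hu] at this
  simp only [Finset.mem_insert, Finset.mem_erase, mem_leaves]
  grind [h.leaf]

lemma card_insert_erase_leaves_le (h : IsRotation G T v w w') :
    #(insert w' ((leaves T).erase v)) ≤ #(leaves T) := by
  have := Finset.card_insert_le w' ((leaves T).erase v)
  have := Finset.card_erase_add_one (mem_leaves.2 h.leaf)
  omega

lemma isMinLeafTree (h : IsRotation G T v w w') (hM : IsMinLeafTree G T) :
    IsMinLeafTree G (edgeExchange T w w' v w) where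
  le := edgeExchange_le hM.le h.adj
  isTree := edgeExchange_isTree hM.isTree h.parent (h.consecutive hM.isTree).2
  card_leaves_le T' hT' hT'' := ((Finset.card_le_card (h.leaves_subset hM.isTree)).trans
    h.card_insert_erase_leaves_le).trans (hM.card_leaves_le T' hT' hT'')

lemma degree_new_leaf (h : IsRotation G T v w w') (hM : IsMinLeafTree G T) :
    (edgeExchange T w w' v w).degree w' = 1 := by
  by_contra hw'
  have subset_erase : leaves (edgeExchange T w w' v w) ⊆ (leaves T).erase v := fun u hu =>
    Finset.mem_of_mem_insert_of_ne (h.leaves_subset hM.isTree hu) fun he =>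
      hw' (mem_leaves.1 (he ▸ hu))
  have := Finset.card_le_card subset_erase
  have := hM.card_leaves_le _ (h.isMinLeafTree hM).le (h.isMinLeafTree hM).isTree
  have := Finset.card_erase_add_one (mem_leaves.2 h.leaf)
  omega

lemma degree_eq_two (h : IsRotation G T v w w') (hM : IsMinLeafTree G T) : T.degree w' = 2 := by
  simpa [h.ne, h.degree_new_leaf hM] using (h.degree_add_ite hM.isTree w').symm

end IsRotation

lemma exists_isMinLeafTree (hG : G.Connected) : ∃ T, IsMinLeafTree G T := by
  obtain ⟨T₀, hT₀, hT₀'⟩ := hG.exists_isTree_le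
  obtain ⟨T, ⟨hTG, hT⟩, hmin⟩ := Set.exists_min_image {T | T ≤ G ∧ T.IsTree}
    (fun T => #(leaves T)) (Set.toFinite _) ⟨T₀, hT₀, hT₀'⟩
  exact ⟨T, hTG, hT, fun T' h h' => hmin T' ⟨h, h'⟩⟩

end MinLeafTree

/-- A spanning tree of `G` with the least number of leaves, at least three, together with a leaf
whose degree in `G` is as large as possible among all leaves of all such trees. -/
structure ExtremalTree {V : Type*} [Fintype V] (G : SimpleGraph V) where
  tree : SimpleGraph V
  root : V
  isMinLeafTree : IsMinLeafTree G tree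
  three_le_card_leaves : 3 ≤ #(leaves tree)
  root_leaf : tree.degree root = 1
  degree_le : ∀ T v, IsMinLeafTree G T → T.degree v = 1 → G.degree v ≤ G.degree root

namespace ExtremalTree

variable {V : Type*} [Fintype V] {G T : SimpleGraph V} {X : ExtremalTree G} {u v w w' x z : V}

/-- `(T, v)` is obtained from the extremal tree and its root by a sequence of rotations, each
moving the distinguished leaf. -/
inductive Reaches (X : ExtremalTree G) : SimpleGraph V → V → Prop
  | refl : X.Reaches X.tree X.root
  | rotate {T : SimpleGraph V} {v w w' : V} :
      X.Reaches T v → IsRotation G T v w w' → X.Reaches (edgeExchange T w w' v w) w'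

namespace Reaches

lemma isMinLeafTree (h : X.Reaches T v) : IsMinLeafTree G T := by
  induction h with
  | refl => exact X.isMinLeafTree
  | rotate _ hrot ih => exact hrot.isMinLeafTree ih

lemma isTree (h : X.Reaches T v) : T.IsTree := h.isMinLeafTree.isTree

lemma leaf (h : X.Reaches T v) : T.degree v = 1 := by
  cases h with
  | refl => exact X.root_leaf
  | rotate h hrot => exact hrot.degree_new_leaf h.isMinLeafTree

lemma degree_add_ite (h : X.Reaches T v) (u : V) :
    T.degree u + (if u = v then 1 else 0) = X.tree.degree u + if u = X.root then 1 else 0 := by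
  induction h with
  | refl => rfl
  | rotate h hrot ih => rw [hrot.degree_add_ite h.isTree, ih]

end Reaches

/-- The vertices to which the root can be moved by rotations. -/
noncomputable def orbit (X : ExtremalTree G) : Finset V := {v | ∃ T, X.Reaches T v}

/-- The leaves of the extremal tree other than its root. -/
noncomputable def fixedLeaves (X : ExtremalTree G) : Finset V := (leaves X.tree).erase X.root

/-- The vertices that are neither fixed leaves nor in the orbit of the root. -/
noncomputable def core (X : ExtremalTree G) : Finset V := (X.fixedLeaves ∪ X.orbit)ᶜ

/-- A tree in which the vertex `v` of the orbit has become the root; the extremal tree itself if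
`v` is not in the orbit. -/
noncomputable def treeAt (X : ExtremalTree G) (v : V) : SimpleGraph V :=
  if h : ∃ T, X.Reaches T v then h.choose else X.tree

lemma mem_orbit : v ∈ X.orbit ↔ ∃ T, X.Reaches T v := by simp [orbit]

lemma root_mem_orbit : X.root ∈ X.orbit := mem_orbit.2 ⟨_, .refl⟩

lemma mem_core : v ∈ X.core ↔ v ∉ X.fixedLeaves ∧ v ∉ X.orbit := by simp [core]

lemma mem_fixedLeaves : z ∈ X.fixedLeaves ↔ z ≠ X.root ∧ X.tree.degree z = 1 := by
  simp [fixedLeaves, mem_leaves]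

lemma card_fixedLeaves : #X.fixedLeaves + 1 = #(leaves X.tree) :=
  Finset.card_erase_add_one (mem_leaves.2 X.root_leaf)

lemma reaches_treeAt (hv : v ∈ X.orbit) : X.Reaches (X.treeAt v) v := by
  have h := mem_orbit.1 hv
  rw [treeAt, dif_pos h]
  exact h.choose_spec

lemma treeAt_of_notMem (hv : v ∉ X.orbit) : X.treeAt v = X.tree :=
  dif_neg fun h => hv (mem_orbit.2 h)

lemma exists_reaches_treeAt (X : ExtremalTree G) (v : V) :
    ∃ u ∈ X.orbit, X.Reaches (X.treeAt v) u := by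
  by_cases hv : v ∈ X.orbit
  · exact ⟨v, hv, reaches_treeAt hv⟩
  · exact ⟨X.root, root_mem_orbit, treeAt_of_notMem hv ▸ .refl⟩

lemma isMinLeafTree_treeAt (X : ExtremalTree G) (v : V) : IsMinLeafTree G (X.treeAt v) :=
  let ⟨_, _, h⟩ := X.exists_reaches_treeAt v
  h.isMinLeafTree

lemma isTree_treeAt (X : ExtremalTree G) (v : V) : (X.treeAt v).IsTree :=
  (X.isMinLeafTree_treeAt v).isTree

lemma degree_add_ite_of_mem_orbit (hu : u ∈ X.orbit) :
    X.tree.degree u + (if u = X.root then 1 else 0) = 2 := by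
  have h := reaches_treeAt hu
  simpa [h.leaf] using (h.degree_add_ite u).symm

lemma notMem_orbit_of_mem_fixedLeaves (hz : z ∈ X.fixedLeaves) : z ∉ X.orbit := fun h => by
  have := degree_add_ite_of_mem_orbit h
  simp [mem_fixedLeaves.1 hz] at this

lemma disjoint_fixedLeaves_orbit (X : ExtremalTree G) : Disjoint X.fixedLeaves X.orbit :=
  Finset.disjoint_left.2 fun _ => notMem_orbit_of_mem_fixedLeaves

lemma degree_treeAt_of_notMem_orbit (v : V) (hu : u ∉ X.orbit) :
    (X.treeAt v).degree u = X.tree.degree u := by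
  obtain ⟨r, hr, h⟩ := X.exists_reaches_treeAt v
  have hur : u ≠ r := fun he => hu (he ▸ hr)
  have huroot : u ≠ X.root := fun he => hu (he ▸ root_mem_orbit)
  simpa [hur, huroot] using h.degree_add_ite u

lemma degree_treeAt_of_mem_fixedLeaves (v : V) (hz : z ∈ X.fixedLeaves) :
    (X.treeAt v).degree z = 1 := by
  rw [degree_treeAt_of_notMem_orbit v (notMem_orbit_of_mem_fixedLeaves hz),
    (mem_fixedLeaves.1 hz).2]

lemma degree_treeAt_self (hv : v ∈ X.fixedLeaves ∪ X.orbit) : (X.treeAt v).degree v = 1 := by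
  rcases Finset.mem_union.1 hv with hv | hv
  exacts [degree_treeAt_of_mem_fixedLeaves v hv, (reaches_treeAt hv).leaf]

lemma not_adj_of_mem_fixedLeaves (hz : z ∈ X.fixedLeaves) (hv : v ∈ X.fixedLeaves ∪ X.orbit) :
    ¬ G.Adj z v := by
  have h := X.isMinLeafTree_treeAt v
  exact h.not_adj_of_leaf
    (X.three_le_card_leaves.trans (X.isMinLeafTree.card_leaves_le _ h.le h.isTree))
    (degree_treeAt_of_mem_fixedLeaves v hz) (degree_treeAt_self hv)

lemma parent_mem_orbit (hv : v ∈ X.orbit) (hvw : G.Adj v w)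
    (hw : IsParent (X.treeAt v) v w w') : w' ∈ X.orbit := by
  have h := reaches_treeAt hv
  obtain rfl | hne := eq_or_ne w' v
  · exact hv
  · exact mem_orbit.2 ⟨_, h.rotate ⟨h.leaf, hvw, hw, hne⟩⟩

lemma Reaches.adj_iff (h : X.Reaches T v) (hw : w ∉ X.orbit) (hw' : w' ∉ X.orbit) :
    T.Adj w w' ↔ X.tree.Adj w w' := by
  induction h with
  | refl => rfl
  | @rotate T v c c' h hrot ih =>
    have hv : v ∈ X.orbit := mem_orbit.2 ⟨_, h⟩
    have hc' : c' ∈ X.orbit := mem_orbit.2 ⟨_, h.rotate hrot⟩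
    rw [← ih, adj_edgeExchange_iff] <;> intro he <;>
      obtain ⟨rfl, rfl⟩ | ⟨rfl, rfl⟩ := Sym2.eq_iff.1 he <;> contradiction

lemma adj_treeAt_iff (v : V) (hw : w ∈ X.core) (hw' : w' ∈ X.core) :
    (X.treeAt v).Adj w w' ↔ X.tree.Adj w w' :=
  let ⟨_, _, h⟩ := X.exists_reaches_treeAt v
  h.adj_iff (mem_core.1 hw).2 (mem_core.1 hw').2

/-- The neighbours in the core of the vertex `w` of the extremal tree. -/
noncomputable def coreNbrs (X : ExtremalTree G) (w : V) : Finset V :=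
  {w' ∈ X.core | X.tree.Adj w w'}

lemma mem_coreNbrs : w' ∈ X.coreNbrs w ↔ w' ∈ X.core ∧ X.tree.Adj w w' := by simp [coreNbrs]

/-- The number of edges of the extremal tree inside the core, each counted at its endpoint
further from the root. -/
noncomputable def coreEdges (X : ExtremalTree G) : ℕ :=
  #(X.core ∩ children X.tree X.root X.core)

lemma sum_card_coreNbrs (X : ExtremalTree G) :
    ∑ w ∈ X.core, #(X.coreNbrs w) = 2 * X.coreEdges :=
  sum_card_filter_adj X.isMinLeafTree.isTree X.root X.core

lemma card_core_inter_children (v : V) :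
    #(X.core ∩ children (X.treeAt v) v X.core) = X.coreEdges := by
  have h := sum_card_filter_adj (X.isTree_treeAt v) v X.core
  have same_adj : ∀ w ∈ X.core, #{w' ∈ X.core | (X.treeAt v).Adj w w'} = #(X.coreNbrs w) :=
    fun w hw => congrArg _ (Finset.filter_congr fun w' hw' => adj_treeAt_iff v hw hw')
  rw [Finset.sum_congr rfl same_adj, X.sum_card_coreNbrs] at h
  omega

lemma card_children_orbit (hv : v ∈ X.orbit) :
    #(children (X.treeAt v) v X.orbit) = #X.orbit := by
  have h := reaches_treeAt hv
  have degree_eq : ∀ u ∈ X.orbit, (X.treeAt v).degree u + (if u = v then 1 else 0) = 2 :=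
    fun u hu => (h.degree_add_ite u).trans (degree_add_ite_of_mem_orbit hu)
  have sum_degree := Finset.sum_congr rfl degree_eq
  rw [Finset.sum_add_distrib, Finset.sum_ite_eq' X.orbit v, if_pos hv, Finset.sum_const,
    smul_eq_mul] at sum_degree
  have := card_children_add_card_erase h.isTree v X.orbit
  have := Finset.card_erase_add_one hv
  omega

lemma neighborFinset_subset_children (hv : v ∈ X.orbit) :
    G.neighborFinset v ⊆ children (X.treeAt v) v X.orbit := by
  intro w hw
  rw [SimpleGraph.mem_neighborFinset] at hw
  obtain ⟨w', hw'⟩ := exists_isParent (X.isTree_treeAt v).connected hw.ne.symm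
  exact mem_children.2 ⟨w', parent_mem_orbit hv hw hw', hw'⟩

lemma degree_le_card_orbit (hv : v ∈ X.fixedLeaves ∪ X.orbit) : G.degree v ≤ #X.orbit := by
  refine (X.degree_le _ v (X.isMinLeafTree_treeAt v) (degree_treeAt_self hv)).trans ?_
  rw [← card_children_orbit root_mem_orbit, ← SimpleGraph.card_neighborFinset_eq_degree]
  exact Finset.card_le_card (neighborFinset_subset_children root_mem_orbit)

lemma not_isParent_of_mem_fixedLeaves (hv : v ∈ X.orbit) (hz : z ∈ X.fixedLeaves) :
    ¬ IsParent (X.treeAt v) v x z := fun h => by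
  have hzv : z ≠ v := fun he => notMem_orbit_of_mem_fixedLeaves hz (he ▸ hv)
  obtain ⟨y, hy⟩ := exists_isParent (X.isTree_treeAt v).connected hzv
  obtain rfl := eq_of_adj_of_degree_eq_one (degree_treeAt_of_mem_fixedLeaves v hz) hy.adj h.adj.symm
  exact h.asymm hy

lemma card_core_eq (hv : v ∈ X.orbit) :
    #X.core = #(X.core ∩ children (X.treeAt v) v X.orbit) + X.coreEdges := by
  rw [← card_core_inter_children v, ← Finset.card_union_of_disjoint,
    ← Finset.inter_union_distrib_left]
  · congr 1
    refine (Finset.inter_eq_left.2 fun x hx => ?_).symm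
    have hxv : x ≠ v := fun he => (mem_core.1 hx).2 (he ▸ hv)
    obtain ⟨y, hy⟩ := exists_isParent (X.isTree_treeAt v).connected hxv
    have y_not_leaf : y ∉ X.fixedLeaves := fun h => not_isParent_of_mem_fixedLeaves hv h hy
    by_cases hyo : y ∈ X.orbit
    · exact Finset.mem_union_left _ (mem_children.2 ⟨y, hyo, hy⟩)
    · exact Finset.mem_union_right _ (mem_children.2 ⟨y, mem_core.2 ⟨y_not_leaf, hyo⟩, hy⟩)
  · refine Finset.disjoint_left.2 fun x hx hx' => ?_
    obtain ⟨y, hy, hxy⟩ := mem_children.1 (Finset.mem_inter.1 hx).2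
    obtain ⟨y', hy', hxy'⟩ := mem_children.1 (Finset.mem_inter.1 hx').2
    exact (mem_core.1 hy').2 (hxy.unique (X.isTree_treeAt v) hxy' ▸ hy)

lemma card_orbit_eq (hv : v ∈ X.orbit) :
    #X.orbit = #(X.core ∩ children (X.treeAt v) v X.orbit) +
      #(X.orbit ∩ children (X.treeAt v) v X.orbit) := by
  conv_lhs => rw [← card_children_orbit hv]
  rw [← Finset.card_union_of_disjoint, ← Finset.union_inter_distrib_right]
  · congr 1
    refine (Finset.inter_eq_right.2 fun x hx => ?_).symm
    obtain ⟨y, hy, hxy⟩ := mem_children.1 hx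
    have x_not_leaf : x ∉ X.fixedLeaves := fun h =>
      not_adj_of_mem_fixedLeaves h (Finset.mem_union_right _ hy)
        ((X.isMinLeafTree_treeAt v).le hxy.adj)
    rw [Finset.mem_union, mem_core]
    tauto
  · exact Finset.disjoint_left.2 fun x hx hx' =>
      (mem_core.1 (Finset.mem_inter.1 hx).1).2 (Finset.mem_inter.1 hx').1

lemma exists_card_core_eq_card_orbit_eq (X : ExtremalTree G) : ∃ P p : ℕ,
    #X.core = P + 1 + X.coreEdges ∧ #X.orbit = P + p + 1 ∧
      ∀ v ∈ X.orbit, nbrCount G X.orbit v ≤ p := by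
  have orbit_children_le : ∀ v ∈ X.orbit,
      #(X.orbit ∩ children (X.treeAt v) v X.orbit) + 1 ≤ #X.orbit := by
    intro v hv
    rw [← Finset.card_erase_add_one hv]
    gcongr
    intro x hx
    obtain ⟨y, _, hy⟩ := mem_children.1 (Finset.mem_inter.1 hx).2
    exact Finset.mem_erase.2 ⟨hy.ne_root, (Finset.mem_inter.1 hx).1⟩
  have core_eq := card_core_eq (X := X) root_mem_orbit
  have orbit_eq := card_orbit_eq (X := X) root_mem_orbit
  have := orbit_children_le _ (root_mem_orbit (X := X))
  refine ⟨#X.core - 1 - X.coreEdges, #(X.orbit ∩ children (X.treeAt X.root) X.root X.orbit),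
    by omega, by omega, fun v hv => ?_⟩
  have nbrs_le : nbrCount G X.orbit v ≤ #(X.orbit ∩ children (X.treeAt v) v X.orbit) :=
    Finset.card_le_card fun u hu => by
      obtain ⟨hu, hvu⟩ := Finset.mem_filter.1 hu
      exact Finset.mem_inter.2 ⟨hu, neighborFinset_subset_children hv (by simpa using hvu)⟩
  have := card_core_eq hv
  have := card_orbit_eq hv
  omega

lemma two_le_card_fixedLeaves (X : ExtremalTree G) : 2 ≤ #X.fixedLeaves := by
  have := X.three_le_card_leaves
  rw [← X.card_fixedLeaves] at this
  omega

/-- The number of vertices `v ∈ A` such that in the tree `X.treeAt v` the edge `ww'` leads from `w`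
towards `v`. -/
noncomputable def leadCount (X : ExtremalTree G) (A : Finset V) (w w' : V) : ℕ :=
  #{v ∈ A | IsParent (X.treeAt v) v w w'}

lemma leadCount_add_leadCount (A : Finset V) (hw : w ∈ X.core) (hw' : w' ∈ X.coreNbrs w) :
    X.leadCount A w w' + X.leadCount A w' w = #A := by
  obtain ⟨hw', hadj⟩ := mem_coreNbrs.1 hw'
  rw [leadCount, leadCount,
    ← Finset.card_union_of_disjoint (Finset.disjoint_filter.2 fun v _ h => h.asymm),
    ← Finset.filter_or, Finset.filter_true_of_mem]
  exact fun v _ => isParent_or_isParent (X.isTree_treeAt v) v ((adj_treeAt_iff v hw hw').2 hadj)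

lemma sum_leadCount_le {A N : Finset V} (hwA : w ∉ A)
    (hN : ∀ v ∈ A, ∀ w' ∈ N, IsParent (X.treeAt v) v w w' → ¬ G.Adj v w) :
    ∑ w' ∈ N, X.leadCount A w w' ≤ nbrCount Gᶜ A w := by
  unfold leadCount
  rw [← Finset.card_biUnion fun a _ b _ hab => Finset.disjoint_filter.2 fun v _ h h' =>
    hab (h.unique (X.isTree_treeAt v) h')]
  refine Finset.card_le_card fun v hv => ?_
  obtain ⟨w', hw', hv⟩ := Finset.mem_biUnion.1 hv
  obtain ⟨hv, hvw'⟩ := Finset.mem_filter.1 hv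
  simp only [Finset.mem_filter, SimpleGraph.compl_adj, G.adj_comm w]
  exact ⟨hv, fun he => hwA (he ▸ hv), hN v hv w' hw' hvw'⟩

lemma sum_leadCount_orbit_le (hw : w ∈ X.core) :
    ∑ w' ∈ X.coreNbrs w, X.leadCount X.orbit w w' ≤ nbrCount Gᶜ X.orbit w :=
  sum_leadCount_le (mem_core.1 hw).2 fun _ hv _ hw' h hadj =>
    (mem_core.1 (mem_coreNbrs.1 hw').1).2 (parent_mem_orbit hv hadj h)

/-- A vertex is saturated if it has degree two in the extremal tree and is adjacent in `G` to at
most one fixed leaf. Every vertex of the core to which a fixed leaf can be rotated is saturated. -/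
def Saturated (X : ExtremalTree G) (w : V) : Prop :=
  X.tree.degree w = 2 ∧ #X.fixedLeaves ≤ nbrCount Gᶜ X.fixedLeaves w + 1

lemma saturated_of_adj (hz : z ∈ X.fixedLeaves) (hw' : w' ∈ X.core)
    (hww' : IsParent (X.treeAt z) z w w') (hzw : G.Adj z w) : X.Saturated w' := by
  rw [treeAt_of_notMem (notMem_orbit_of_mem_fixedLeaves hz)] at hww'
  have hM := X.isMinLeafTree
  have rotation : IsRotation G X.tree z w w' :=
    ⟨(mem_fixedLeaves.1 hz).2, hzw, hww', fun h => (mem_core.1 hw').1 (h ▸ hz)⟩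
  have hM' := rotation.isMinLeafTree hM
  refine ⟨rotation.degree_eq_two hM, ?_⟩
  rw [← Finset.card_erase_add_one hz]
  refine Nat.add_le_add_right (Finset.card_le_card fun x hx => ?_) 1
  obtain ⟨hxz, hx⟩ := Finset.mem_erase.1 hx
  have hxw' : x ≠ w' := fun h => (mem_core.1 hw').1 (h ▸ hx)
  simp only [Finset.mem_filter, SimpleGraph.compl_adj]
  refine ⟨hx, hxw'.symm, hM'.not_adj_of_leaf
    (X.three_le_card_leaves.trans (hM.card_leaves_le _ hM'.le hM'.isTree))
    (rotation.degree_new_leaf hM) ?_⟩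
  rw [rotation.degree_of_ne hM.isTree hxz hxw', (mem_fixedLeaves.1 hx).2]

lemma sum_leadCount_fixedLeaves_le (hw : w ∈ X.core) :
    ∑ w' ∈ X.coreNbrs w with ¬ X.Saturated w', X.leadCount X.fixedLeaves w w' ≤
      nbrCount Gᶜ X.fixedLeaves w :=
  sum_leadCount_le (mem_core.1 hw).1 fun _ hz _ hw' h hadj =>
    have hw' := Finset.mem_filter.1 hw'
    hw'.2 (saturated_of_adj hz (mem_coreNbrs.1 hw'.1).1 h hadj)

lemma card_coreNbrs_le_degree (X : ExtremalTree G) (w : V) :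
    #(X.coreNbrs w) ≤ X.tree.degree w := by
  rw [← SimpleGraph.card_neighborFinset_eq_degree]
  exact Finset.card_le_card fun u hu => by simpa using (mem_coreNbrs.1 hu).2

lemma nbrCount_orbit_of_card_coreNbrs (hw : w ∈ X.core) (hdeg : X.tree.degree w = 2)
    (hcard : #(X.coreNbrs w) = 2) : nbrCount Gᶜ X.orbit w = #X.orbit := by
  refine nbrCount_eq_card fun v hv => ?_
  have hwv : w ≠ v := fun h => (mem_core.1 hw).2 (h ▸ hv)
  refine (G.compl_adj w v).2 ⟨hwv, fun hadj => ?_⟩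
  obtain ⟨a, b, hab, hnbrs⟩ := Finset.card_eq_two.1 hcard
  have nbr_core : ∀ c ∈ X.coreNbrs w, (X.treeAt v).Adj w c ∧ c ∈ X.core := fun c hc =>
    have hc := mem_coreNbrs.1 hc
    ⟨(adj_treeAt_iff v hw hc.1).2 hc.2, hc.1⟩
  obtain ⟨ha, ha'⟩ := nbr_core a (by simp [hnbrs])
  obtain ⟨hb, hb'⟩ := nbr_core b (by simp [hnbrs])
  obtain ⟨c, hc⟩ := exists_isParent (X.isTree_treeAt v).connected hwv
  have hc' := parent_mem_orbit hv hadj.symm hc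
  have := three_le_degree_of_adj ha hb hc.adj hab (fun h => (mem_core.1 ha').2 (h ▸ hc'))
    (fun h => (mem_core.1 hb').2 (h ▸ hc'))
  rw [degree_treeAt_of_notMem_orbit v (mem_core.1 hw).2] at this
  omega

variable {θ : ℝ}

/-- The weight of `w`: the number of its neighbours in the complement of `G` among the fixed leaves
and the orbit, the latter being counted with multiplicity `θ`. -/
noncomputable def weight (X : ExtremalTree G) (θ : ℝ) (w : V) : ℝ :=
  nbrCount Gᶜ X.fixedLeaves w + θ * nbrCount Gᶜ X.orbit w

/-- The weight of a vertex that is nonadjacent in `G` to all fixed leaves and to the orbit. -/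
noncomputable def maxWeight (X : ExtremalTree G) (θ : ℝ) : ℝ := #X.fixedLeaves + θ * #X.orbit

/-- The part of the weight of `w` that is charged to the edge `ww'` of the core. -/
noncomputable def charge (X : ExtremalTree G) (θ : ℝ) (w w' : V) : ℝ :=
  θ * X.leadCount X.orbit w w' +
    if X.Saturated w then (#X.fixedLeaves : ℝ) - 1
    else if X.Saturated w' then 0 else X.leadCount X.fixedLeaves w w'

/-- The part of the squared weight of `w` that is charged to the edge `ww'` of the core. -/
noncomputable def sqCharge (X : ExtremalTree G) (θ : ℝ) (w w' : V) : ℝ :=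
  if X.Saturated w ∧ #(X.coreNbrs w) = 2 then (X.maxWeight θ - 1) ^ 2 / 2
  else X.charge θ w w' ^ 2

lemma one_le_maxWeight (X : ExtremalTree G) (hθ : 0 ≤ θ) : 1 ≤ X.maxWeight θ := by
  have : (2 : ℝ) ≤ #X.fixedLeaves := by exact_mod_cast X.two_le_card_fixedLeaves
  have : 0 ≤ θ * #X.orbit := by positivity
  unfold maxWeight
  linarith

lemma charge_nonneg (X : ExtremalTree G) (hθ : 0 ≤ θ) (w w' : V) : 0 ≤ X.charge θ w w' := by
  have : (2 : ℝ) ≤ #X.fixedLeaves := by exact_mod_cast X.two_le_card_fixedLeaves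
  refine add_nonneg (by positivity) ?_
  split_ifs
  exacts [by linarith, le_rfl, by positivity]

lemma sqCharge_nonneg (X : ExtremalTree G) (θ : ℝ) (w w' : V) : 0 ≤ X.sqCharge θ w w' := by
  unfold sqCharge
  split_ifs <;> positivity

lemma maxWeight_sub_one_le_weight (hw : w ∈ X.core) (hsat : X.Saturated w)
    (hcard : #(X.coreNbrs w) = 2) : X.maxWeight θ - 1 ≤ X.weight θ w := by
  have : (#X.fixedLeaves : ℝ) ≤ nbrCount Gᶜ X.fixedLeaves w + 1 := by exact_mod_cast hsat.2
  rw [maxWeight, weight, nbrCount_orbit_of_card_coreNbrs hw hsat.1 hcard]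
  linarith

lemma sum_charge_le_weight (hθ : 0 ≤ θ) (hw : w ∈ X.core)
    (h : ¬ (X.Saturated w ∧ #(X.coreNbrs w) = 2)) :
    ∑ w' ∈ X.coreNbrs w, X.charge θ w w' ≤ X.weight θ w := by
  simp only [charge, weight, Finset.sum_add_distrib, ← Finset.mul_sum]
  rw [add_comm (nbrCount _ _ _ : ℝ)]
  gcongr
  · exact_mod_cast sum_leadCount_orbit_le hw
  by_cases hsat : X.Saturated w
  · have card_le : (#(X.coreNbrs w) : ℝ) ≤ 1 := by
      have := X.card_coreNbrs_le_degree w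
      have := hsat.1
      exact_mod_cast (by grind : #(X.coreNbrs w) ≤ 1)
    have : (2 : ℝ) ≤ #X.fixedLeaves := by exact_mod_cast X.two_le_card_fixedLeaves
    have : (#X.fixedLeaves : ℝ) ≤ nbrCount Gᶜ X.fixedLeaves w + 1 := by exact_mod_cast hsat.2
    simp only [hsat, if_true, Finset.sum_const, nsmul_eq_mul]
    nlinarith
  · simp only [hsat, if_false, ← ite_not (X.Saturated _)]
    rw [← Finset.sum_filter]
    exact_mod_cast sum_leadCount_fixedLeaves_le hw

lemma sum_sqCharge_le (hθ : 0 ≤ θ) (hw : w ∈ X.core) :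
    ∑ w' ∈ X.coreNbrs w, X.sqCharge θ w w' ≤ X.weight θ w ^ 2 := by
  by_cases h : X.Saturated w ∧ #(X.coreNbrs w) = 2
  · simp only [sqCharge, h, and_self, if_true, Finset.sum_const, nsmul_eq_mul, Nat.cast_ofNat,
      mul_div_cancel₀ _ (two_ne_zero' ℝ)]
    exact pow_le_pow_left₀ (sub_nonneg.2 (X.one_le_maxWeight hθ))
      (maxWeight_sub_one_le_weight hw h.1 h.2) 2
  · simp only [sqCharge, h, if_false]
    exact (Finset.sum_sq_le_sq_sum_of_nonneg fun w' _ => X.charge_nonneg hθ w w').trans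
      (pow_le_pow_left₀ (Finset.sum_nonneg fun w' _ => X.charge_nonneg hθ w w')
        (sum_charge_le_weight hθ hw h) 2)

lemma maxWeight_sub_one_le_charge_add_charge (hw : w ∈ X.core)
    (hw' : w' ∈ X.coreNbrs w) : X.maxWeight θ - 1 ≤ X.charge θ w w' + X.charge θ w' w := by
  have orbit_eq : (X.leadCount X.orbit w w' : ℝ) + X.leadCount X.orbit w' w = #X.orbit := by
    exact_mod_cast leadCount_add_leadCount X.orbit hw hw'
  have leaves_eq : (X.leadCount X.fixedLeaves w w' : ℝ) + X.leadCount X.fixedLeaves w' w =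
      #X.fixedLeaves := by
    exact_mod_cast leadCount_add_leadCount X.fixedLeaves hw hw'
  have : (2 : ℝ) ≤ #X.fixedLeaves := by exact_mod_cast X.two_le_card_fixedLeaves
  rw [maxWeight, charge, charge, ← orbit_eq]
  split_ifs <;> linarith

lemma le_sqCharge_add_sqCharge (hθ : 0 ≤ θ) (hw : w ∈ X.core) (hw' : w' ∈ X.coreNbrs w) :
    (X.maxWeight θ - 1) ^ 2 / 2 ≤ X.sqCharge θ w w' + X.sqCharge θ w' w := by
  by_cases h : X.Saturated w ∧ #(X.coreNbrs w) = 2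
  · rw [sqCharge, if_pos h]
    exact le_add_of_nonneg_right (X.sqCharge_nonneg θ w' w)
  by_cases h' : X.Saturated w' ∧ #(X.coreNbrs w') = 2
  · rw [sqCharge.eq_def X θ w', if_pos h']
    exact le_add_of_nonneg_left (X.sqCharge_nonneg θ w w')
  rw [sqCharge, sqCharge, if_neg h, if_neg h']
  have := pow_le_pow_left₀ (sub_nonneg.2 (X.one_le_maxWeight hθ))
    (maxWeight_sub_one_le_charge_add_charge (θ := θ) hw hw') 2
  have := add_sq_le (a := X.charge θ w w') (b := X.charge θ w' w)
  linarith

lemma coreEdges_mul_le_sum_weight_sq (X : ExtremalTree G) (hθ : 0 ≤ θ) :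
    X.coreEdges * ((X.maxWeight θ - 1) ^ 2 / 2) ≤ ∑ w ∈ X.core, X.weight θ w ^ 2 := by
  have swap : ∑ w ∈ X.core, ∑ w' ∈ X.coreNbrs w, X.sqCharge θ w' w =
      ∑ w ∈ X.core, ∑ w' ∈ X.coreNbrs w, X.sqCharge θ w w' :=
    Finset.sum_comm' fun w w' => by simp only [mem_coreNbrs, X.tree.adj_comm w]; tauto
  have sum_card : (∑ w ∈ X.core, #(X.coreNbrs w) : ℝ) = 2 * X.coreEdges := by
    exact_mod_cast X.sum_card_coreNbrs
  have : 2 * X.coreEdges * ((X.maxWeight θ - 1) ^ 2 / 2) ≤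
      2 * ∑ w ∈ X.core, X.weight θ w ^ 2 := calc
    _ = ∑ w ∈ X.core, ∑ _w' ∈ X.coreNbrs w, (X.maxWeight θ - 1) ^ 2 / 2 := by
      simp only [Finset.sum_const, nsmul_eq_mul, ← Finset.sum_mul, sum_card]
    _ ≤ ∑ w ∈ X.core, ∑ w' ∈ X.coreNbrs w, (X.sqCharge θ w w' + X.sqCharge θ w' w) :=
      Finset.sum_le_sum fun w hw => Finset.sum_le_sum fun w' => le_sqCharge_add_sqCharge hθ hw
    _ = 2 * ∑ w ∈ X.core, ∑ w' ∈ X.coreNbrs w, X.sqCharge θ w w' := by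
      simp only [Finset.sum_add_distrib, swap, two_mul]
    _ ≤ 2 * ∑ w ∈ X.core, X.weight θ w ^ 2 := by
      gcongr with w hw
      exact sum_sqCharge_le hθ hw
  linarith

lemma card_mul_card_core_le {A : Finset V} (hA : A ⊆ X.fixedLeaves ∪ X.orbit) :
    #A * #X.core ≤ #A * #X.orbit + ∑ w ∈ X.core, nbrCount Gᶜ A w := by
  rw [sum_nbrCount_comm, ← smul_eq_mul, ← smul_eq_mul, ← Finset.sum_const, ← Finset.sum_const,
    ← Finset.sum_add_distrib]
  refine Finset.sum_le_sum fun v hv => ?_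
  refine le_trans ?_ (Nat.add_le_add_right (degree_le_card_orbit (hA hv)) _)
  rw [← SimpleGraph.card_neighborFinset_eq_degree]
  refine le_trans (Finset.card_le_card fun w hw => ?_) (Finset.card_union_le _ _)
  have hvw : v ≠ w := by
    rintro rfl
    exact Finset.mem_compl.1 hw (hA hv)
  simp [hvw, hw, em]

lemma maxWeight_mul_le_sum_weight (X : ExtremalTree G) (hθ : 0 ≤ θ) :
    X.maxWeight θ * (#X.core - #X.orbit) ≤ ∑ w ∈ X.core, X.weight θ w := by
  have leaves_le : (#X.fixedLeaves * #X.core : ℝ) ≤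
      #X.fixedLeaves * #X.orbit + ∑ w ∈ X.core, (nbrCount Gᶜ X.fixedLeaves w : ℝ) := by
    exact_mod_cast card_mul_card_core_le (X := X) Finset.subset_union_left
  have orbit_le : (#X.orbit * #X.core : ℝ) ≤
      #X.orbit * #X.orbit + ∑ w ∈ X.core, (nbrCount Gᶜ X.orbit w : ℝ) := by
    exact_mod_cast card_mul_card_core_le (X := X) Finset.subset_union_right
  have := mul_le_mul_of_nonneg_left orbit_le hθ
  simp only [maxWeight, weight, Finset.sum_add_distrib, ← Finset.mul_sum]
  linarith

lemma maxWeight_sq_mul_le (X : ExtremalTree G) (hθ : 0 ≤ θ) (h : #X.orbit ≤ #X.core) :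
    X.maxWeight θ ^ 2 * (#X.core - #X.orbit) ^ 2 ≤
      #X.core * ∑ w ∈ X.core, X.weight θ w ^ 2 := by
  have hle : (#X.orbit : ℝ) ≤ #X.core := by exact_mod_cast h
  rw [← mul_pow]
  exact (pow_le_pow_left₀ (mul_nonneg (zero_le_one.trans (X.one_le_maxWeight hθ))
    (sub_nonneg.2 hle)) (X.maxWeight_mul_le_sum_weight hθ) 2).trans sq_sum_le_card_mul_sum_sq

lemma weight_of_mem_fixedLeaves (hz : z ∈ X.fixedLeaves) :
    X.weight θ z = #X.fixedLeaves - 1 + θ * #X.orbit := by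
  have leaves_eq : nbrCount G X.fixedLeaves z = 0 := Finset.card_eq_zero.2 <|
    Finset.filter_eq_empty_iff.2 fun v hv =>
      not_adj_of_mem_fixedLeaves hz (Finset.mem_union_left _ hv)
  have := nbrCount_add_nbrCount_compl (H := G) hz
  rw [leaves_eq, zero_add] at this
  have orbit_eq : nbrCount Gᶜ X.orbit z = #X.orbit := nbrCount_eq_card fun v hv =>
    (G.compl_adj z v).2 ⟨fun he => notMem_orbit_of_mem_fixedLeaves hz (he ▸ hv),
      not_adj_of_mem_fixedLeaves hz (Finset.mem_union_right _ hv)⟩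
  rw [weight, orbit_eq, ← this, Nat.cast_add_one, add_sub_cancel_right]

lemma le_weight_of_mem_orbit {p : ℕ} (hθ : 0 ≤ θ) (hv : v ∈ X.orbit)
    (hp : nbrCount G X.orbit v ≤ p) :
    #X.fixedLeaves + θ * (#X.orbit - 1 - p) ≤ X.weight θ v := by
  have leaves_eq : nbrCount Gᶜ X.fixedLeaves v = #X.fixedLeaves := nbrCount_eq_card fun z hz =>
    (G.compl_adj v z).2 ⟨fun he => notMem_orbit_of_mem_fixedLeaves hz (he ▸ hv),
      fun h => not_adj_of_mem_fixedLeaves hz (Finset.mem_union_right _ hv) h.symm⟩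
  have orbit_eq := nbrCount_add_nbrCount_compl (H := G) hv
  have orbit_ge : (#X.orbit : ℝ) - 1 - p ≤ nbrCount Gᶜ X.orbit v := by
    rw [sub_sub, sub_le_iff_le_add]
    exact_mod_cast (by omega)
  rw [weight, leaves_eq]
  gcongr

open Matrix in
lemma lt_specRad_compl {l : ℝ} {p : ℕ} (hθ : 0 ≤ θ) (hl : 0 < l)
    (hp : ∀ v ∈ X.orbit, nbrCount G X.orbit v ≤ p)
    (h : l * (#X.fixedLeaves + θ ^ 2 * #X.orbit) <
      #X.fixedLeaves * (#X.fixedLeaves - 1) + 2 * θ * #X.fixedLeaves * #X.orbit +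
        θ ^ 2 * #X.orbit * (#X.orbit - 1 - p) + (∑ w ∈ X.core, X.weight θ w ^ 2) / l) :
    l < specRad Gᶜ := by
  set u : V → ℝ := (fun w => if w ∈ X.fixedLeaves then 1 else 0) +
    θ • fun w => if w ∈ X.orbit then 1 else 0 with hu
  have mulVec_u : adjMat Gᶜ *ᵥ u = X.weight θ := by
    ext w
    rw [mulVec_add, mulVec_smul, Pi.add_apply, Pi.smul_apply, adjMat_mulVec_indicator,
      adjMat_mulVec_indicator, smul_eq_mul, weight]
  have u_dot : ∀ f : V → ℝ, u ⬝ᵥ f = ∑ z ∈ X.fixedLeaves, f z + θ * ∑ v ∈ X.orbit, f v := by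
    intro f
    rw [hu, add_dotProduct, smul_dotProduct, smul_eq_mul]
    simp [dotProduct]
  have u_leaf : ∀ z ∈ X.fixedLeaves, u z = 1 := fun z hz => by
    simp [hu, hz, notMem_orbit_of_mem_fixedLeaves hz]
  have u_orbit : ∀ v ∈ X.orbit, u v = θ := fun v hv => by
    simp [hu, hv, Finset.disjoint_right.1 X.disjoint_fixedLeaves_orbit hv]
  refine lt_specRad_of_extension (u := u) (fun w => ?_) hl X.core (fun w hw => ?_) ?_
  · simp only [hu, Pi.add_apply, Pi.smul_apply, smul_eq_mul, Pi.zero_apply]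
    positivity
  · simp [hu, mem_core.1 hw]
  rw [mulVec_u, u_dot, u_dot, Finset.sum_congr rfl u_leaf, Finset.sum_congr rfl u_orbit,
    Finset.sum_congr rfl fun z => X.weight_of_mem_fixedLeaves]
  have orbit_le := Finset.sum_le_sum fun v hv => le_weight_of_mem_orbit hθ hv (hp v hv)
  have := mul_le_mul_of_nonneg_left orbit_le hθ
  simp only [Finset.sum_const, nsmul_eq_mul] at this ⊢
  linarith

end ExtremalTree

section FinalInequality

/-- The excess of `U` over `V * √(K * N)` when `√(K * N)` is replaced, after multiplication by
`4 * (K + N)`, by its upper bound `(4 * K * N + (K + N) ^ 2) / (4 * (K + N))`, the Newton iterate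
from the arithmetic mean of `K` and `N`. -/
def newtonGap (K N U V : ℝ) : ℝ := 4 * (K + N) * U - V * (4 * K * N + (K + N) ^ 2)

lemma mul_lt_of_newtonGap_pos {K N U V l : ℝ} (hKN : 0 < K + N) (hU : 0 < U) (hl : 0 ≤ l)
    (hl2 : l ^ 2 = K * N) (h : 0 < newtonGap K N U V) : V * l < U := by
  rcases le_or_gt V 0 with hV | hV
  · exact (mul_nonpos_of_nonpos_of_nonneg hV hl).trans_lt hU
  have newton : 4 * (K + N) * l ≤ 4 * K * N + (K + N) ^ 2 := by
    nlinarith [sq_nonneg (2 * l - (K + N))]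
  have := mul_le_mul_of_nonneg_left newton hV.le
  unfold newtonGap at h
  nlinarith

variable {K P p t : ℝ}

/-- The part without `l` of the inequality `V * l < U` to which the estimate of the weights by the
number of edges of the core reduces, cleared of the denominator `2 * (l + 1 + p)` and reduced
modulo `l ^ 2 = K * (K + 2 * P + p + t)`. -/
def edgeU (K P p t : ℝ) : ℝ :=
  2 * K * (K + P - 1) * (K + 2 * P + p + t) + t * ((K - 1) * (1 + p) + P)

/-- The coefficient of `l` that goes with `edgeU`. -/
def edgeV (K P p t : ℝ) : ℝ := 2 * (K * (K - 1) + (2 * K - 1) * P) + t * (K + 1 - P - p)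

/-- The analogue of `edgeU` for the estimate of the weights by degrees. -/
def degU (K P p t : ℝ) : ℝ :=
  K * (P + 1 + t) * (K + P - 1) * (K + 2 * P + p + t)
    + (t - p) ^ 2 * (K * (1 + p) + P + p + 1)

/-- The coefficient of `l` that goes with `degU`. -/
def degV (K P p t : ℝ) : ℝ :=
  (P + 1 + t) * (K * (K - 1) + (2 * K - 1) * P + K * t) - (t - p) ^ 2 * (K + P + p + 1)

-- Here and below, writing each variable as its lower bound plus a nonnegative number turns the gap
-- into a polynomial with positive coefficients.
lemma newtonGap_deg_pos (hK : 2 ≤ K) (hP : 0 ≤ P) (hp : 1 ≤ p) (ht : P + 3 * p ≤ t) :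
    0 < newtonGap K (K + 2 * P + p + t) (degU K P p t) (degV K P p t) := by
  obtain ⟨k, hk, rfl⟩ : ∃ k, 0 ≤ k ∧ K = k + 2 := ⟨K - 2, by linarith, by ring⟩
  obtain ⟨q, hq, rfl⟩ : ∃ q, 0 ≤ q ∧ p = q + 1 := ⟨p - 1, by linarith, by ring⟩
  obtain ⟨s, hs, rfl⟩ : ∃ s, 0 ≤ s ∧ t = P + 3 * (q + 1) + s :=
    ⟨t - (P + 3 * (q + 1)), by linarith, by ring⟩
  unfold newtonGap degU degV
  ring_nf
  positivity

lemma newtonGap_deg_pos_of_eq_zero (hK : 2 ≤ K) (hP : 0 ≤ P) (ht : P + 1 ≤ t) :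
    0 < newtonGap K (K + 2 * P + 0 + t) (degU K P 0 t) (degV K P 0 t) := by
  obtain ⟨k, hk, rfl⟩ : ∃ k, 0 ≤ k ∧ K = k + 2 := ⟨K - 2, by linarith, by ring⟩
  obtain ⟨s, hs, rfl⟩ : ∃ s, 0 ≤ s ∧ t = P + 1 + s := ⟨t - (P + 1), by linarith, by ring⟩
  unfold newtonGap degU degV
  ring_nf
  positivity

lemma newtonGap_edge_pos_of_lt (hK : 2 ≤ K) (hp : 0 ≤ p) (ht : 0 ≤ t) (htP : t + 1 ≤ P) :
    0 < newtonGap K (K + 2 * P + p + t) (edgeU K P p t) (edgeV K P p t) := by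
  obtain ⟨k, hk, rfl⟩ : ∃ k, 0 ≤ k ∧ K = k + 2 := ⟨K - 2, by linarith, by ring⟩
  obtain ⟨s, hs, rfl⟩ : ∃ s, 0 ≤ s ∧ P = t + 1 + s := ⟨P - (t + 1), by linarith, by ring⟩
  unfold newtonGap edgeU edgeV
  ring_nf
  positivity

lemma newtonGap_edge_pos_of_le (hK : 2 ≤ K) (hP : 1 ≤ P) (hPt : P ≤ t) (ht : t ≤ P + 3 * p) :
    0 < newtonGap K (K + 2 * P + p + t) (edgeU K P p t) (edgeV K P p t) := by
  obtain ⟨k, hk, rfl⟩ : ∃ k, 0 ≤ k ∧ K = k + 2 := ⟨K - 2, by linarith, by ring⟩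
  obtain ⟨q, hq, rfl⟩ : ∃ q, 0 ≤ q ∧ P = q + 1 := ⟨P - 1, by linarith, by ring⟩
  obtain ⟨s, hs, rfl⟩ : ∃ s, 0 ≤ s ∧ t = q + 1 + s := ⟨t - (q + 1), by linarith, by ring⟩
  obtain ⟨w, hw, rfl⟩ : ∃ w, 0 ≤ w ∧ p = s / 3 + w := ⟨p - s / 3, by linarith, by ring⟩
  unfold newtonGap edgeU edgeV
  ring_nf
  positivity

lemma newtonGap_edge_pos_of_eq_zero (hK : 2 ≤ K) (hp : 1 ≤ p) (ht : t = 0 ∨ t = 1) :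
    0 < newtonGap K (K + 2 * 0 + p + t) (edgeU K 0 p t) (edgeV K 0 p t) := by
  obtain ⟨k, hk, rfl⟩ : ∃ k, 0 ≤ k ∧ K = k + 2 := ⟨K - 2, by linarith, by ring⟩
  obtain ⟨q, hq, rfl⟩ : ∃ q, 0 ≤ q ∧ p = q + 1 := ⟨p - 1, by linarith, by ring⟩
  unfold newtonGap edgeU edgeV
  rcases ht with rfl | rfl <;> (ring_nf; positivity)

lemma newtonGap_edge_pos_of_two_le (hK : 2 ≤ K) (hp : 2 ≤ p) (ht2 : 2 ≤ t)
    (ht : t + 1 ≤ 3 * p) :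
    0 < newtonGap K (K + 2 * 0 + p + t) (edgeU K 0 p t) (edgeV K 0 p t) := by
  -- The expansion of the gap has negative coefficients until this term is subtracted from it.
  have slack : 0 ≤ 45 * (t - 1) * (p - 2) := mul_nonneg (by linarith) (by linarith)
  refine slack.trans_lt (sub_pos.1 ?_)
  obtain ⟨k, hk, rfl⟩ : ∃ k, 0 ≤ k ∧ K = k + 2 := ⟨K - 2, by linarith, by ring⟩
  obtain ⟨s, hs, rfl⟩ : ∃ s, 0 ≤ s ∧ t = s + 2 := ⟨t - 2, by linarith, by ring⟩
  obtain ⟨w, hw, rfl⟩ : ∃ w, 0 ≤ w ∧ p = 1 + s / 3 + w := ⟨p - 1 - s / 3, by linarith, by ring⟩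
  unfold newtonGap edgeU edgeV
  ring_nf
  positivity

lemma newtonGap_edge_pos_of_eq_one (hK : 3 ≤ K) :
    0 < newtonGap K (K + 2 * 0 + 1 + 2) (edgeU K 0 1 2) (edgeV K 0 1 2) := by
  obtain ⟨k, hk, rfl⟩ : ∃ k, 0 ≤ k ∧ K = k + 3 := ⟨K - 3, by linarith, by ring⟩
  unfold newtonGap edgeU edgeV
  ring_nf
  positivity

lemma newtonGap_edge_pos {K P p t : ℕ} (hK : 2 ≤ K) (hne : ¬(P = 0 ∧ p = 0 ∧ t = 0))
    (htP : p = 0 → t ≤ P) (htp : 1 ≤ p → t + 1 ≤ P + 3 * p)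
    (hex : ¬(K = 2 ∧ P = 0 ∧ p = 1 ∧ t = 2)) :
    0 < newtonGap K (K + 2 * P + p + t) (edgeU K P p t) (edgeV K P p t) := by
  have hK' : (2 : ℝ) ≤ K := by exact_mod_cast hK
  rcases Nat.eq_zero_or_pos P with rfl | hP
  · rcases lt_or_ge t 2 with ht | ht
    · have := newtonGap_edge_pos_of_eq_zero (p := p) (t := t) hK'
        (by exact_mod_cast (by omega : 1 ≤ p)) (by norm_cast; omega)
      exact_mod_cast this
    rcases (by omega : 2 ≤ p ∨ p = 1 ∧ t = 2) with hp | ⟨rfl, rfl⟩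
    · have := newtonGap_edge_pos_of_two_le (p := p) (t := t) hK' (by exact_mod_cast hp)
        (by exact_mod_cast ht) (by norm_cast; omega)
      exact_mod_cast this
    · have := newtonGap_edge_pos_of_eq_one (K := K) (by norm_cast; omega)
      exact_mod_cast this
  · rcases lt_or_ge t P with ht | ht
    · exact newtonGap_edge_pos_of_lt hK' p.cast_nonneg t.cast_nonneg (by exact_mod_cast ht)
    · exact newtonGap_edge_pos_of_le hK' (by exact_mod_cast hP) (by exact_mod_cast ht)
        (by norm_cast; omega)

section Reduction

variable {l W : ℝ}

lemma edge_reduction (hl : 0 < l) (hp : 0 ≤ p) (hl2 : l ^ 2 = K * (K + 2 * P + p + t))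
    (hW : W = K + (l + 1) / (l + 1 + p) * (P + p + 1)) :
    W * l + t / 2 * (W - 2) - l * (l + 1) =
      (edgeU K P p t - edgeV K P p t * l) / (2 * (l + 1 + p)) := by
  have : l + 1 + p ≠ 0 := by positivity
  rw [hW, edgeU, edgeV]
  field_simp
  linear_combination 2 * (K + P - 1 - l) * hl2

lemma deg_reduction (hl : 0 < l) (hp : 0 ≤ p) (hl2 : l ^ 2 = K * (K + 2 * P + p + t))
    (hW : W = K + (l + 1) / (l + 1 + p) * (P + p + 1)) :
    W * (l * (P + 1 + t) + (t - p) ^ 2) - l * (l + 1) * (P + 1 + t) =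
      (degU K P p t - degV K P p t * l) / (l + 1 + p) := by
  have : l + 1 + p ≠ 0 := by positivity
  rw [hW, degU, degV]
  field_simp
  linear_combination (P + 1 + t) * (K + P - 1 - l) * hl2

end Reduction

lemma edgeU_pos (hK : 2 ≤ K) (hP : 0 ≤ P) (hp : 0 ≤ p) (ht : 0 ≤ t) : 0 < edgeU K P p t := by
  obtain ⟨k, hk, rfl⟩ : ∃ k, 0 ≤ k ∧ K = k + 2 := ⟨K - 2, by linarith, by ring⟩
  have hKP : 0 < k + 2 + P - 1 := by linarith
  have hK1 : 0 ≤ k + 2 - 1 := by linarith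
  unfold edgeU
  positivity

lemma degU_pos (hK : 2 ≤ K) (hP : 0 ≤ P) (hp : 0 ≤ p) (ht : 0 ≤ t) : 0 < degU K P p t := by
  have hKP : 0 < K + P - 1 := by linarith
  have : 0 < K := by linarith
  unfold degU
  positivity

section TestVector

variable {K P p t : ℕ} {l W D : ℝ}

lemma test_inequality_of_deg (hK : 2 ≤ K) (hl : 0 < l)
    (hl2 : l ^ 2 = K * (K + 2 * P + p + t)) (hW : W = K + (l + 1) / (l + 1 + p) * (P + p + 1))
    (hW0 : 0 < W) (hpt : 1 ≤ p ∧ P + 3 * p ≤ t ∨ p = 0 ∧ P + 1 ≤ t)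
    (h_deg : W ^ 2 * (t - p) ^ 2 ≤ (P + 1 + t) * D) : l * (l + 1) * W < l * W ^ 2 + D := by
  have hK' : (2 : ℝ) ≤ K := by exact_mod_cast hK
  have gap : 0 < newtonGap K (K + 2 * P + p + t) (degU K P p t) (degV K P p t) := by
    rcases hpt with ⟨hp, ht⟩ | ⟨rfl, ht⟩
    · exact newtonGap_deg_pos hK' P.cast_nonneg (by exact_mod_cast hp) (by exact_mod_cast ht)
    · have := newtonGap_deg_pos_of_eq_zero (t := t) hK' P.cast_nonneg (by exact_mod_cast ht)
      exact_mod_cast this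
  have hUV := mul_lt_of_newtonGap_pos (by positivity)
    (degU_pos hK' P.cast_nonneg p.cast_nonneg t.cast_nonneg) hl.le hl2 gap
  have hred := deg_reduction hl p.cast_nonneg hl2 hW
  have hpos := div_pos (sub_pos.2 hUV) (by positivity : (0 : ℝ) < l + 1 + p)
  rw [← hred] at hpos
  have := mul_pos hW0 hpos
  refine lt_of_mul_lt_mul_left ?_ (by positivity : (0 : ℝ) ≤ P + 1 + t)
  linarith

lemma test_inequality_of_edge (hK : 2 ≤ K) (hl : 0 < l)
    (hl2 : l ^ 2 = K * (K + 2 * P + p + t)) (hW : W = K + (l + 1) / (l + 1 + p) * (P + p + 1))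
    (hW0 : 0 < W) (hne : ¬(P = 0 ∧ p = 0 ∧ t = 0))
    (htP : p = 0 → t ≤ P) (htp : 1 ≤ p → t + 1 ≤ P + 3 * p)
    (hex : ¬(K = 2 ∧ P = 0 ∧ p = 1 ∧ t = 2))
    (h_edge : t * ((W - 1) ^ 2 / 2) ≤ D) : l * (l + 1) * W < l * W ^ 2 + D := by
  have hUV := mul_lt_of_newtonGap_pos (by positivity)
    (edgeU_pos (by exact_mod_cast hK) P.cast_nonneg p.cast_nonneg t.cast_nonneg) hl.le hl2
    (newtonGap_edge_pos hK hne htP htp hex)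
  have hred := edge_reduction hl p.cast_nonneg hl2 hW
  have hpos := div_pos (sub_pos.2 hUV) (by positivity : (0 : ℝ) < 2 * (l + 1 + p))
  rw [← hred] at hpos
  calc l * (l + 1) * W < l * W ^ 2 + t * (W * (W - 2) / 2) := by
        have := mul_pos hW0 hpos
        linarith
    _ ≤ l * W ^ 2 + t * ((W - 1) ^ 2 / 2) := by
        gcongr
        linarith
    _ ≤ l * W ^ 2 + D := by gcongr

lemma test_inequality_exceptional (hl : 0 < l) (hl2 : l ^ 2 = 10)
    (hW : W = 2 + (l + 1) / (l + 2) * 2) (h_edge : (W - 1) ^ 2 ≤ D) :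
    l * (l + 1) * W < l * W ^ 2 + D := by
  refine lt_of_lt_of_le ?_ (add_le_add_right h_edge _)
  have hl3 : 3 < l := by nlinarith
  have key : l * W ^ 2 + (W - 1) ^ 2 - l * (l + 1) * W = (28 * l - 74) / (l + 2) ^ 2 := by
    rw [hW]
    field_simp
    linear_combination -(4 * l ^ 2 + 2 * l + 9) * hl2
  refine sub_pos.1 (key ▸ div_pos ?_ (by positivity))
  linarith

theorem test_inequality (hK : 2 ≤ K) (hne : ¬(P = 0 ∧ p = 0 ∧ t = 0)) (hl : 0 < l)
    (hl2 : l ^ 2 = K * (K + 2 * P + p + t)) (hW : W = K + (l + 1) / (l + 1 + p) * (P + p + 1))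
    (h_deg : p ≤ t → W ^ 2 * (t - p) ^ 2 ≤ (P + 1 + t) * D)
    (h_edge : t * ((W - 1) ^ 2 / 2) ≤ D) : l * (l + 1) * W < l * W ^ 2 + D := by
  have hW0 : 0 < W := by rw [hW]; positivity
  by_cases hpt : 1 ≤ p ∧ P + 3 * p ≤ t ∨ p = 0 ∧ P + 1 ≤ t
  · exact test_inequality_of_deg hK hl hl2 hW hW0 hpt (h_deg (by omega))
  by_cases hex : K = 2 ∧ P = 0 ∧ p = 1 ∧ t = 2
  · obtain ⟨rfl, rfl, rfl, rfl⟩ := hex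
    refine test_inequality_exceptional hl (by rw [hl2]; norm_num) (by rw [hW]; norm_num; ring) ?_
    norm_num at h_edge
    linarith
  · exact test_inequality_of_edge hK hl hl2 hW hW0 hne (by omega) (by omega) hex h_edge

end TestVector

end FinalInequality

section Star

variable {V : Type*} {G : SimpleGraph V}

lemma eq_starGraph_of_forall_not_adj [Nontrivial V] (hG : G.Preconnected) (w : V)
    (hw : ∀ x y, x ≠ w → y ≠ w → ¬G.Adj x y) : G = SimpleGraph.starGraph w := by
  have adj_center : ∀ x, x ≠ w → G.Adj x w := fun x hx => by
    obtain ⟨y, hxy⟩ := hG.exists_adj_of_nontrivial x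
    rwa [show w = y from of_not_not fun hy => hw x y hx (Ne.symm hy) hxy]
  ext x y
  rw [SimpleGraph.starGraph_adj]
  refine ⟨fun h => ⟨h.ne, ?_⟩, ?_⟩
  · by_contra! hxy
    exact hw x y hxy.1 hxy.2 h
  · rintro ⟨hne, rfl | rfl⟩
    · exact (adj_center y hne.symm).symm
    · exact adj_center x hne

/-- The star with centre `w` as a complete bipartite graph. -/
noncomputable def starGraphIso (w : V) :
    SimpleGraph.starGraph w ≃g completeBipartiteGraph {x // x = w} {x // x ≠ w} :=
  RelIso.symm ⟨Equiv.sumCompl (· = w), by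
    rintro (⟨x, rfl⟩ | ⟨x, hx⟩) (⟨y, hy⟩ | ⟨y, hy⟩) <;>
      grind [SimpleGraph.starGraph_adj, completeBipartiteGraph_adj, Equiv.sumCompl_apply_inl,
        Equiv.sumCompl_apply_inr]⟩

lemma nonempty_starGraph_iso [Fintype V] (w : V) {m : ℕ} (hV : Fintype.card V = m + 1) :
    Nonempty (SimpleGraph.starGraph w ≃g completeBipartiteGraph (Fin 1) (Fin m)) := by
  have card_ne : Fintype.card {x // x ≠ w} = m := by simp [hV]
  exact ⟨(starGraphIso w).trans <| SimpleGraph.completeBipartiteGraphCongr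
    (Fintype.equivFinOfCardEq Fintype.card_unique) (Fintype.equivFinOfCardEq card_ne)⟩

end Star

namespace ExtremalTree

variable {V : Type*} [Fintype V] {G : SimpleGraph V} {X : ExtremalTree G}

lemma card_fixedLeaves_add_card_orbit_add_card_core (X : ExtremalTree G) :
    #X.fixedLeaves + #X.orbit + #X.core = Fintype.card V := by
  rw [← Finset.card_union_of_disjoint X.disjoint_fixedLeaves_orbit, core,
    Finset.card_add_card_compl]

lemma lt_specRad_compl_of_maxWeight {l θ : ℝ} {p : ℕ} (hl : 0 < l) (hθ : 0 ≤ θ)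
    (hθl : θ * (l + 1 + p) = l + 1) (hp : ∀ v ∈ X.orbit, nbrCount G X.orbit v ≤ p)
    (h : l * (l + 1) * X.maxWeight θ <
      l * X.maxWeight θ ^ 2 + ∑ w ∈ X.core, X.weight θ w ^ 2) : l < specRad Gᶜ := by
  refine lt_specRad_compl hθ hl hp ?_
  have h_div : (l + 1) * X.maxWeight θ <
      X.maxWeight θ ^ 2 + (∑ w ∈ X.core, X.weight θ w ^ 2) / l := by
    rw [← mul_lt_mul_iff_of_pos_left hl, mul_add, mul_div_cancel₀ _ hl.ne', ← mul_assoc]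
    exact h
  unfold maxWeight at h_div
  linear_combination h_div + θ * #X.orbit * hθl

theorem sqrt_lt_specRad_compl (hX : ¬(#X.core = 1 ∧ #X.orbit = 1)) :
    √(#X.fixedLeaves * (Fintype.card V - 2)) < specRad Gᶜ := by
  obtain ⟨P, p, hcore, horbit, hp⟩ := X.exists_card_core_eq_card_orbit_eq
  have hK := X.two_le_card_fixedLeaves
  have card_eq : (Fintype.card V : ℝ) - 2 = #X.fixedLeaves + 2 * P + p + X.coreEdges := by
    rw [← X.card_fixedLeaves_add_card_orbit_add_card_core, hcore, horbit]
    push_cast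
    ring
  rw [card_eq]
  set l := √(#X.fixedLeaves * (#X.fixedLeaves + 2 * P + p + X.coreEdges : ℝ)) with hl_def
  have hl2 : l ^ 2 = #X.fixedLeaves * (#X.fixedLeaves + 2 * P + p + X.coreEdges) :=
    Real.sq_sqrt (by positivity)
  have hl : 0 < l := by positivity
  -- This is `1 - p / (l + 1 + p)`: it makes up for the at most `p` neighbours in `G` that a vertex
  -- of the orbit has inside the orbit.
  set θ := (l + 1) / (l + 1 + p) with hθ_def
  have hθ : 0 ≤ θ := by positivity
  have hW : X.maxWeight θ = #X.fixedLeaves + θ * (P + p + 1) := by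
    rw [maxWeight, horbit]
    push_cast
    rfl
  refine X.lt_specRad_compl_of_maxWeight hl hθ (div_mul_cancel₀ _ (by positivity)) hp
    (test_inequality hK (by omega) hl hl2 hW (fun hpt => ?_)
      (X.coreEdges_mul_le_sum_weight_sq hθ))
  have := X.maxWeight_sq_mul_le hθ (by omega)
  rw [hcore, horbit] at this
  push_cast at this
  convert this using 3
  ring

lemma exists_eq_starGraph (hG : G.Connected) (hcore : #X.core = 1) (horbit : #X.orbit = 1) :
    ∃ w, G = SimpleGraph.starGraph w := by
  obtain ⟨w, hw⟩ := Finset.card_eq_one.1 hcore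
  obtain ⟨y, hy⟩ := Finset.card_eq_one.1 horbit
  have : Nontrivial V := Fintype.one_lt_card_iff_nontrivial.1 <| by
    have := X.card_fixedLeaves_add_card_orbit_add_card_core
    omega
  have mem_of_ne : ∀ x, x ≠ w → x ∈ X.fixedLeaves ∨ x = y := fun x hx => by
    have : x ∉ X.core := by simpa [hw] using hx
    simpa [mem_core, hy, or_iff_not_imp_left] using this
  have hyX : y ∈ X.fixedLeaves ∪ X.orbit := by simp [hy]
  refine ⟨w, eq_starGraph_of_forall_not_adj hG.preconnected w fun x x' hx hx' hadj => ?_⟩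
  rcases mem_of_ne x hx with h | rfl <;> rcases mem_of_ne x' hx' with h' | rfl
  · exact not_adj_of_mem_fixedLeaves h (Finset.mem_union_left _ h') hadj
  · exact not_adj_of_mem_fixedLeaves h hyX hadj
  · exact not_adj_of_mem_fixedLeaves h' hyX hadj.symm
  · exact hadj.ne rfl

lemma sqrt_lt_specRad_compl_of_lt {k : ℕ} (hk : 0 < k) (hkX : k < #X.fixedLeaves)
    (hcore : #X.core = 1) (horbit : #X.orbit = 1) :
    √(k * (Fintype.card V - 2)) < specRad Gᶜ := by
  have card_sub_two : (Fintype.card V : ℝ) - 2 = #X.fixedLeaves := by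
    rw [← X.card_fixedLeaves_add_card_orbit_add_card_core, hcore, horbit]
    push_cast
    ring
  have hkX' : (k : ℝ) < #X.fixedLeaves := by exact_mod_cast hkX
  have hX0 : (0 : ℝ) < #X.fixedLeaves := k.cast_nonneg.trans_lt hkX'
  rw [card_sub_two]
  have hl : √(k * #X.fixedLeaves) < (#X.fixedLeaves : ℝ) := by
    rw [Real.sqrt_lt' hX0, sq]
    gcongr
  refine lt_specRad_compl (X := X) (p := 0) zero_le_one (by positivity) (fun v hv => ?_) ?_
  · have := nbrCount_add_nbrCount_compl (H := G) hv
    omega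
  have : 0 ≤ (∑ w ∈ X.core, X.weight 1 w ^ 2) / √(k * #X.fixedLeaves) := by positivity
  rw [horbit]
  push_cast
  nlinarith

end ExtremalTree

lemma exists_extremalTree {V : Type*} [Fintype V] {G : SimpleGraph V} {k : ℕ} (hk : 2 ≤ k)
    (hG : G.Connected) (hno : ¬HasSpanningKEndedTree G k) :
    ∃ X : ExtremalTree G, k ≤ #X.fixedLeaves := by
  have lt_card_leaves : ∀ T, IsMinLeafTree G T → k < #(leaves T) := fun T hT => by
    by_contra! hle
    exact hno ⟨T, hT.le, hT.isTree, hle⟩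
  obtain ⟨T₀, hT₀⟩ := exists_isMinLeafTree hG
  obtain ⟨v₀, hv₀⟩ := Finset.card_pos.1 ((Nat.zero_le k).trans_lt (lt_card_leaves T₀ hT₀))
  obtain ⟨⟨T, y⟩, ⟨hT, hy⟩, hmax⟩ := Set.exists_max_image
    {q : SimpleGraph V × V | IsMinLeafTree G q.1 ∧ q.1.degree q.2 = 1} (fun q => G.degree q.2)
    (Set.toFinite _) ⟨(T₀, v₀), hT₀, mem_leaves.1 hv₀⟩
  have hkT := lt_card_leaves T hT
  let X : ExtremalTree G := ⟨T, y, hT, by omega, hy, fun T' v hT' hv => hmax (T', v) ⟨hT', hv⟩⟩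
  have : #X.fixedLeaves + 1 = #(leaves T) := X.card_fixedLeaves
  exact ⟨X, by omega⟩

theorem complement_spectral_spanning_k_ended_tree_general {V : Type*} [Fintype V] {k : ℕ}
    (hk : 2 ≤ k) (G : SimpleGraph V) (hG : G.Connected)
    (hρ : specRad Gᶜ ≤ √(k * (Fintype.card V - 2))) :
    HasSpanningKEndedTree G k ∨
      Nonempty (G ≃g completeBipartiteGraph (Fin 1) (Fin (k + 1))) := by
  refine or_iff_not_imp_left.2 fun hno => ?_
  obtain ⟨X, hkX⟩ := exists_extremalTree hk hG hno
  have hcard := X.card_fixedLeaves_add_card_orbit_add_card_core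
  by_cases hX : #X.core = 1 ∧ #X.orbit = 1
  · rcases hkX.eq_or_lt with heq | hlt
    · obtain ⟨w, rfl⟩ := X.exists_eq_starGraph hG hX.1 hX.2
      exact nonempty_starGraph_iso w (by omega)
    · exact absurd hρ (X.sqrt_lt_specRad_compl_of_lt (by omega) hlt hX.1 hX.2).not_ge
  · have card_sub_two_nonneg : (0 : ℝ) ≤ Fintype.card V - 2 :=
      sub_nonneg.2 (by norm_cast; omega)
    refine absurd hρ (LE.le.trans_lt (Real.sqrt_le_sqrt ?_) (X.sqrt_lt_specRad_compl hX)).not_ge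
    gcongr

/-- **Theorem (complement spectral radius and spanning `k`-ended trees).**
Let `k ≥ 2` and let `G` be a connected graph of order `n`.
If `ρ(Ḡ) ≤ √(k(n-2))`, then `G` has a spanning `k`-ended-tree unless
`G ≅ K_{1,k+1}`. -/
theorem complement_spectral_spanning_k_ended_tree {n k : ℕ} (hk : 2 ≤ k)
    (G : SimpleGraph (Fin n)) (hG : G.Connected)
    (hρ : specRad Gᶜ ≤ Real.sqrt ((k : ℝ) * ((n : ℝ) - 2))) :
    HasSpanningKEndedTree G k ∨
      Nonempty (G ≃g completeBipartiteGraph (Fin 1) (Fin (k + 1))) :=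
  complement_spectral_spanning_k_ended_tree_general hk G hG (by rwa [Fintype.card_fin])
end
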